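/- Rationality and p-adic divisibility over the affine base (Theorem 1.2(a) for tensor powers): the power series L_k(T)^{(−1)^{s+1}} is the expansion at T = 0 of a rational function with coefficients in ℚ(ζ_p); write it in reduced form as Π_{i=1}^R(1−α_i T)/Π_{j=1}^S(1−β_j T) with nonzero α_i, β_j ∈ ℂ and α_i ≠ β_j for all i,j. Then all α_i, β_j are algebraic integers, and for every number field F ⊂ ℂ containing ℚ(ζ_p) and all the α_i and β_j, and every maximal ideal 𝔭 of the ring of integers of F lying over p, one has ord_q(α_i) ≥ w(Γ) and ord_q(β_j) ≥ w(Γ) for all i, j, where ord_q := v_𝔭/(e·a) with v_𝔭 the 𝔭-adic valuation and e the absolute ramification index of 𝔭 over p (so ord_q(q) = 1). -/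

import Mathlib

open scoped BigOperators Classical Pointwise

set_option maxHeartbeats 1000000
set_option synthInstance.maxHeartbeats 400000

noncomputable section

namespace HS

/-- A fixed algebraic closure of the prime field `F_p`. -/
abbrev Omg (p : ℕ) [Fact p.Prime] : Type := AlgebraicClosure (ZMod p)

/-- The absolute trace `Tr_{F_{p^d}/F_p}(y) = ∑_{j<d} y^{p^j}`, read back in `ZMod p`
via the (injective) structure map `ZMod p → Omg p`. -/
def traceZmod (p : ℕ) [Fact p.Prime] (d : ℕ) (y : Omg p) : ZMod p :=
  Function.invFun (algebraMap (ZMod p) (Omg p)) (∑ j ∈ Finset.range d, y ^ p ^ j)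

/-- Value of the Laurent monomial `x^μ`. -/
def mon {K : Type} [Field K] {n : ℕ} (x : Fin n → K) (μ : Fin n → ℤ) : K :=
  ∏ i, x i ^ μ i

/-- Value of the Laurent polynomial `Ḡ(x,t) = f̄(x) + P̄(x,t)`, where `f̄` and `P̄` are given
by their (finitely supported) coefficient functions: for `P̄`, the index `(μ, γ)` records the
`x`-exponent `μ` and the `t`-exponent `γ`. -/
def Gval {K : Type} [Field K] {n s : ℕ} (f : (Fin n → ℤ) →₀ K)
    (P : ((Fin n → ℤ) × (Fin s → ℤ)) →₀ K) (x : Fin n → K) (t : Fin s → K) : K :=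
  (f.sum fun μ c => c * mon x μ) + P.sum fun gm c => c * mon x gm.1 * mon t gm.2

/-- View an integral exponent vector as a real vector. -/
def toR {n : ℕ} (u : Fin n → ℤ) : Fin n → ℝ := fun i => (u i : ℝ)

/-- The Newton polyhedron at infinity `Δ_∞(f̄)`: convex hull of the origin and the
exponent vectors of the monomials of `f̄`. -/
def NewtonPoly {K : Type} [Field K] {n : ℕ} (f : (Fin n → ℤ) →₀ K) : Set (Fin n → ℝ) :=
  convexHull ℝ (insert 0 (toR '' (f.support : Set (Fin n → ℤ))))

/-- The value at `x` of `x_i ∂f̄^σ/∂x_i`, where `f̄^σ` is the sum of the terms of `f̄`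
whose exponent vector lies in the face `σ`. -/
def faceSum {K : Type} [Field K] {n : ℕ} (f : (Fin n → ℤ) →₀ K) (σ : Set (Fin n → ℝ))
    (i : Fin n) (x : Fin n → K) : K :=
  ∑ μ ∈ f.support.filter (fun μ => toR μ ∈ σ), (μ i : K) * f μ * mon x μ

/-- Nondegeneracy of `f̄` with respect to its Newton polyhedron at infinity: for every
closed face (= exposed subset) not containing the origin, the logarithmic partials of
`f̄^σ` have no common zero with all coordinates nonzero. -/
def Nondeg {K : Type} [Field K] {n : ℕ} (f : (Fin n → ℤ) →₀ K) : Prop :=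
  ∀ σ : Set (Fin n → ℝ), IsExposed ℝ (NewtonPoly f) σ → σ.Nonempty → (0 : Fin n → ℝ) ∉ σ →
    ¬ ∃ x : Fin n → K, (∀ i, x i ≠ 0) ∧ ∀ i, faceSum f σ i x = 0

/-- The relative polytope `Γ`: convex hull of the origin and the points `(1/(1-w(μ)))•γ`
for `(μ,γ)` running over the exponents of `P̄`; here `w` is the gauge of `Δ_∞(f̄)`. -/
def relPoly {K : Type} [Field K] {n s : ℕ} (f : (Fin n → ℤ) →₀ K)
    (P : ((Fin n → ℤ) × (Fin s → ℤ)) →₀ K) : Set (Fin s → ℝ) :=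
  convexHull ℝ (insert 0 ((fun gm : (Fin n → ℤ) × (Fin s → ℤ) =>
    (1 - gauge (NewtonPoly f) (toR gm.1))⁻¹ • toR gm.2) '' (P.support : Set _)))

/-- Dimension of the smallest linear subspace containing a set. -/
def dimSpan {s : ℕ} (Γ : Set (Fin s → ℝ)) : ℕ :=
  Module.finrank ℝ (Submodule.span ℝ Γ)

/-- The lattice-normalized `d`-dimensional volume of a rational polytope `Γ`, defined
(Ehrhart-style) as `lim_{m→∞} #(mΓ ∩ ℤ^s)/m^d`.  When `d` is the dimension of the span of
`Γ`, this is the volume of `Γ` computed in that span with respect to the Haar measure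
normalized so that a fundamental domain of the lattice has volume 1. -/
def latticeVol {s : ℕ} (Γ : Set (Fin s → ℝ)) (d : ℕ) : ℝ :=
  Filter.limUnder Filter.atTop fun m : ℕ =>
    (Nat.card {u : Fin s → ℤ // toR u ∈ (m : ℝ) • Γ} : ℝ) / (m : ℝ) ^ d

/-- The cone over a set: union of the rays from the origin through its points. -/
def coneOf {s : ℕ} (Γ : Set (Fin s → ℝ)) : Set (Fin s → ℝ) :=
  {v | ∃ c : ℝ, 0 ≤ c ∧ ∃ γ ∈ Γ, v = c • γ}

/-- `w(Γ) = min { w_Γ(u) : u ∈ ℤ^s ∩ Cone(Γ), all coordinates of u ≥ 1 }`,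
where `w_Γ` is the gauge of `Γ`. -/
def wMin {s : ℕ} (Γ : Set (Fin s → ℝ)) : ℝ :=
  sInf {r : ℝ | ∃ u : Fin s → ℤ, (∀ i, (1 : ℤ) ≤ u i) ∧ toR u ∈ coneOf Γ ∧ r = gauge Γ (toR u)}

/-- The cyclotomic field `ℚ(ζ)` inside `ℂ`. -/
def cyclo (ζ : ℂ) : Subfield ℂ := Subfield.closure {ζ}

/-- The toric exponential sum `∑_{x ∈ (F_{p^d}^×)^n} Θ(Tr(Ḡ(x,t)))`. -/
def torSum (p : ℕ) [Fact p.Prime] {n s : ℕ} (Θ : AddChar (ZMod p) ℂ)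
    (f : (Fin n → ℤ) →₀ Omg p) (P : ((Fin n → ℤ) × (Fin s → ℤ)) →₀ Omg p)
    (d : ℕ) (t : Fin s → Omg p) : ℂ :=
  ∑ᶠ (x : Fin n → Omg p) (_ : ∀ i, x i ^ p ^ d = x i ∧ x i ≠ 0),
    Θ (traceZmod p d (Gval f P x t))

/-- `N_m` for the `k`-th tensor power family over the torus `G_m^s`. -/
def Ntor (p a : ℕ) [Fact p.Prime] {n s : ℕ} (Θ : AddChar (ZMod p) ℂ)
    (f : (Fin n → ℤ) →₀ Omg p) (P : ((Fin n → ℤ) × (Fin s → ℤ)) →₀ Omg p)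
    (k m : ℕ) : ℂ :=
  ∑ᶠ (t : Fin s → Omg p) (_ : ∀ j, t j ^ p ^ (a * m) = t j ∧ t j ≠ 0),
    ((-1 : ℂ) ^ n * torSum p Θ f P (a * m) t) ^ k

/-- `N_m` for the `k`-th tensor power family over the affine base `A^s`. -/
def Naff (p a : ℕ) [Fact p.Prime] {n s : ℕ} (Θ : AddChar (ZMod p) ℂ)
    (f : (Fin n → ℤ) →₀ Omg p) (P : ((Fin n → ℤ) × (Fin s → ℤ)) →₀ Omg p)
    (k m : ℕ) : ℂ :=
  ∑ᶠ (t : Fin s → Omg p) (_ : ∀ j, t j ^ p ^ (a * m) = t j),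
    ((-1 : ℂ) ^ n * torSum p Θ f P (a * m) t) ^ k

/-- The `𝔭`-adic valuation of an algebraic number `x` lying in the ring of integers of a
subfield `F ⊆ ℂ`: the largest `t` with `x ∈ 𝔭^t`. -/
def ordIn (F : Subfield ℂ) (Pid : Ideal (NumberField.RingOfIntegers F)) (x : ℂ) : ℕ :=
  sSup {t : ℕ | ∃ y : NumberField.RingOfIntegers F,
    ((algebraMap (NumberField.RingOfIntegers F) F y : F) : ℂ) = x ∧ y ∈ Pid ^ t}

/-- The `𝔭`-adic valuation on a subring of `ℂ`. -/
def ordSub (R0 : Subring ℂ) (Pid : Ideal R0) (x : ℂ) : ℕ :=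
  sSup {t : ℕ | ∃ y : R0, (y : ℂ) = x ∧ y ∈ Pid ^ t}

/-- The degree `[F_q(λ):F_q]` of a point `λ ∈ F̄_q^s`, where `q = p^a`. -/
def degOf (p a : ℕ) [Fact p.Prime] {s : ℕ} (lam : Fin s → Omg p) : ℕ :=
  sInf {d : ℕ | 0 < d ∧ ∀ j, lam j ^ p ^ (a * d) = lam j}

section part1
set_option linter.unusedSectionVars false
set_option linter.style.haveILetI false
section LDsec
open PowerSeries

variable {A : Type*} [CommRing A]

/-- `f` has logarithmic derivative `∑ s(m+1) X^m`. -/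
def LD (f : PowerSeries A) (s : ℕ → A) : Prop :=
  PowerSeries.derivative A f = f * PowerSeries.mk (fun m => s (m + 1))

lemma LD_coeff {f : PowerSeries A} {s : ℕ → A} (h : LD f s) (m : ℕ) :
    coeff (m + 1) f * ((m : A) + 1) =
      ∑ x ∈ Finset.HasAntidiagonal.antidiagonal m, coeff x.1 f * s (x.2 + 1) := by
  have := congrArg (coeff m) h
  rw [PowerSeries.coeff_derivative, PowerSeries.coeff_mul] at this
  simpa using this

lemma LD_of_coeff {f : PowerSeries A} {s : ℕ → A} (h : ∀ m : ℕ,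
    coeff (m + 1) f * ((m : A) + 1) =
      ∑ x ∈ Finset.HasAntidiagonal.antidiagonal m, coeff x.1 f * s (x.2 + 1)) : LD f s := by
  ext m
  rw [PowerSeries.coeff_derivative, PowerSeries.coeff_mul, h]
  simp

lemma LD_one : LD (1 : PowerSeries A) (fun _ => 0) := by
  unfold LD
  have : (PowerSeries.mk (fun _ => (0 : A))) = 0 := by ext; simp
  rw [this]; simp

lemma LD_mul {f g : PowerSeries A} {s t : ℕ → A} (hf : LD f s) (hg : LD g t) :
    LD (f * g) (fun m => s m + t m) := by
  unfold LD at *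
  have : (PowerSeries.mk (fun m => s (m + 1) + t (m + 1))) =
    PowerSeries.mk (fun m => s (m + 1)) + PowerSeries.mk (fun m => t (m + 1)) := by
    ext; simp
  rw [this, Derivation.leibniz, hf, hg, smul_eq_mul, smul_eq_mul]
  ring

lemma LD_congr {f : PowerSeries A} {s t : ℕ → A} (hf : LD f s) (h : ∀ m, 1 ≤ m → s m = t m) :
    LD f t := by
  unfold LD at *
  rw [hf]; congr 1; ext m; simp [h]

lemma LD_pow {f : PowerSeries A} {s : ℕ → A} (hf : LD f s) (c : ℕ) :
    LD (f ^ c) (fun m => (c : A) * s m) := by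
  induction c with
  | zero => simpa using LD_one
  | succ c ih =>
    rw [pow_succ]
    refine LD_congr (LD_mul ih hf) ?_
    intro m _; push_cast; ring

lemma LD_prod {ι : Type*} (I : Finset ι) {f : ι → PowerSeries A} {s : ι → ℕ → A}
    (hf : ∀ i ∈ I, LD (f i) (s i)) : LD (∏ i ∈ I, f i) (fun m => ∑ i ∈ I, s i m) := by
  induction I using Finset.induction_on with
  | empty => simpa using LD_one
  | insert a I ha ih =>
    rw [Finset.prod_insert ha]
    refine LD_congr (LD_mul (hf a (by simp)) (ih fun i hi => hf i (by simp [hi]))) ?_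
    intro m _; rw [Finset.sum_insert ha]

lemma LD_map {B : Type*} [CommRing B] (φ : A →+* B) {f : PowerSeries A} {s : ℕ → A}
    (hf : LD f s) : LD (PowerSeries.map φ f) (fun m => φ (s m)) := by
  apply LD_of_coeff
  intro m
  have := congrArg φ (LD_coeff hf m)
  simpa [map_sum] using this

/-- comparison lemma -/
lemma LD_compare {f g : PowerSeries A} {s t : ℕ → A} (hf : LD f s) (hg : LD g t)
    (h0 : coeff 0 f = coeff 0 g) (D : A) (M : ℕ) (h : ∀ m, 1 ≤ m → m ≤ M → D ∣ s m - t m) :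
    ∀ m ≤ M, D ∣ (m.factorial : A) * (coeff m f - coeff m g) := by
  intro m
  induction m using Nat.strong_induction_on with
  | _ m ih =>
    intro hm
    rcases m with _ | m
    · simp [h0]
    · have h1 := LD_coeff hf m
      have h2 := LD_coeff hg m
      have e : (((m + 1).factorial : ℕ) : A) * (coeff (m + 1) f - coeff (m + 1) g) =
          ∑ x ∈ Finset.HasAntidiagonal.antidiagonal m, ((m.factorial : A) * coeff x.1 f * (s (x.2 + 1) - t (x.2+1))
            + (m.factorial : A) * (coeff x.1 f - coeff x.1 g) * t (x.2 + 1)) := by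
        have : (((m + 1).factorial : ℕ) : A) * (coeff (m + 1) f - coeff (m + 1) g) =
          (m.factorial : A) * (coeff (m + 1) f * ((m : A) + 1) - coeff (m + 1) g * ((m : A) + 1)) := by
          rw [Nat.factorial_succ]; push_cast; ring
        rw [this, h1, h2, ← Finset.sum_sub_distrib, Finset.mul_sum]
        refine Finset.sum_congr rfl fun x _ => by ring
      rw [e]
      refine Finset.dvd_sum fun x hx => ?_
      have hx' := Finset.HasAntidiagonal.mem_antidiagonal.1 hx
      refine dvd_add (Dvd.dvd.mul_left (h _ (by omega) (by omega)) _) (Dvd.dvd.mul_right ?_ _)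
      obtain ⟨c, hc⟩ := Nat.factorial_dvd_factorial (show x.1 ≤ m by omega)
      rw [hc]; push_cast
      have := ih x.1 (by omega) (by omega)
      rw [mul_comm (x.1.factorial : A), mul_assoc]
      exact Dvd.dvd.mul_left this _

lemma LD_unique [IsDomain A] [CharZero A] {f g : PowerSeries A} {s t : ℕ → A} (hf : LD f s)
    (hg : LD g t) (h0 : coeff 0 f = coeff 0 g) (M : ℕ)
    (h : ∀ m, 1 ≤ m → m ≤ M → s m = t m) : ∀ m ≤ M, coeff m f = coeff m g := by
  intro m hm
  have := LD_compare hf hg h0 0 M (fun m h1 h2 => by rw [h m h1 h2, sub_self]) m hm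
  rw [zero_dvd_iff, mul_eq_zero] at this
  rcases this with h | h
  · exact absurd h (by exact_mod_cast Nat.factorial_ne_zero m)
  · exact sub_eq_zero.1 h

lemma LD_one_sub (a : A) (n : ℕ) (hn : 1 ≤ n) :
    LD (1 - C a * X ^ n) (fun m => if n ∣ m then -(n : A) * a ^ (m / n) else 0) := by
  unfold LD
  have hd : PowerSeries.derivative A (1 - C a * X ^ n) = - (C ((n : A) * a) * X ^ (n - 1)) := by
    ext m
    rw [PowerSeries.coeff_derivative]
    simp only [map_sub, map_neg, PowerSeries.coeff_C_mul, PowerSeries.coeff_X_pow,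
      PowerSeries.coeff_one]
    by_cases h : m + 1 = n
    · subst h; simp; ring
    · have : ¬ m = n - 1 := by omega
      simp [h, this]
  rw [hd]
  ext m
  rw [sub_mul, one_mul, map_sub, mul_assoc, PowerSeries.coeff_C_mul, PowerSeries.coeff_X_pow_mul',
    map_neg, PowerSeries.coeff_C_mul, PowerSeries.coeff_X_pow]
  simp only [PowerSeries.coeff_mk]
  rcases lt_trichotomy (m + 1) n with h | h | h
  · have h1 : ¬ m = n - 1 := by omega
    have h2 : ¬ n ∣ m + 1 := fun h' => by have := Nat.le_of_dvd (by omega) h'; omega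
    have h3 : ¬ n ≤ m := by omega
    simp [h1, h2, h3]
  · have h1 : m = n - 1 := by omega
    have h3 : ¬ n ≤ m := by omega
    simp [← h]
    try ring
  · have h1 : ¬ m = n - 1 := by omega
    have h3 : n ≤ m := by omega
    have h4 : m - n + 1 = m + 1 - n := by omega
    rw [if_neg h1, if_pos h3, h4]
    by_cases hd : n ∣ m + 1
    · have h5 : n ∣ m + 1 - n := Nat.dvd_sub hd dvd_rfl
      rw [if_pos hd, if_pos h5]
      obtain ⟨c, hc⟩ := hd
      have hc1 : 1 ≤ c := by rcases c with _ | c <;> omega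
      obtain ⟨c, rfl⟩ := Nat.exists_eq_add_of_le' hc1
      have h6 : m + 1 - n = n * c := by rw [hc]; rw [Nat.mul_succ]; omega
      rw [h6, hc, Nat.mul_div_cancel_left _ (by omega), Nat.mul_div_cancel_left _ (by omega)]
      ring
    · have h5 : ¬ n ∣ m + 1 - n := fun h' => hd (by
        have := Nat.dvd_add h' (dvd_refl n); rwa [Nat.sub_add_cancel (by omega)] at this)
      simp [hd, h5]

/-- Jacobi's formula -/
lemma jacobi {R B : Type*} [CommRing R] [CommRing B] [Algebra R B] (D : Derivation R B B)
    {n : Type*} [Fintype n] [DecidableEq n] (M : Matrix n n B) :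
    D M.det = (M.adjugate * M.map D).trace := by
  have hp : ∀ (I : Finset n) (f : n → B), D (∏ i ∈ I, f i) =
      ∑ i ∈ I, (∏ j ∈ I.erase i, f j) * D (f i) := by
    intro I f
    induction I using Finset.induction_on with
    | empty => simp
    | insert a I ha ih =>
      rw [Finset.prod_insert ha, Derivation.leibniz, ih, Finset.sum_insert ha,
        Finset.erase_insert ha, smul_eq_mul, smul_eq_mul, Finset.mul_sum, add_comm]
      congr 1
      refine Finset.sum_congr rfl fun i hi => ?_
      have : a ≠ i := fun h => ha (h ▸ hi)
      rw [Finset.erase_insert_of_ne this, Finset.prod_insert (by simp [ha]), mul_assoc]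
  have h1 : (M.adjugate * M.map D).trace = ∑ i, (M.updateCol i (fun j => D (M j i))).det := by
    rw [Matrix.trace]
    refine Finset.sum_congr rfl fun i _ => ?_
    rw [← Matrix.cramer_apply, Matrix.cramer_eq_adjugate_mulVec]
    simp [Matrix.mul_apply, Matrix.mulVec, dotProduct]
  rw [h1, Matrix.det_apply, map_sum]
  simp_rw [Matrix.det_apply]
  rw [Finset.sum_comm]
  refine Finset.sum_congr rfl fun σ _ => ?_
  rw [← Finset.smul_sum, Units.smul_def, Units.smul_def, map_zsmul, hp]
  congr 1
  refine Finset.sum_congr rfl fun i _ => ?_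
  rw [← Finset.prod_erase_mul _ _ (Finset.mem_univ i)]
  congr 1
  · refine Finset.prod_congr rfl fun j hj => ?_
    rw [Matrix.updateCol_ne (Finset.ne_of_mem_erase hj)]
  · simp

/-- `det (1 - X A)` as a power series. -/
def detP {n : Type*} [Fintype n] [DecidableEq n] (M : Matrix n n A) : PowerSeries A :=
  (1 - (X : PowerSeries A) • M.map (C (R := A))).det

lemma LD_detP {n : Type*} [Fintype n] [DecidableEq n] (M : Matrix n n A) :
    LD (detP M) (fun m => - (M ^ m).trace) := by
  set N : Matrix n n (PowerSeries A) := 1 - (X : PowerSeries A) • M.map (C (R := A)) with hN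
  set G : Matrix n n (PowerSeries A) := Matrix.of fun i j => PowerSeries.mk fun m => (M ^ m) i j
    with hG
  have h1 : N * G = 1 := by
    ext i j m
    rw [hN, sub_mul, one_mul, Matrix.smul_mul, Matrix.sub_apply, Matrix.smul_apply, map_sub,
      smul_eq_mul]
    rcases m with _ | m
    · simp [hG, Matrix.one_apply]
      try (split_ifs <;> simp)
    · rw [PowerSeries.coeff_succ_X_mul, Matrix.mul_apply, map_sum]
      simp [hG, Matrix.one_apply, pow_succ', Matrix.mul_apply]
      try split_ifs <;> simp [PowerSeries.coeff_one]
  have h2 : N.adjugate = N.det • G := by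
    calc N.adjugate = N.adjugate * (N * G) := by rw [h1, mul_one]
      _ = N.det • G := by rw [← mul_assoc, Matrix.adjugate_mul, Matrix.smul_mul, one_mul]
  have h3 : N.map (PowerSeries.derivative A) = - M.map (C (R := A)) := by
    ext i j m
    simp [hN, PowerSeries.coeff_derivative, Matrix.one_apply, PowerSeries.coeff_succ_X_mul,
      PowerSeries.coeff_C]
    split_ifs <;> simp_all [PowerSeries.coeff_one]
  unfold LD
  change PowerSeries.derivative A N.det = N.det * _
  rw [jacobi, h2, h3, Matrix.smul_mul, Matrix.trace_smul, smul_eq_mul]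
  congr 1
  ext m
  simp [Matrix.trace, Matrix.mul_apply, hG, pow_succ, mul_comm]

lemma coeff_zero_detP {n : Type*} [Fintype n] [DecidableEq n] (M : Matrix n n A) :
    coeff 0 (detP M) = 1 := by
  unfold detP
  rw [PowerSeries.coeff_zero_eq_constantCoeff_apply, RingHom.map_det]
  have : (constantCoeff (R := A)).mapMatrix (1 - (X : PowerSeries A) • M.map (C (R := A))) = 1 := by
    ext i j
    simp [Matrix.one_apply]
    try (split_ifs <;> simp)
  rw [this, Matrix.det_one]

end LDsec
end part1

section part2
set_option linter.unusedSectionVars false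
set_option linter.style.haveILetI false
section Kron
open PowerSeries

lemma kron_step {K : Type*} [Field K] (L : PowerSeries K) (M : ℕ)
    (h : (Matrix.of fun i j : Fin (M + 1) => coeff ((i : ℕ) + j) L).det = 0) :
    ∃ P Q : Polynomial K, Q ≠ 0 ∧ Q.natDegree ≤ M ∧ P.degree < M ∧
      ∀ i ≤ 2 * M, coeff i ((Q : PowerSeries K) * L) = P.coeff i := by
  obtain ⟨v, hv, hv0⟩ := Matrix.exists_mulVec_eq_zero_iff.2 h
  set Q : Polynomial K := ∑ j : Fin (M + 1), Polynomial.monomial (M - (j : ℕ)) (v j) with hQ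
  have hQc : ∀ j : Fin (M + 1), Q.coeff (M - (j : ℕ)) = v j := by
    intro j
    rw [hQ, Polynomial.finsetSum_coeff, Finset.sum_eq_single j]
    · simp
    · intro b _ hb
      rw [Polynomial.coeff_monomial, if_neg]
      intro h; apply hb; ext; omega
    · simp
  have hdeg : Q.natDegree ≤ M := by
    apply Polynomial.natDegree_sum_le_of_forall_le
    intro j _
    exact (Polynomial.natDegree_monomial_le _).trans (by omega)
  refine ⟨PowerSeries.trunc M ((Q : PowerSeries K) * L), Q, ?_, hdeg,
    PowerSeries.degree_trunc_lt _ _, ?_⟩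
  · intro h0
    apply hv
    ext j
    rw [← hQc, h0]; simp
  · intro i hi
    rw [PowerSeries.coeff_trunc]
    split_ifs with hlt
    · rfl
    · obtain ⟨i, rfl⟩ := Nat.exists_eq_add_of_le (not_lt.1 hlt)
      have h1 := congrFun hv0 (⟨i, by omega⟩ : Fin (M + 1))
      rw [hQ]
      have h2 : ((∑ j : Fin (M + 1), Polynomial.monomial (M - (j : ℕ)) (v j) : Polynomial K) :
          PowerSeries K) = ∑ j : Fin (M + 1), C (v j) * X ^ (M - (j : ℕ)) := by
        rw [← Polynomial.coeToPowerSeries.ringHom_apply, map_sum]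
        refine Finset.sum_congr rfl fun j _ => ?_
        rw [← Polynomial.C_mul_X_pow_eq_monomial]
        simp [Polynomial.coeToPowerSeries.ringHom_apply]
      rw [h2, Finset.sum_mul, map_sum]
      simp only [Matrix.mulVec, dotProduct, Matrix.of_apply, Pi.zero_apply] at h1
      rw [← h1]
      refine Finset.sum_congr rfl fun j _ => ?_
      rw [mul_assoc, PowerSeries.coeff_C_mul, PowerSeries.coeff_X_pow_mul', if_pos (by omega),
        mul_comm]
      congr 3
      omega

lemma kronecker {K : Type*} [Field K] (L : PowerSeries K) (M0 : ℕ)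
    (h : ∀ M ≥ M0, (Matrix.of fun i j : Fin (M + 1) => coeff ((i : ℕ) + j) L).det = 0) :
    ∃ P Q : Polynomial K, Q ≠ 0 ∧ (Q : PowerSeries K) * L = (P : PowerSeries K) := by
  choose! P Q hQ hQd hPd hc using fun M hM => kron_step L M (h M hM)
  have hdv : ∀ M ≥ M0, ∃ Z : PowerSeries K, (Q M : PowerSeries K) * L - (P M : PowerSeries K) =
      X ^ (2 * M + 1) * Z := by
    intro M hM
    have : (X : PowerSeries K) ^ (2 * M + 1) ∣ (Q M : PowerSeries K) * L - (P M : PowerSeries K) := by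
      rw [PowerSeries.X_pow_dvd_iff]
      intro m hm
      rw [map_sub, hc M hM m (by omega), Polynomial.coeff_coe, sub_self]
    exact this
  have hstep : ∀ M ≥ M0, P M * Q (M + 1) = P (M + 1) * Q M := by
    intro M hM
    obtain ⟨Z, hZ⟩ := hdv M hM
    obtain ⟨Z', hZ'⟩ := hdv (M + 1) (by omega)
    rw [← sub_eq_zero]
    set D := P M * Q (M + 1) - P (M + 1) * Q M with hD
    have hX : (X : PowerSeries K) ^ (2 * M + 1) ∣ (D : PowerSeries K) := by
      refine ⟨X ^ 2 * Z' * (Q M : PowerSeries K) - Z * (Q (M + 1) : PowerSeries K), ?_⟩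
      have e : (D : PowerSeries K) = ((Q (M+1) : PowerSeries K) * L - (P (M+1) : PowerSeries K)) * Q M
        - ((Q M : PowerSeries K) * L - (P M : PowerSeries K)) * Q (M + 1) := by
        rw [hD]; push_cast; ring
      rw [e, hZ, hZ']; ring
    rw [PowerSeries.X_pow_dvd_iff] at hX
    ext i
    rw [Polynomial.coeff_zero]
    by_cases hi : i < 2 * M + 1
    · have := hX i hi
      rwa [Polynomial.coeff_coe] at this
    · have hPn : ∀ N ≥ M0, ∀ i ≥ N, (P N).coeff i = 0 := fun N hN i hi =>
        Polynomial.coeff_eq_zero_of_degree_lt (lt_of_lt_of_le (hPd N hN) (by exact_mod_cast hi))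
      have hQn : ∀ N ≥ M0, ∀ i > N, (Q N).coeff i = 0 := fun N hN i hi =>
        Polynomial.coeff_eq_zero_of_natDegree_lt (lt_of_le_of_lt (hQd N hN) hi)
      rw [hD, Polynomial.coeff_sub, Polynomial.coeff_mul, Polynomial.coeff_mul,
        Finset.sum_eq_zero, Finset.sum_eq_zero, sub_zero]
      · intro x hx
        have := Finset.HasAntidiagonal.mem_antidiagonal.1 hx
        by_cases h1 : M + 1 ≤ x.1
        · rw [hPn (M+1) (by omega) _ h1, zero_mul]
        · rw [hQn M hM x.2 (by omega), mul_zero]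
      · intro x hx
        have := Finset.HasAntidiagonal.mem_antidiagonal.1 hx
        by_cases h1 : M ≤ x.1
        · rw [hPn M (by omega) _ h1, zero_mul]
        · rw [hQn (M+1) (by omega) x.2 (by omega), mul_zero]
  have hall : ∀ M ≥ M0, P M * Q M0 = P M0 * Q M := by
    intro M hM
    induction M, hM using Nat.le_induction with
    | base => rfl
    | succ M hM ih =>
      have h1 := hstep M hM
      apply mul_right_cancel₀ (hQ M hM)
      calc P (M+1) * Q M0 * Q M = (P (M+1) * Q M) * Q M0 := by ring
        _ = (P M * Q M0) * Q (M+1) := by rw [← h1]; ring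
        _ = P M0 * Q (M+1) * Q M := by rw [ih]; ring
  refine ⟨P M0, Q M0, hQ M0 le_rfl, ?_⟩
  rw [← sub_eq_zero]
  by_contra hne
  set Z := (Q M0 : PowerSeries K) * L - (P M0 : PowerSeries K) with hZdef
  obtain ⟨z, hz⟩ := PowerSeries.exists_coeff_ne_zero_iff_ne_zero.2 hne
  set M := M0 + z with hMdef
  have hM : M ≥ M0 := by omega
  obtain ⟨Y, hY⟩ := hdv M hM
  have e : (Q M : PowerSeries K) * Z = X ^ (2 * M + 1) * ((Q M0 : PowerSeries K) * Y) := by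
    have h1 : ((P M * Q M0 : Polynomial K) : PowerSeries K) = ((P M0 * Q M : Polynomial K) : PowerSeries K) := by
      rw [hall M hM]
    push_cast at h1
    calc (Q M : PowerSeries K) * Z = (Q M : PowerSeries K) * Q M0 * L - P M0 * Q M := by
          rw [hZdef]; ring
      _ = Q M0 * ((Q M : PowerSeries K) * L - (P M : PowerSeries K)) := by rw [← h1]; ring
      _ = _ := by rw [hY]; ring
  have h1 : ((2 * M + 1 : ℕ) : ℕ∞) ≤ ((Q M : PowerSeries K) * Z).order := by
    rw [e, PowerSeries.order_mul, PowerSeries.order_X_pow]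
    exact le_self_add
  rw [PowerSeries.order_mul] at h1
  have h2 : (Q M : PowerSeries K).order ≤ (M : ℕ∞) := by
    refine (PowerSeries.order_le (Q M).natDegree ?_).trans (by exact_mod_cast hQd M hM)
    rw [Polynomial.coeff_coe]
    exact Polynomial.leadingCoeff_ne_zero.2 (hQ M hM)
  have h3 : Z.order ≤ (z : ℕ∞) := PowerSeries.order_le z hz
  have h4 := h1.trans (add_le_add h2 h3)
  have : 2 * M + 1 ≤ M + z := by exact_mod_cast h4
  omega

lemma dvd_det_of_col {O : Type*} [CommRing O] {n : Type*} [Fintype n] [DecidableEq n]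
    (A : Matrix n n O) (c : n → O) (h : ∀ i j, c j ∣ A i j) : ∏ j, c j ∣ A.det := by
  rw [Matrix.det_apply]
  refine Finset.dvd_sum fun σ _ => ?_
  rw [Units.smul_def, zsmul_eq_mul]
  refine Dvd.dvd.mul_left ?_ _
  exact Finset.prod_dvd_prod_of_dvd _ _ fun i _ => h _ _

lemma hankel_dvd {O : Type*} [CommRing O] (L U V : PowerSeries O) (T : O) (M e : ℕ)
    (hV0 : coeff 0 V = 1) (hV : ∀ j, e < j → T ∣ coeff j V)
    (hU : ∀ j, e ≤ j → T ∣ coeff j U)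
    (hL : ∀ j ≤ 2 * M, T ∣ coeff j (L * V - U)) :
    T ^ (M + 1 - e) ∣ (Matrix.of fun i j : Fin (M + 1) => coeff ((i : ℕ) + j) L).det := by
  set H : Matrix (Fin (M+1)) (Fin (M+1)) O := Matrix.of fun i j => coeff ((i : ℕ) + j) L with hH
  set W : Matrix (Fin (M+1)) (Fin (M+1)) O := Matrix.of fun i j =>
    if (j : ℕ) < e then (if i = j then 1 else 0) else
      if (i : ℕ) ≤ j ∧ (j : ℕ) - i ≤ e then coeff ((j : ℕ) - i) V else 0 with hW
  have hdW : W.det = 1 := by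
    rw [Matrix.det_of_isUpperTriangular]
    · apply Finset.prod_eq_one
      intro i _
      simp [hW, -coeff_zero_eq_constantCoeff, hV0]
    · intro i j hij
      simp only [id] at hij
      have h1 : ¬ i = j := fun h => by rw [h] at hij; exact lt_irrefl _ hij
      have h2 : ¬ (i : ℕ) ≤ j := by simpa using hij
      simp only [hW, Matrix.of_apply, h1, h2, false_and, if_false, ite_self]
  have hdet : H.det = (H * W).det := by rw [Matrix.det_mul, hdW, mul_one]
  rw [hdet]
  have hc := dvd_det_of_col (H * W) (fun j => if (j : ℕ) < e then 1 else T) ?_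
  · refine dvd_trans ?_ hc
    rw [Finset.prod_ite]
    simp only [Finset.prod_const_one, one_mul, Finset.prod_const]
    apply pow_dvd_pow
    have : (Finset.univ.filter fun j : Fin (M+1) => ¬ (j : ℕ) < e).card =
        ((Finset.range (M+1)).filter fun j => ¬ j < e).card := by
      rw [Finset.card_filter, Finset.card_filter, Finset.sum_range]
    rw [this]
    have : (Finset.Ico e (M+1)) ⊆ ((Finset.range (M+1)).filter fun j => ¬ j < e) := by
      intro x hx; simp at hx ⊢; omega
    simpa using Finset.card_le_card this
  · intro i j
    by_cases hj : (j : ℕ) < e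
    · rw [if_pos hj]; exact one_dvd _
    · rw [if_neg hj]
      have h1 : (H * W) i j = ∑ l ∈ Finset.range (e + 1), coeff ((i : ℕ) + j - l) L * coeff l V := by
        rw [Matrix.mul_apply]
        have : ∀ k : Fin (M+1), H i k * W k j =
          (fun k : ℕ => if k ≤ j ∧ (j : ℕ) - k ≤ e then coeff ((i : ℕ) + k) L * coeff (j - k) V else 0) k := by
          intro k
          simp [hH, hW, hj]
        rw [Finset.sum_congr rfl (fun k _ => this k), ← Finset.sum_range
          (fun k : ℕ => if k ≤ j ∧ (j : ℕ) - k ≤ e then coeff ((i : ℕ) + k) L * coeff (j - k) V else 0),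
          ← Finset.sum_filter]
        have hjM := j.2
        refine Finset.sum_nbij' (fun k => j - k) (fun l => j - l) ?_ ?_ ?_ ?_ ?_
        · intro k hk; simp at hk ⊢; omega
        · intro k hk; simp at hk ⊢; omega
        · intro k hk; simp at hk ⊢; omega
        · intro k hk; simp at hk ⊢; omega
        · intro k hk
          simp at hk
          congr 3
          omega
      have h2 : coeff ((i : ℕ) + j) (L * V) = ∑ l ∈ Finset.range ((i : ℕ) + j + 1),
          coeff ((i : ℕ) + j - l) L * coeff l V := by
        rw [mul_comm, PowerSeries.coeff_mul, Finset.Nat.sum_antidiagonal_eq_sum_range_succ_mk]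
        refine Finset.sum_congr rfl fun l _ => mul_comm _ _
      have h3 : (H * W) i j = coeff ((i : ℕ) + j) (L * V - U) + coeff ((i : ℕ) + j) U -
          ∑ l ∈ Finset.range ((i : ℕ) + j + 1) \ Finset.range (e + 1),
            coeff ((i : ℕ) + j - l) L * coeff l V := by
        rw [h1, map_sub, sub_add_cancel, h2, ← Finset.sum_sdiff (s₁ := Finset.range (e+1))
          (s₂ := Finset.range ((i : ℕ) + j + 1))]
        · ring
        · intro x hx; simp at hx ⊢; omega
      rw [h3]
      refine dvd_sub (dvd_add (hL _ ?_) (hU _ (by omega))) (Finset.dvd_sum fun l hl => ?_)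
      · have := i.2; have := j.2; omega
      · simp at hl
        exact Dvd.dvd.mul_left (hV _ (by omega)) _

end Kron
end part2

section part3
set_option linter.unusedSectionVars false
set_option linter.style.haveILetI false
section Crit
open PowerSeries

lemma norm_bound {K : Type*} [Field K] [NumberField K] (x : NumberField.RingOfIntegers K) (B : ℝ)
    (hB : ∀ σ : K →+* ℂ, ‖σ x‖ ≤ B) :
    |((Algebra.norm ℤ x : ℤ) : ℝ)| ≤ B ^ Fintype.card (K →ₐ[ℚ] ℂ) := by
  have h1 := Algebra.norm_eq_prod_embeddings ℚ ℂ (x : K)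
  rw [← Algebra.coe_norm_int] at h1
  have h2 : ‖algebraMap ℚ ℂ ((Algebra.norm ℤ x : ℤ) : ℚ)‖ = |((Algebra.norm ℤ x : ℤ) : ℝ)| := by
    simp
  rw [← h2, h1, norm_prod]
  have h3 : ∏ σ : K →ₐ[ℚ] ℂ, ‖σ (x : K)‖ ≤ ∏ _σ : K →ₐ[ℚ] ℂ, B :=
    Finset.prod_le_prod (fun _ _ => norm_nonneg _) (fun σ _ => hB σ.toRingHom)
  rwa [Finset.prod_const, Finset.card_univ] at h3

theorem dwork_crit {K : Type*} [Field K] [NumberField K] {O : Type*} [CommRing O] [IsDomain O]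
    (φ : NumberField.RingOfIntegers K →+* O) (lam : NumberField.RingOfIntegers K)
    (hlam : 2 ≤ |Algebra.norm ℤ lam|)
    (hdesc : ∀ k x, φ lam ^ k ∣ φ x → lam ^ k ∣ x)
    (L : PowerSeries (NumberField.RingOfIntegers K)) (C : ℕ) (hC : 1 ≤ C)
    (harch : ∀ (σ : K →+* ℂ) (m : ℕ), ‖σ (coeff m L : NumberField.RingOfIntegers K)‖ ≤ (C : ℝ) ^ m)
    (hpad : ∀ c : ℕ, ∃ Kc : ℕ, ∀ N M : ℕ, ∃ U V : PowerSeries O, coeff 0 V = 1 ∧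
      (∀ j, φ lam ^ (c * j - Kc) ∣ coeff j U) ∧ (∀ j, φ lam ^ (c * j - Kc) ∣ coeff j V) ∧
      ∀ j ≤ M, φ lam ^ N ∣ coeff j (PowerSeries.map φ L * V - U)) :
    ∃ P Q : Polynomial K, Q ≠ 0 ∧
      (Q : PowerSeries K) * PowerSeries.map (algebraMap (NumberField.RingOfIntegers K) K) L =
        (P : PowerSeries K) := by
  set g := Fintype.card (K →ₐ[ℚ] ℂ) with hg
  set c := 2 * C ^ 2 * g with hc
  obtain ⟨Kc, hKc⟩ := hpad (9 * c + 2)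
  refine kronecker _ (2 * Kc + 4) fun M hM => ?_
  set h := (Matrix.of fun i j : Fin (M + 1) => coeff ((i : ℕ) + j) L).det with hh
  have hmap : (Matrix.of fun i j : Fin (M + 1) => coeff ((i : ℕ) + j)
      (PowerSeries.map (algebraMap (NumberField.RingOfIntegers K) K) L)).det =
      algebraMap (NumberField.RingOfIntegers K) K h := by
    rw [hh, RingHom.map_det]; rfl
  rw [hmap]
  suffices h = 0 by rw [this, map_zero]
  by_contra hne
  obtain ⟨e, he⟩ : ∃ e, e = (M + 1) / 2 := ⟨_, rfl⟩
  set n := (9 * c + 2) * e - Kc with hn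
  obtain ⟨U, V, hV0, hU, hV, hUV⟩ := hKc n (2 * M)
  have hmapO : (Matrix.of fun i j : Fin (M + 1) => coeff ((i : ℕ) + j)
      (PowerSeries.map φ L)).det = φ h := by
    rw [hh, RingHom.map_det]; rfl
  have hd := hankel_dvd (PowerSeries.map φ L) U V (φ lam ^ n) M e hV0
    (fun j hj => (pow_dvd_pow _ (Nat.sub_le_sub_right (Nat.mul_le_mul_left _ hj.le) _)).trans (hV j))
    (fun j hj => (pow_dvd_pow _ (Nat.sub_le_sub_right (Nat.mul_le_mul_left _ hj) _)).trans (hU j))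
    hUV
  rw [hmapO, ← pow_mul] at hd
  have hd2 := hdesc _ _ hd
  have hd3 : (Algebra.norm ℤ lam) ^ (n * (M + 1 - e)) ∣ Algebra.norm ℤ h := by
    rw [← map_pow]; exact map_dvd _ hd2
  have hN0 : Algebra.norm ℤ h ≠ 0 := by
    rw [Ne, Algebra.norm_eq_zero_iff]; exact hne
  have h1 : (2 : ℤ) ^ (n * (M + 1 - e)) ≤ |Algebra.norm ℤ h| := by
    calc (2 : ℤ) ^ (n * (M + 1 - e)) ≤ |Algebra.norm ℤ lam| ^ (n * (M + 1 - e)) := by gcongr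
      _ = |(Algebra.norm ℤ lam) ^ (n * (M + 1 - e))| := (abs_pow _ _).symm
      _ ≤ |Algebra.norm ℤ h| := Int.le_of_dvd (abs_pos.2 hN0) ((abs_dvd_abs _ _).2 hd3)
  have hC' : (1 : ℝ) ≤ C := by exact_mod_cast hC
  have hB : ∀ σ : K →+* ℂ, ‖σ h‖ ≤ ((2 * (C : ℝ) ^ 2) ^ ((M + 1) ^ 2)) := by
    intro σ
    have e1 : σ h = ((Matrix.of fun i j : Fin (M + 1) =>
        σ (coeff ((i : ℕ) + j) L : NumberField.RingOfIntegers K)).det) := by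
      have := RingHom.map_det (σ.comp (algebraMap (NumberField.RingOfIntegers K) K))
        (Matrix.of fun i j : Fin (M + 1) => coeff ((i : ℕ) + j) L)
      exact this
    have := Matrix.det_le (abv := NormedField.toAbsoluteValue ℂ) (A := (Matrix.of fun i j : Fin (M + 1) =>
        σ (coeff ((i : ℕ) + j) L : NumberField.RingOfIntegers K))) (x := (C : ℝ) ^ (2 * M)) (by
        intro i j
        refine (harch σ ((i : ℕ) + j)).trans ?_
        exact pow_le_pow_right₀ hC' (by have := i.2; have := j.2; omega))
    rw [e1]
    refine this.trans ?_
    rw [nsmul_eq_mul, Fintype.card_fin, mul_pow]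
    gcongr
    · calc (((M + 1).factorial : ℕ) : ℝ) ≤ (((M + 1) ^ (M + 1) : ℕ) : ℝ) := by
            exact_mod_cast Nat.factorial_le_pow _
        _ ≤ (((2 ^ (M + 1)) ^ (M + 1) : ℕ) : ℝ) := by
            exact_mod_cast Nat.pow_le_pow_left (Nat.lt_two_pow_self).le _
        _ = 2 ^ ((M + 1) ^ 2) := by push_cast; rw [← pow_mul, sq]
    · rw [← pow_mul, ← pow_mul]
      apply pow_le_pow_right₀ hC'
      nlinarith
  have h2 := norm_bound h _ hB
  have h3 : (2 * (C : ℝ) ^ 2) ^ g ≤ 2 ^ c := by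
    rw [hc, pow_mul]
    gcongr
    have : 2 * C ^ 2 ≤ 2 ^ (2 * C ^ 2) := Nat.lt_two_pow_self.le
    exact_mod_cast this
  have h4 : ((2 * (C : ℝ) ^ 2) ^ ((M + 1) ^ 2)) ^ g ≤ 2 ^ (c * (M + 1) ^ 2) := by
    rw [pow_right_comm, pow_mul]; gcongr
  have h5 : (2 : ℝ) ^ (n * (M + 1 - e)) ≤ 2 ^ (c * (M + 1) ^ 2) := by
    refine le_trans ?_ (h2.trans h4)
    exact_mod_cast h1
  have h6 : n * (M + 1 - e) ≤ c * (M + 1) ^ 2 :=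
    (pow_le_pow_iff_right₀ (by norm_num : (1 : ℝ) < 2)).1 h5
  have h7 : e ≤ M + 1 - e := by omega
  have h8 : M + 1 ≤ 3 * e := by omega
  have h9 : 9 * c * e + 1 ≤ n := by
    have : (9 * c + 2) * e = 9 * c * e + 2 * e := by ring
    omega
  have h10 : (9 * c * e + 1) * e ≤ c * (3 * e) ^ 2 :=
    (Nat.mul_le_mul h9 h7).trans (h6.trans (Nat.mul_le_mul_left _ (Nat.pow_le_pow_left h8 2)))
  have h11 : 1 ≤ e := by omega
  nlinarith

end Crit
end part3

section part4
set_option linter.unusedSectionVars false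
set_option linter.style.haveILetI false
section Dat

abbrev Rp (p : ℕ) [Fact p.Prime] : Type := NumberField.RingOfIntegers (CyclotomicField p ℚ)

instance instNZp (p : ℕ) [h : Fact p.Prime] : NeZero p := ⟨h.out.ne_zero⟩

instance instCyc (p : ℕ) [h : Fact p.Prime] : IsCyclotomicExtension {p} ℚ (CyclotomicField p ℚ) :=
  haveI : NeZero ((p : ℕ) : ℚ) := ⟨by exact_mod_cast h.out.ne_zero⟩
  CyclotomicField.isCyclotomicExtension p ℚ

instance instNF (p : ℕ) [h : Fact p.Prime] : NumberField (CyclotomicField p ℚ) :=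
  IsCyclotomicExtension.numberField {p} ℚ _

def zt (p : ℕ) [Fact p.Prime] : Rp p :=
  (IsCyclotomicExtension.zeta_spec p ℚ (CyclotomicField p ℚ)).toInteger

def lm (p : ℕ) [Fact p.Prime] : Rp p := 1 - zt p

variable {p : ℕ} [Fact p.Prime]

lemma zt_prim : IsPrimitiveRoot (zt p) p :=
  (IsCyclotomicExtension.zeta_spec p ℚ (CyclotomicField p ℚ)).toInteger_isPrimitiveRoot

lemma lm_assoc : Associated (lm p ^ (p - 1)) (p : Rp p) := by
  have h := IsCyclotomicExtension.Rat.associated_zeta_sub_one_pow_prime p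
    (IsCyclotomicExtension.zeta_spec p ℚ (CyclotomicField p ℚ))
  refine Associated.trans ?_ h
  apply Associated.pow_pow
  rw [← Associated.neg_left_iff, lm, neg_sub]
  rfl

lemma lm_norm : 2 ≤ |Algebra.norm ℤ (lm p)| := by
  have : IsCyclotomicExtension {p ^ (0 + 1)} ℚ (CyclotomicField p ℚ) := by
    rw [zero_add, pow_one]; infer_instance
  have h := IsCyclotomicExtension.Rat.associated_norm_zeta_sub_one p 0
    (K := CyclotomicField p ℚ) (ζ := IsCyclotomicExtension.zeta p ℚ (CyclotomicField p ℚ)) (by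
      rw [zero_add, pow_one]; exact IsCyclotomicExtension.zeta_spec p ℚ (CyclotomicField p ℚ))
  have h2 : Associated (Algebra.norm ℤ (lm p)) (p : ℤ) := by
    refine Associated.trans ?_ h
    apply Associated.map
    rw [← Associated.neg_left_iff, lm, neg_sub]
    rfl
  have h3 : |Algebra.norm ℤ (lm p)| = p := by
    rw [Int.abs_eq_natAbs, Int.natAbs_eq_iff_associated.2 h2]; simp
  rw [h3]
  exact_mod_cast (Fact.out : p.Prime).two_le

lemma lm_ne : lm p ≠ 0 := by
  intro h
  have := lm_norm (p := p)
  rw [h, Algebra.norm_zero] at this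
  norm_num at this

lemma lm_coprime {x : Rp p} (hx : ¬ lm p ∣ x) : IsCoprime (p : Rp p) x := by
  refine IsCyclotomicExtension.Rat.isCoprime_of_not_zeta_sub_one_dvd p
    (IsCyclotomicExtension.zeta_spec p ℚ (CyclotomicField p ℚ)) (fun h => hx ?_)
  rw [lm, ← neg_sub, neg_dvd]; exact h

structure PD (p : ℕ) [Fact p.Prime] (O : Type) [CommRing O] : Type where
  φ : Rp p →+* O
  inj : Function.Injective φ
  nonunit : ¬ IsUnit (φ (lm p))
  τ : Omg p →* O
  τ_inj : Function.Injective τ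
  τ_zero : τ 0 = 0
  tr : ∀ (d : ℕ) (z : Omg p), z ^ p ^ d = z → ∀ M : ℕ, ∃ c : ℕ,
    (p : O) ^ M ∣ (∑ j ∈ Finset.range d, τ z ^ p ^ j) - c ∧ (c : ZMod p) = traceZmod p d z

section Witt

instance : CharP (Omg p) p := charP_of_injective_algebraMap (algebraMap (ZMod p) (Omg p)).injective p

lemma witt_p_dvd (y : WittVector p (Omg p)) (h : y.coeff 0 = 0) : (p : WittVector p (Omg p)) ∣ y := by
  by_cases hy : y = 0
  · rw [hy]; exact dvd_zero _
  obtain ⟨m, b, hb⟩ := WittVector.exists_eq_pow_p_mul' y hy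
  rw [hb]
  rcases m with _ | m
  · exfalso
    rw [pow_zero, one_mul] at hb
    have : IsUnit (WittVector.constantCoeff y) := by rw [hb]; exact b.isUnit.map _
    rw [WittVector.constantCoeff_apply, h] at this
    exact not_isUnit_zero this
  · rw [pow_succ', mul_assoc]; exact dvd_mul_right _ _

lemma fix_zmod (z : Omg p) (h : z ^ p = z) : ∃ u : ZMod p, algebraMap (ZMod p) (Omg p) u = z := by
  have hb : (⊥ : Subfield (Omg p)) ≤ (algebraMap (ZMod p) (Omg p)).fieldRange := bot_le
  obtain ⟨u, hu⟩ := hb ((Subfield.mem_bot_iff_pow_eq_self (F := Omg p) p).2 h)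
  exact ⟨u, hu⟩

lemma witt_p_ne : (p : WittVector p (Omg p)) ≠ 0 := (WittVector.irreducible p).ne_zero

lemma witt_fix (M : ℕ) : ∀ y : WittVector p (Omg p), WittVector.frobenius y = y →
    ∃ c : ℕ, (p : WittVector p (Omg p)) ^ M ∣ y - c := by
  induction M with
  | zero => intro y _; exact ⟨0, by simp⟩
  | succ M ih =>
    intro y hy
    obtain ⟨u, hu⟩ := fix_zmod (y.coeff 0) (by rw [← WittVector.coeff_frobenius_charP, hy])
    have h0 : (y - (u.val : WittVector p (Omg p))).coeff 0 = 0 := by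
      have : WittVector.constantCoeff (y - (u.val : WittVector p (Omg p))) = 0 := by
        rw [map_sub, map_natCast, WittVector.constantCoeff_apply, ← hu,
          ← map_natCast (algebraMap (ZMod p) (Omg p)), ZMod.natCast_val, ZMod.cast_id', id, sub_self]
      exact this
    obtain ⟨y', hy'⟩ := witt_p_dvd _ h0
    have hf : WittVector.frobenius y' = y' := by
      apply mul_left_cancel₀ (witt_p_ne (p := p))
      rw [← hy', ← map_natCast (WittVector.frobenius (p := p) (R := Omg p)) p, ← map_mul, ← hy',
        map_sub, hy, map_natCast]
    obtain ⟨c, r, hr⟩ := ih y' hf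
    refine ⟨u.val + p * c, r, ?_⟩
    rw [pow_succ', mul_assoc, ← hr, mul_sub, ← hy']
    push_cast; ring

lemma witt_frob_teich (z : Omg p) : WittVector.frobenius (WittVector.teichmuller p z) =
    WittVector.teichmuller p z ^ p := by
  rw [WittVector.frobenius_eq_map_frobenius, WittVector.map_teichmuller, frobenius_def, map_pow]

lemma witt_tr (d : ℕ) (z : Omg p) (hz : z ^ p ^ d = z) (M : ℕ) : ∃ c : ℕ,
    (p : WittVector p (Omg p)) ^ M ∣
      (∑ j ∈ Finset.range d, WittVector.teichmuller p z ^ p ^ j) - c ∧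
      (c : ZMod p) = traceZmod p d z := by
  set t := ∑ j ∈ Finset.range d, WittVector.teichmuller p z ^ p ^ j with ht
  have hf : WittVector.frobenius t = t := by
    have h1 : WittVector.frobenius t = ∑ j ∈ Finset.range d, WittVector.teichmuller p z ^ p ^ (j + 1) := by
      rw [ht, map_sum]
      refine Finset.sum_congr rfl fun j _ => ?_
      rw [map_pow, witt_frob_teich, ← pow_mul, pow_succ']
    have h2 := Finset.sum_range_succ (fun j => WittVector.teichmuller p z ^ p ^ j) d
    rw [Finset.sum_range_succ', ← h1, ← map_pow, ← map_pow, hz, pow_zero, pow_one] at h2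
    exact add_right_cancel h2
  obtain ⟨c, hc⟩ := witt_fix (M + 1) t hf
  refine ⟨c, (pow_dvd_pow _ (Nat.le_succ M)).trans hc, ?_⟩
  have h3 : WittVector.constantCoeff (t - (c : WittVector p (Omg p))) = 0 := by
    obtain ⟨r, hr⟩ := hc
    rw [hr, map_mul, map_pow, map_natCast, CharP.cast_eq_zero, zero_pow (by omega), zero_mul]
  rw [map_sub, map_natCast, sub_eq_zero, ht, map_sum] at h3
  have h4 : ∑ j ∈ Finset.range d, z ^ p ^ j = algebraMap (ZMod p) (Omg p) c := by
    rw [map_natCast, ← h3]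
    refine Finset.sum_congr rfl fun j _ => ?_
    rw [map_pow, WittVector.constantCoeff_apply, WittVector.teichmuller_coeff_zero]
  rw [traceZmod, h4, Function.leftInverse_invFun (algebraMap (ZMod p) (Omg p)).injective]

instance : CharZero (WittVector p (Omg p)) := by
  refine charZero_of_inj_zero fun n hn => ?_
  by_contra h
  obtain ⟨v, u, hu, rfl⟩ := Nat.exists_eq_pow_mul_and_not_dvd h p (Fact.out : p.Prime).ne_one
  push_cast at hn
  rcases mul_eq_zero.1 hn with h1 | h1
  · exact witt_p_ne (eq_zero_of_pow_eq_zero h1)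
  · have := congrArg WittVector.constantCoeff h1
    rw [map_natCast, map_zero, CharP.cast_eq_zero_iff _ p] at this
    exact hu this

abbrev WF (p : ℕ) [Fact p.Prime] : Type := FractionRing (WittVector p (Omg p))
abbrev WA (p : ℕ) [Fact p.Prime] : Type := AlgebraicClosure (WF p)

instance : CharZero (WF p) :=
  charZero_of_injective_algebraMap (IsFractionRing.injective (WittVector p (Omg p)) (WF p))
instance : CharZero (WA p) :=
  charZero_of_injective_algebraMap (algebraMap (WF p) (WA p)).injective

abbrev OW (p : ℕ) [Fact p.Prime] : Type := integralClosure (WittVector p (Omg p)) (WA p)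

lemma ow_p_nonunit : ¬ IsUnit ((p : ℕ) : OW p) := by
  intro h
  obtain ⟨u, hu⟩ := h.exists_right_inv
  have hu' : ((p : ℕ) : WA p) * (u : WA p) = 1 := by
    have := congrArg (Subtype.val) hu
    simpa using this
  have hint : IsIntegral (WittVector p (Omg p)) (u : WA p) := u.2
  have e : (u : WA p) = algebraMap (WF p) (WA p) ((p : WF p)⁻¹) := by
    rw [map_inv₀, map_natCast]
    exact eq_inv_of_mul_eq_one_right hu'
  rw [e, isIntegral_algebraMap_iff (algebraMap (WF p) (WA p)).injective] at hint
  obtain ⟨w, hw⟩ := IsIntegrallyClosed.isIntegral_iff.1 hint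
  have h2 : (p : WittVector p (Omg p)) * w = 1 := by
    apply IsFractionRing.injective (WittVector p (Omg p)) (WF p)
    rw [map_mul, hw, map_natCast, map_one, mul_inv_cancel₀]
    exact_mod_cast (Fact.out : p.Prime).ne_zero
  exact (WittVector.irreducible p).not_isUnit (IsUnit.of_mul_eq_one _ h2)

def cycEmb (p : ℕ) [Fact p.Prime] : CyclotomicField p ℚ →ₐ[ℚ] WA p := IsAlgClosed.lift

def owφ (p : ℕ) [Fact p.Prime] : Rp p →+* OW p :=
  ((cycEmb p : CyclotomicField p ℚ →+* WA p).comp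
    (algebraMap (Rp p) (CyclotomicField p ℚ))).codRestrict
    (integralClosure (WittVector p (Omg p)) (WA p)).toSubring (by
      intro x
      obtain ⟨f, hf, h1⟩ : IsIntegral ℤ (x : CyclotomicField p ℚ) := x.2
      refine ⟨f.map (Int.castRingHom _), hf.map _, ?_⟩
      have h2 := congrArg (cycEmb p : CyclotomicField p ℚ →+* WA p) h1
      rw [Polynomial.hom_eval₂, map_zero] at h2
      rw [Polynomial.eval₂_map, ← h2]
      exact congrArg (fun g => Polynomial.eval₂ g _ f) (RingHom.ext_int _ _))

lemma owφ_inj : Function.Injective (owφ p) := by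
  intro x y h
  have h' := congrArg Subtype.val h
  have h2 := (cycEmb p : CyclotomicField p ℚ →+* WA p).injective h'
  exact NumberField.RingOfIntegers.coe_injective h2

def thePD (p : ℕ) [Fact p.Prime] : PD p (OW p) where
  φ := owφ p
  inj := owφ_inj
  nonunit := by
    intro h
    have h1 := (lm_assoc (p := p)).map (owφ p)
    rw [map_pow, map_natCast] at h1
    exact ow_p_nonunit (h1.isUnit (h.pow _))
  τ := (algebraMap (WittVector p (Omg p)) (OW p) : WittVector p (Omg p) →* OW p).comp
    (WittVector.teichmuller p)
  τ_inj := by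
    intro x y h
    have h0 : algebraMap (WittVector p (Omg p)) (WA p) (WittVector.teichmuller p x) =
      algebraMap (WittVector p (Omg p)) (WA p) (WittVector.teichmuller p y) :=
        congrArg Subtype.val h
    rw [IsScalarTower.algebraMap_apply (WittVector p (Omg p)) (WF p) (WA p),
      IsScalarTower.algebraMap_apply (WittVector p (Omg p)) (WF p) (WA p)] at h0
    have h1 := IsFractionRing.injective (WittVector p (Omg p)) (WF p)
      ((algebraMap (WF p) (WA p)).injective h0)
    rw [← WittVector.teichmuller_coeff_zero p x, h1, WittVector.teichmuller_coeff_zero]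
  τ_zero := by simp
  tr := by
    intro d z hz M
    obtain ⟨c, h1, h2⟩ := witt_tr d z hz M
    refine ⟨c, ?_, h2⟩
    have := map_dvd (algebraMap (WittVector p (Omg p)) (OW p)) h1
    simpa using this

end Witt
end Dat
end part4

section part5
set_option linter.unusedSectionVars false
set_option linter.style.haveILetI false
section Split
open PowerSeries

variable {p : ℕ} [Fact p.Prime] {O : Type} [CommRing O] [IsDomain O]

/-- the uniformizer in `O` -/
def PD.l (D : PD p O) : O := D.φ (lm p)

lemma PD.l_ne (D : PD p O) : D.l ≠ 0 := by
  unfold PD.l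
  rw [Ne, map_eq_zero_iff _ D.inj]; exact lm_ne

lemma PD.assoc (D : PD p O) : Associated (D.l ^ (p - 1)) (p : O) := by
  have h1 := (lm_assoc (p := p)).map D.φ
  rwa [map_pow, map_natCast] at h1

lemma PD.l_dvd_p (D : PD p O) : D.l ∣ (p : O) := by
  refine dvd_trans ?_ D.assoc.dvd
  exact dvd_pow_self _ (by have := (Fact.out : p.Prime).two_le; omega)

lemma PD.desc (D : PD p O) (k : ℕ) (x : Rp p) (h : D.φ (lm p) ^ k ∣ D.φ x) : lm p ^ k ∣ x := by
  induction k with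
  | zero => simp
  | succ k ih =>
    obtain ⟨y, hy⟩ := ih ((pow_dvd_pow _ (Nat.le_succ k)).trans h)
    by_cases hl : lm p ∣ y
    · rw [hy, pow_succ]; exact mul_dvd_mul_left _ hl
    · exfalso
      rw [hy, map_mul, map_pow, pow_succ] at h
      have h2 : D.l ∣ D.φ y := (mul_dvd_mul_iff_left (pow_ne_zero k D.l_ne)).1 h
      have h3 := (lm_coprime hl).map D.φ
      rw [map_natCast] at h3
      exact D.nonunit (h3.isUnit_of_dvd' D.l_dvd_p h2)

lemma PD.div (D : PD p O) (n : ℕ) (hn : n ≠ 0) : ∃ v : ℕ, ∀ (k : ℕ) (x : O),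
    D.l ^ (k + v) ∣ (n : O) * x → D.l ^ k ∣ x := by
  obtain ⟨v, u, hu, rfl⟩ := Nat.exists_eq_pow_mul_and_not_dvd hn p (Fact.out : p.Prime).ne_one
  refine ⟨(p - 1) * v, fun k x h => ?_⟩
  have h1 : Associated (D.l ^ ((p - 1) * v)) ((p : O) ^ v) := by
    rw [pow_mul]; exact D.assoc.pow_pow
  have h2 : D.l ^ ((p - 1) * v) * D.l ^ k ∣ D.l ^ ((p - 1) * v) * ((u : O) * x) := by
    rw [← pow_add, add_comm]
    refine h.trans ?_
    rw [Nat.cast_mul, Nat.cast_pow, mul_assoc]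
    exact mul_dvd_mul_right h1.symm.dvd _
  have h3 := (mul_dvd_mul_iff_left (pow_ne_zero _ D.l_ne)).1 h2
  have hc : IsCoprime (((p ^ k : ℕ) : ℤ)) ((u : ℕ) : ℤ) := by
    rw [Nat.isCoprime_iff_coprime]
    exact Nat.Coprime.pow_left _ (((Fact.out : p.Prime).coprime_iff_not_dvd).2 hu)
  have hc2 := hc.map (Int.castRingHom O)
  rw [eq_intCast, eq_intCast, Int.cast_natCast, Int.cast_natCast, Nat.cast_pow] at hc2
  exact (hc2.of_isCoprime_of_dvd_left (pow_dvd_pow_of_dvd D.l_dvd_p k)).dvd_of_dvd_mul_left h3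

lemma moebius_core {A : Type*} [CommRing A] (N m : ℕ) (hm : 1 ≤ m) (hmN : m < N) (h : ℕ → A) :
    ∑ x ∈ ((Finset.range N) ×ˢ (Finset.range N)).filter (fun x => ¬ p ∣ x.1 * x.2),
      (if x.1 * x.2 ∣ m then ((ArithmeticFunction.moebius x.2 : ℤ) : A) * h x.1 else 0) =
    h (m / p ^ m.factorization p) := by
  set m' := m / p ^ m.factorization p with hm'
  have hpm : ¬ p ∣ m' := Nat.not_dvd_ordCompl (Fact.out) (by omega)
  have hdm : p ^ m.factorization p * m' = m := Nat.ordProj_mul_ordCompl_eq_self m p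
  have hm0 : m' ≠ 0 := fun h => by rw [h] at hdm; omega
  have hmle : m' ≤ m := Nat.div_le_self _ _
  have hcond : ∀ r : ℕ, (¬ p ∣ r ∧ r ∣ m) ↔ r ∣ m' := by
    intro r
    constructor
    · rintro ⟨h1, h2⟩
      rw [← hdm] at h2
      exact (Nat.Coprime.pow_right _ (((Fact.out : p.Prime).coprime_iff_not_dvd).2 h1).symm).dvd_of_dvd_mul_left h2
    · intro h1
      exact ⟨fun h => hpm (h.trans h1), h1.trans ⟨_, by rw [mul_comm]; exact hdm.symm⟩⟩
  rw [Finset.sum_filter, Finset.sum_product, Finset.sum_eq_single m']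
  · rw [Finset.sum_eq_single 1]
    · have := (hcond m').2 dvd_rfl
      simp [this.1, this.2]
    · intro n _ hn
      rw [← ite_and, if_neg]
      rw [hcond]
      intro hd
      apply hn
      have : m' * n ∣ m' * 1 := by simpa using hd
      exact Nat.dvd_one.1 (Nat.dvd_of_mul_dvd_mul_left (Nat.pos_of_ne_zero hm0) this)
    · intro hh; simp at hh
      have hN : N = 1 := by omega
      omega
  · intro i _ hi
    have e : ∀ n ∈ Finset.range N, (if ¬ p ∣ i * n then (if i * n ∣ m then
        ((ArithmeticFunction.moebius n : ℤ) : A) * h i else 0) else 0) =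
        if i * n ∣ m' then ((ArithmeticFunction.moebius n : ℤ) : A) * h i else 0 := by
      intro n _
      rw [← ite_and]
      simp only [hcond]
    rw [Finset.sum_congr rfl e]
    by_cases hid : i ∣ m'
    · obtain ⟨r, hr⟩ := hid
      have hi0 : 0 < i := Nat.pos_of_ne_zero (fun h => by rw [h, zero_mul] at hr; exact hm0 hr)
      have hr0 : r ≠ 0 := fun h => by rw [h, mul_zero] at hr; exact hm0 hr
      have hrle : r ≤ m' := by rw [hr]; exact Nat.le_mul_of_pos_left _ hi0
      rw [← Finset.sum_filter]
      have hf : (Finset.range N).filter (fun n => i * n ∣ m') = r.divisors := by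
        ext n
        simp only [Finset.mem_filter, Finset.mem_range, Nat.mem_divisors, hr]
        rw [Nat.mul_dvd_mul_iff_left hi0]
        constructor
        · rintro ⟨_, h2⟩; exact ⟨h2, hr0⟩
        · rintro ⟨h2, _⟩; exact ⟨by have := Nat.le_of_dvd (by omega) h2; omega, h2⟩
      rw [hf, ← Finset.sum_mul, ← Int.cast_sum, ← ArithmeticFunction.coe_mul_zeta_apply,
        ArithmeticFunction.moebius_mul_coe_zeta, ArithmeticFunction.one_apply_ne, Int.cast_zero, zero_mul]
      rintro rfl
      rw [mul_one] at hr
      exact hi hr.symm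
    · apply Finset.sum_eq_zero
      intro n _
      rw [if_neg]
      exact fun hh => hid ((dvd_mul_right _ _).trans hh)
  · intro hh; simp at hh; omega

def Good (l : O) (f : Polynomial O) : Prop := ∀ n, l ^ n ∣ f.coeff n

lemma Good.mul {l : O} {f g : Polynomial O} (hf : Good l f) (hg : Good l g) : Good l (f * g) := by
  intro n
  rw [Polynomial.coeff_mul]
  refine Finset.dvd_sum fun x hx => ?_
  rw [← Finset.HasAntidiagonal.mem_antidiagonal.1 hx, pow_add]
  exact mul_dvd_mul (hf _) (hg _)

lemma Good.one {l : O} : Good l (1 : Polynomial O) := by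
  intro n
  rw [Polynomial.coeff_one]
  split_ifs with h
  · rw [h]; simp
  · exact dvd_zero _

lemma Good.pow {l : O} {f : Polynomial O} (hf : Good l f) (c : ℕ) : Good l (f ^ c) := by
  induction c with
  | zero => rw [pow_zero]; exact Good.one
  | succ c ih => rw [pow_succ]; exact ih.mul hf

lemma Good.prod {ι : Type*} {l : O} {I : Finset ι} {f : ι → Polynomial O} (hf : ∀ i ∈ I, Good l (f i)) :
    Good l (∏ i ∈ I, f i) := by
  induction I using Finset.induction_on with
  | empty => simpa using Good.one
  | insert a I ha ih =>
    rw [Finset.prod_insert ha]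
    exact (hf a (Finset.mem_insert_self _ _)).mul (ih fun i hi => hf i (Finset.mem_insert_of_mem hi))

lemma eval_dvd_of_coeff (l : O) (N : ℕ) (f : Polynomial O) (h : ∀ m < N, l ^ N ∣ f.coeff m) :
    l ^ N ∣ f.eval l := by
  rw [Polynomial.eval_eq_sum_range]
  refine Finset.dvd_sum fun m _ => ?_
  by_cases hm : m < N
  · exact Dvd.dvd.mul_right (h m hm) _
  · exact Dvd.dvd.mul_left (pow_dvd_pow _ (not_lt.1 hm)) _

theorem splitting (D : PD p O) (N : ℕ) : ∃ θ : Polynomial O, Good D.l θ ∧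
    ∀ (d : ℕ) (z : Omg p), z ^ p ^ d = z →
      D.l ^ N ∣ (∏ j ∈ Finset.range d, θ.eval (D.τ z ^ p ^ j)) -
        D.φ (zt p) ^ (traceZmod p d z).val := by
  obtain ⟨v, hv⟩ := D.div N.factorial (Nat.factorial_ne_zero N)
  set M := N + v with hM
  have hc : ∀ x : ℕ × ℕ, ∃ c : ℕ, ¬ p ∣ x.1 * x.2 →
      ((p ^ M : ℕ) : ℤ) ∣ (c : ℤ) * ((x.1 * x.2 : ℕ) : ℤ) - ArithmeticFunction.moebius x.2 := by
    intro x
    by_cases hx : p ∣ x.1 * x.2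
    · exact ⟨0, fun h => absurd hx h⟩
    have hpM : p ^ M ≠ 0 := pow_ne_zero _ (Fact.out : p.Prime).ne_zero
    have hcop : IsCoprime (((x.1 * x.2 : ℕ)) : ℤ) ((p ^ M : ℕ) : ℤ) := by
      rw [Nat.isCoprime_iff_coprime]
      exact (Nat.Coprime.pow_left _ (((Fact.out : p.Prime).coprime_iff_not_dvd).2 hx)).symm
    obtain ⟨a, b, hab⟩ := hcop
    refine ⟨((a * ArithmeticFunction.moebius x.2) % ((p ^ M : ℕ) : ℤ)).toNat, fun _ => ?_⟩
    rw [Int.toNat_of_nonneg (Int.emod_nonneg _ (by exact_mod_cast hpM))]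
    rw [Int.emod_def]
    refine ⟨- b * ArithmeticFunction.moebius x.2 - (a * ArithmeticFunction.moebius x.2) / ((p ^ M : ℕ) : ℤ)
      * ((x.1 * x.2 : ℕ) : ℤ), ?_⟩
    linear_combination (ArithmeticFunction.moebius x.2) * hab
  choose c hc using hc
  set I := ((Finset.range N) ×ˢ (Finset.range N)).filter (fun x : ℕ × ℕ => ¬ p ∣ x.1 * x.2) with hI
  have hIpos : ∀ x ∈ I, 1 ≤ x.1 ∧ 1 ≤ x.2 := by
    intro x hx
    have hx2 := (Finset.mem_filter.1 hx).2
    constructor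
    · by_contra h0; apply hx2; rw [show x.1 = 0 by omega]; simp
    · by_contra h0; apply hx2; rw [show x.2 = 0 by omega]; simp
  refine ⟨∏ x ∈ I, (1 - Polynomial.C (D.l ^ (x.1 * x.2)) * Polynomial.X ^ x.2) ^ c x, ?_, ?_⟩
  · refine Good.prod fun x hx => Good.pow ?_ _
    intro n
    rw [Polynomial.coeff_sub, Polynomial.coeff_C_mul_X_pow]
    refine dvd_sub (Good.one n) ?_
    split_ifs with hn
    · rw [hn]; exact pow_dvd_pow _ (Nat.le_mul_of_pos_left _ (hIpos x hx).1)
    · exact dvd_zero _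
  · intro d z hz
    obtain ⟨t, ht, htr⟩ := D.tr d z hz M
    set τ := D.τ z with hτ
    have hτd : τ ^ p ^ d = τ := by rw [hτ, ← map_pow, hz]
    set G : Polynomial O := ∏ j ∈ Finset.range d, ∏ x ∈ I,
      (1 - Polynomial.C (τ ^ (x.2 * p ^ j)) * Polynomial.X ^ (x.1 * x.2)) ^ c x with hG
    set G' : Polynomial O := (1 - Polynomial.C 1 * Polynomial.X ^ 1) ^ t with hG'
    have hGe : G.eval D.l = ∏ j ∈ Finset.range d,
        (∏ x ∈ I, (1 - Polynomial.C (D.l ^ (x.1 * x.2)) * Polynomial.X ^ x.2) ^ c x).eval (τ ^ p ^ j) := by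
      rw [hG, Polynomial.eval_prod]
      refine Finset.prod_congr rfl fun j _ => ?_
      rw [Polynomial.eval_prod, Polynomial.eval_prod]
      refine Finset.prod_congr rfl fun x _ => ?_
      simp only [Polynomial.eval_pow, Polynomial.eval_sub, Polynomial.eval_one, Polynomial.eval_mul,
        Polynomial.eval_C, Polynomial.eval_X]
      rw [← pow_mul τ, mul_comm (p ^ j), mul_comm (τ ^ _)]
    have hG'e : G'.eval D.l = D.φ (zt p) ^ (traceZmod p d z).val := by
      rw [hG']
      simp only [Polynomial.eval_pow, Polynomial.eval_sub, Polynomial.eval_one, Polynomial.eval_mul,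
        Polynomial.eval_C, Polynomial.eval_X, pow_one, one_mul]
      rw [← htr, ZMod.val_natCast, PD.l, lm, map_sub, map_one, sub_sub_cancel]
      have h1 : D.φ (zt p) ^ p = 1 := by rw [← map_pow, zt_prim.pow_eq_one, map_one]
      exact pow_eq_pow_mod _ h1
    rw [← hGe, ← hG'e, ← Polynomial.eval_sub]
    apply eval_dvd_of_coeff
    have hLG : LD (G : PowerSeries O) (fun m => ∑ j ∈ Finset.range d, ∑ x ∈ I, (c x : O) *
        (if x.1 * x.2 ∣ m then -((x.1 * x.2 : ℕ) : O) * (τ ^ (x.2 * p ^ j)) ^ (m / (x.1 * x.2)) else 0)) := by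
      have e : (G : PowerSeries O) = ∏ j ∈ Finset.range d, ∏ x ∈ I,
        (1 - C (τ ^ (x.2 * p ^ j)) * X ^ (x.1 * x.2)) ^ c x := by
        rw [hG, ← Polynomial.coeToPowerSeries.ringHom_apply]
        simp [map_prod, Polynomial.coeToPowerSeries.ringHom_apply]
      rw [e]
      refine LD_prod _ fun j _ => LD_prod _ fun x hx => LD_pow (LD_one_sub _ _ ?_) _
      exact Nat.mul_pos (hIpos x hx).1 (hIpos x hx).2
    have hLG' : LD (G' : PowerSeries O) (fun m => (t : O) * (if 1 ∣ m then -((1 : ℕ) : O) * 1 ^ (m / 1) else 0)) := by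
      have e : (G' : PowerSeries O) = (1 - C 1 * X ^ 1) ^ t := by
        rw [hG', ← Polynomial.coeToPowerSeries.ringHom_apply]
        simp [Polynomial.coeToPowerSeries.ringHom_apply]
      rw [e]
      exact LD_pow (LD_one_sub _ _ le_rfl) _
    intro m hm
    have h0 : coeff 0 (G : PowerSeries O) = coeff 0 (G' : PowerSeries O) := by
      rw [Polynomial.coeff_coe, Polynomial.coeff_coe, Polynomial.coeff_zero_eq_eval_zero,
        Polynomial.coeff_zero_eq_eval_zero, hG, hG']
      simp only [Polynomial.eval_prod, Polynomial.eval_pow, Polynomial.eval_sub, Polynomial.eval_one,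
        Polynomial.eval_mul, Polynomial.eval_C, Polynomial.eval_X]
      rw [Finset.prod_eq_one]
      · simp
      · intro j _
        refine Finset.prod_eq_one fun x hx => ?_
        rw [zero_pow (Nat.mul_pos (hIpos x hx).1 (hIpos x hx).2).ne']
        simp
    have key := LD_compare hLG hLG' h0 ((p : O) ^ M) (N - 1) ?_ m (by omega)
    · rw [Polynomial.coeff_coe, Polynomial.coeff_coe, ← Polynomial.coeff_sub] at key
      apply hv
      refine dvd_trans (pow_dvd_pow_of_dvd D.l_dvd_p _) (key.trans ?_)
      exact mul_dvd_mul_right (by exact_mod_cast Nat.cast_dvd_cast (Nat.factorial_dvd_factorial hm.le)) _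
    · intro m h1 h2
      simp only [one_dvd, if_true, one_pow, Nat.cast_one, mul_one, mul_neg, sub_neg_eq_add]
      have hsum : ∀ j, (p : O) ^ M ∣ (∑ x ∈ I, (c x : O) *
        (if x.1 * x.2 ∣ m then -((x.1 * x.2 : ℕ) : O) * (τ ^ (x.2 * p ^ j)) ^ (m / (x.1 * x.2)) else 0)) +
         τ ^ (p ^ (j + m.factorization p)) := by
        intro j
        have hmc := moebius_core (p := p) N m h1 (by omega) (fun i => τ ^ (p ^ j * (m / i)))
        have e1 : τ ^ (p ^ (j + m.factorization p)) = τ ^ (p ^ j * (m / (m / p ^ m.factorization p))) := by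
          rw [Nat.div_div_self (Nat.ordProj_dvd m p) (by omega), pow_add]
        rw [e1, ← hmc, ← Finset.sum_add_distrib]
        refine Finset.dvd_sum fun x hx => ?_
        by_cases hxm : x.1 * x.2 ∣ m
        · rw [if_pos hxm, if_pos hxm]
          obtain ⟨r, hr⟩ := hc x (Finset.mem_filter.1 hx).2
          have hr' := congrArg (Int.cast : ℤ → O) hr
          push_cast at hr'
          obtain ⟨y, hy⟩ := hxm
          have hp1 := (hIpos x hx).1
          have hp2 := (hIpos x hx).2
          have e2 : (τ ^ (x.2 * p ^ j)) ^ (m / (x.1 * x.2)) = τ ^ (p ^ j * (m / x.1)) := by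
            rw [← pow_mul, hy, Nat.mul_div_cancel_left _ (Nat.mul_pos hp1 hp2), mul_assoc x.1,
              Nat.mul_div_cancel_left _ hp1]
            congr 1; ring
          rw [e2]
          refine ⟨- (r : O) * τ ^ (p ^ j * (m / x.1)), ?_⟩
          push_cast
          linear_combination (- τ ^ (p ^ j * (m / x.1))) * hr'
        · rw [if_neg hxm, if_neg hxm]; simp
      have hperm : ∀ w : ℕ, ∑ j ∈ Finset.range d, τ ^ p ^ (j + w) = ∑ j ∈ Finset.range d, τ ^ p ^ j := by
        intro w
        induction w with
        | zero => rfl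
        | succ w ih =>
          rw [← ih]
          have h3 := Finset.sum_range_succ (fun j => τ ^ p ^ (j + w)) d
          rw [Finset.sum_range_succ'] at h3
          have h4 : τ ^ p ^ (d + w) = τ ^ p ^ (0 + w) := by
            rw [pow_add, pow_mul, hτd, zero_add]
          rw [h4] at h3
          have := add_right_cancel h3
          rw [← this]
          refine Finset.sum_congr rfl fun j _ => by congr 2; ring
      have h5 := Finset.dvd_sum (s := Finset.range d) (fun j _ => hsum j)
      rw [Finset.sum_add_distrib, hperm] at h5
      have := dvd_sub h5 ht
      convert this using 1
      ring

end Split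
end part5

section part6
set_option linter.unusedSectionVars false
set_option linter.style.haveILetI false
section Tor1
open PowerSeries

variable {p : ℕ} [Fact p.Prime]

lemma tr_spec (d : ℕ) (z : Omg p) (hz : z ^ p ^ d = z) :
    algebraMap (ZMod p) (Omg p) (traceZmod p d z) = ∑ j ∈ Finset.range d, z ^ p ^ j := by
  obtain ⟨u, hu⟩ := fix_zmod (∑ j ∈ Finset.range d, z ^ p ^ j) (by
    have h2 := Finset.sum_range_succ (fun j => z ^ p ^ j) d
    rw [Finset.sum_range_succ', hz, pow_zero, pow_one] at h2
    rw [sum_pow_char]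
    refine Eq.trans (Finset.sum_congr rfl fun j _ => ?_) (add_right_cancel h2)
    rw [← pow_mul, pow_succ])
  rw [traceZmod, ← hu, Function.leftInverse_invFun (algebraMap (ZMod p) (Omg p)).injective]

def psi (p : ℕ) [Fact p.Prime] (d : ℕ) (z : Omg p) : Rp p := zt p ^ (traceZmod p d z).val

lemma psi_congr (d d' : ℕ) (z z' : Omg p) (h : ∑ j ∈ Finset.range d, z ^ p ^ j =
    ∑ j ∈ Finset.range d', z' ^ p ^ j) : psi p d z = psi p d' z' := by
  rw [psi, psi, traceZmod, traceZmod, h]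

lemma psi_add (d : ℕ) (z z' : Omg p) (hz : z ^ p ^ d = z) (hz' : z' ^ p ^ d = z') :
    psi p d (z + z') = psi p d z * psi p d z' := by
  have h : traceZmod p d (z + z') = traceZmod p d z + traceZmod p d z' := by
    apply (algebraMap (ZMod p) (Omg p)).injective
    rw [map_add, tr_spec d z hz, tr_spec d z' hz', tr_spec d _ (by rw [add_pow_char_pow, hz, hz']),
      ← Finset.sum_add_distrib]
    exact Finset.sum_congr rfl fun j _ => add_pow_char_pow _ _ _ _
  rw [psi, psi, psi, h, ZMod.val_add, ← pow_add]
  exact (pow_eq_pow_mod _ zt_prim.pow_eq_one).symm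

lemma psi_sum {κ : Type*} (I : Finset κ) (d : ℕ) (z : κ → Omg p) (hz : ∀ i ∈ I, z i ^ p ^ d = z i) :
    psi p d (∑ i ∈ I, z i) = ∏ i ∈ I, psi p d (z i) := by
  induction I using Finset.induction_on with
  | empty =>
    simp only [Finset.sum_empty, Finset.prod_empty]
    have h : traceZmod p d 0 = 0 := by
      apply (algebraMap (ZMod p) (Omg p)).injective
      rw [tr_spec d 0 (by simp [(Fact.out : p.Prime).ne_zero]), map_zero]
      exact Finset.sum_eq_zero fun j _ => by simp [(Fact.out : p.Prime).ne_zero]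
    rw [psi, h]; simp
  | insert a I ha ih =>
    rw [Finset.sum_insert ha, Finset.prod_insert ha, psi_add, ih]
    · exact fun i hi => hz i (Finset.mem_insert_of_mem hi)
    · exact hz a (Finset.mem_insert_self _ _)
    · rw [sum_pow_char_pow]
      exact Finset.sum_congr rfl fun i hi => hz i (Finset.mem_insert_of_mem hi)

lemma sum_blocks (a E : ℕ) (z : Omg p) : ∑ j ∈ Finset.range (a * E), z ^ p ^ j =
    ∑ i ∈ Finset.range a, (∑ l ∈ Finset.range E, z ^ (p ^ a) ^ l) ^ p ^ i := by
  induction E with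
  | zero => simp [(Fact.out : p.Prime).ne_zero]
  | succ E ih =>
    rw [mul_add, mul_one, Finset.sum_range_add, ih, ← Finset.sum_add_distrib]
    refine Finset.sum_congr rfl fun i _ => ?_
    rw [Finset.sum_range_succ, add_pow_char_pow, pow_add, ← pow_mul p, pow_mul z]

lemma exists_b (q E : ℕ) (hq : 2 ≤ q) (hE : 1 ≤ E) : ∃ b : Omg p, ∑ i ∈ Finset.range E, b ^ q ^ i = 1 := by
  obtain ⟨E, rfl⟩ : ∃ e, E = e + 1 := ⟨E - 1, by omega⟩
  set f : Polynomial (Omg p) := ∑ i ∈ Finset.range (E + 1), Polynomial.X ^ q ^ i - Polynomial.C 1 with hf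
  have hc : f.coeff (q ^ E) = 1 := by
    have hq0 : q ^ E ≠ 0 := pow_ne_zero _ (by omega)
    rw [hf, Polynomial.coeff_sub, Polynomial.finsetSum_coeff, Polynomial.coeff_C, if_neg hq0,
      sub_zero, Finset.sum_eq_single E]
    · simp
    · intro i hi hne
      rw [Polynomial.coeff_X_pow, if_neg]
      intro h
      exact hne (Nat.pow_right_injective hq h).symm
    · simp
  have hdeg : f.degree ≠ 0 := by
    intro h
    have h2 : f.degree < (q ^ E : ℕ) := by rw [h]; exact_mod_cast Nat.pos_of_ne_zero (pow_ne_zero _ (by omega))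
    rw [Polynomial.coeff_eq_zero_of_degree_lt h2] at hc
    exact zero_ne_one hc
  obtain ⟨b, hb⟩ := IsAlgClosed.exists_root f hdeg
  refine ⟨b, ?_⟩
  rw [Polynomial.IsRoot, hf] at hb
  simpa [Polynomial.eval_finsetSum, sub_eq_zero] using hb

lemma psi_key (a E m : ℕ) (b h : Omg p)
    (hb : ∑ i ∈ Finset.range E, b ^ (p ^ a) ^ i = 1) (hh : h ^ (p ^ a) ^ m = h)
    (hfix : ∀ l, (b * h ^ (p ^ a) ^ l) ^ p ^ (a * E) = b * h ^ (p ^ a) ^ l) :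
    ∏ l ∈ Finset.range m, psi p (a * E) (b * h ^ (p ^ a) ^ l) = psi p (a * m) h := by
  rw [← psi_sum _ _ _ (fun l _ => hfix l), ← Finset.mul_sum]
  apply psi_congr
  rw [sum_blocks, sum_blocks]
  set y := ∑ l ∈ Finset.range m, h ^ (p ^ a) ^ l with hy
  have hyq : y ^ p ^ a = y := by
    have h2 := Finset.sum_range_succ (fun j => h ^ (p ^ a) ^ j) m
    rw [Finset.sum_range_succ', hh, pow_zero, pow_one] at h2
    rw [hy, sum_pow_char_pow]
    rw [← add_right_cancel h2]
    refine Finset.sum_congr rfl fun j _ => ?_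
    rw [← pow_mul, pow_succ]
  have hyl : ∀ l, y ^ (p ^ a) ^ l = y := by
    intro l
    induction l with
    | zero => simp
    | succ l ih => rw [pow_succ, pow_mul, ih, hyq]
  refine Finset.sum_congr rfl fun i _ => ?_
  congr 1
  simp only [mul_pow, hyl]
  rw [← Finset.sum_mul, hb, one_mul]

end Tor1

section LDmap
open PowerSeries
variable {A : Type*} [CommRing A]

lemma LD_inv {f g : PowerSeries A} {s : ℕ → A} (hf : LD f s) (h : f * g = 1) :
    LD g (fun m => - s m) := by
  unfold LD at *
  have h1 := congrArg (PowerSeries.derivative A) h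
  rw [Derivation.leibniz, hf, Derivation.map_one_eq_zero] at h1
  simp only [smul_eq_mul] at h1
  have h2 : (PowerSeries.mk (fun m => - s (m + 1))) = - PowerSeries.mk (fun m => s (m + 1)) := by
    ext; simp
  rw [h2]
  linear_combination (g) * h1 + (- PowerSeries.derivative A g - g * PowerSeries.mk (fun m => s (m + 1))) * h

lemma exists_LD_map {X : Type*} [Fintype X] (σ : X → X) (g : X → A) :
    ∃ L : PowerSeries A, coeff 0 L = 1 ∧
      LD L (fun m => ∑ x, if σ^[m] x = x then ∏ l ∈ Finset.range m, g (σ^[l] x) else 0) := by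
  set W : Matrix X X A := Matrix.of fun x y => if σ x = y then g x else 0 with hW
  have hWm : ∀ (m : ℕ) (x y : X), (W ^ m) x y = if σ^[m] x = y then ∏ l ∈ Finset.range m, g (σ^[l] x) else 0 := by
    intro m
    induction m with
    | zero => intro x y; rw [pow_zero, Matrix.one_apply, Finset.range_zero, Finset.prod_empty, Function.iterate_zero, id]
    | succ m ih =>
      intro x y
      rw [pow_succ', Matrix.mul_apply, Finset.sum_eq_single (σ x)]
      · rw [ih, hW, Matrix.of_apply, if_pos rfl, Finset.prod_range_succ', Function.iterate_succ_apply,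
          mul_ite, mul_zero, mul_comm]
        rfl
      · intro z _ hz
        rw [hW, Matrix.of_apply, if_neg (Ne.symm hz), zero_mul]
      · simp
  set f := detP W with hf
  have hu : IsUnit f := by
    rw [PowerSeries.isUnit_iff_constantCoeff, ← PowerSeries.coeff_zero_eq_constantCoeff_apply,
      coeff_zero_detP]
    exact isUnit_one
  obtain ⟨g', hg'⟩ := hu.exists_right_inv
  refine ⟨g', ?_, ?_⟩
  · have := congrArg (coeff 0) hg'
    rw [PowerSeries.coeff_mul] at this
    simpa [-coeff_zero_eq_constantCoeff, coeff_zero_detP, hf] using this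
  · refine LD_congr (LD_inv (LD_detP W) hg') ?_
    intro m _
    rw [neg_neg, Matrix.trace]
    refine Finset.sum_congr rfl fun x _ => ?_
    rw [Matrix.diag_apply, hWm]

lemma LD_glue [IsDomain A] [CharZero A] (S : ℕ → A) (h : ∀ M : ℕ, ∃ (L : PowerSeries A) (s : ℕ → A),
    coeff 0 L = 1 ∧ LD L s ∧ ∀ m, 1 ≤ m → m ≤ M → s m = S m) :
    ∃ L : PowerSeries A, coeff 0 L = 1 ∧ LD L S := by
  choose L s h0 hL hs using h
  have hco : ∀ M m, m ≤ M → coeff m (L M) = coeff m (L m) := by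
    intro M m hm
    refine LD_unique (hL M) (hL m) (by rw [h0, h0]) m ?_ m le_rfl
    intro i h1 h2
    rw [hs M i h1 (by omega), hs m i h1 h2]
  refine ⟨PowerSeries.mk fun m => coeff m (L m), ?_, ?_⟩
  · rw [PowerSeries.coeff_mk, h0]
  · apply LD_of_coeff
    intro m
    rw [PowerSeries.coeff_mk, LD_coeff (hL (m + 1))]
    refine Finset.sum_congr rfl fun x hx => ?_
    have := Finset.HasAntidiagonal.mem_antidiagonal.1 hx
    rw [PowerSeries.coeff_mk, hco (m+1) x.1 (by omega), hs _ _ (by omega) (by omega)]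

end LDmap
end part6

section part7
set_option linter.unusedSectionVars false
set_option linter.style.haveILetI false
section Tor2
variable {p : ℕ} [Fact p.Prime]

def mS (p : ℕ) [Fact p.Prime] (d : ℕ) : Finset (Omg p) := Polynomial.nthRootsFinset (p ^ d - 1) 1

lemma two_le_q {d : ℕ} (hd : 1 ≤ d) : 2 ≤ p ^ d :=
  le_trans (Fact.out : p.Prime).two_le (Nat.le_self_pow (by omega) p)

lemma mem_mS {d : ℕ} (hd : 1 ≤ d) {x : Omg p} : x ∈ mS p d ↔ x ≠ 0 ∧ x ^ p ^ d = x := by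
  have h2 := two_le_q (p := p) hd
  obtain ⟨e, he⟩ : ∃ e, p ^ d = e + 1 := ⟨p ^ d - 1, by omega⟩
  rw [mS, Polynomial.mem_nthRootsFinset (by omega), he, Nat.add_sub_cancel, pow_succ]
  constructor
  · intro h
    refine ⟨?_, by rw [h, one_mul]⟩
    rintro rfl
    rw [zero_pow (by omega)] at h
    exact zero_ne_one h
  · rintro ⟨h0, h⟩
    exact mul_right_cancel₀ h0 (h.trans (one_mul x).symm)

lemma exists_prim {d : ℕ} (hd : 1 ≤ d) : ∃ g : Omg p, IsPrimitiveRoot g (p ^ d - 1) := by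
  have h2 := two_le_q (p := p) hd
  haveI : NeZero ((p ^ d - 1 : ℕ) : Omg p) := ⟨by
    rw [Nat.cast_sub (by omega)]
    push_cast
    rw [CharP.cast_eq_zero, zero_pow (by omega)]
    simp⟩
  exact HasEnoughRootsOfUnity.exists_primitiveRoot (Omg p) (p ^ d - 1)

lemma card_mS {d : ℕ} (hd : 1 ≤ d) : (mS p d).card = p ^ d - 1 := by
  obtain ⟨g, hg⟩ := exists_prim (p := p) hd
  exact hg.card_nthRootsFinset

variable {O : Type} [CommRing O] [IsDomain O] (D : PD p O)

lemma psum {d : ℕ} (hd : 1 ≤ d) (w : ℤ) : ∑ x ∈ mS p d, D.τ (x ^ w) =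
    if ((p ^ d - 1 : ℕ) : ℤ) ∣ w then ((p ^ d - 1 : ℕ) : O) else 0 := by
  have h2 := two_le_q (p := p) hd
  have hmem : ∀ x : Omg p, x ∈ mS p d ↔ x ^ (p ^ d - 1) = 1 := fun x =>
    Polynomial.mem_nthRootsFinset (by omega) 1
  split_ifs with h
  · obtain ⟨e, rfl⟩ := h
    rw [Finset.sum_congr rfl (g := fun _ => (1 : O)), Finset.sum_const, card_mS hd, nsmul_one]
    intro x hx
    rw [zpow_mul, zpow_natCast, (hmem x).1 hx, one_zpow, map_one]
  · obtain ⟨g, hg⟩ := exists_prim (p := p) hd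
    have hg0 : g ≠ 0 := hg.ne_zero (by omega)
    have h1 : g ^ w ≠ 1 := fun h' => h ((hg.zpow_eq_one_iff_dvd w).1 h')
    have hS : ∑ x ∈ mS p d, D.τ (x ^ w) = D.τ (g ^ w) * ∑ x ∈ mS p d, D.τ (x ^ w) := by
      rw [Finset.mul_sum]
      symm
      refine Finset.sum_bij (fun x _ => g * x) ?_ ?_ ?_ ?_
      · intro x hx
        rw [hmem] at hx ⊢
        rw [mul_pow, hx, hg.pow_eq_one, one_mul]
      · intro x _ y _ hxy
        exact mul_left_cancel₀ hg0 hxy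
      · intro y hy
        refine ⟨g⁻¹ * y, ?_, by rw [mul_inv_cancel_left₀ hg0]⟩
        rw [hmem] at hy ⊢
        rw [mul_pow, hy, inv_pow, hg.pow_eq_one, inv_one, one_mul]
      · intro x _
        rw [mul_zpow, map_mul]
    have h3 : (1 - D.τ (g ^ w)) * ∑ x ∈ mS p d, D.τ (x ^ w) = 0 := by
      rw [sub_mul, one_mul]; exact sub_eq_zero.2 hS
    rcases mul_eq_zero.1 h3 with h4 | h4
    · exfalso
      apply h1
      apply D.τ_inj
      rw [map_one]
      exact (sub_eq_zero.1 h4).symm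
    · exact h4

variable {ι : Type} [Fintype ι] 

def Tor (ι : Type) [Fintype ι] (p : ℕ) [Fact p.Prime] (d : ℕ) : Finset (ι → Omg p) :=
  Fintype.piFinset fun _ => mS p d

lemma mem_Tor {d : ℕ} (hd : 1 ≤ d) {x : ι → Omg p} :
    x ∈ Tor ι p d ↔ ∀ i, x i ≠ 0 ∧ x i ^ p ^ d = x i := by
  simp only [Tor, Fintype.mem_piFinset, mem_mS hd]

def mono (x : ι → Omg p) (w : ι → ℤ) : Omg p := ∏ i, x i ^ w i

lemma mono_zero (x : ι → Omg p) : mono x 0 = 1 := by simp [mono]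

lemma mono_add {x : ι → Omg p} (hx : ∀ i, x i ≠ 0) (u v : ι → ℤ) :
    mono x (u + v) = mono x u * mono x v := by
  rw [mono, mono, mono, ← Finset.prod_mul_distrib]
  exact Finset.prod_congr rfl fun i _ => zpow_add₀ (hx i) _ _

lemma mono_nsmul (x : ι → Omg p) (m : ℕ) (u : ι → ℤ) : mono x (m • u) = mono x u ^ m := by
  rw [mono, mono, ← Finset.prod_pow]
  refine Finset.prod_congr rfl fun i _ => ?_
  rw [Pi.smul_apply, nsmul_eq_mul, mul_comm, zpow_mul, zpow_natCast]

lemma mono_pow (x : ι → Omg p) (m : ℕ) (u : ι → ℤ) : mono (fun i => x i ^ m) u = mono x u ^ m := by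
  rw [mono, mono, ← Finset.prod_pow]
  refine Finset.prod_congr rfl fun i _ => ?_
  rw [← zpow_natCast, ← zpow_natCast, ← zpow_mul, ← zpow_mul, mul_comm]

lemma mono_sum {x : ι → Omg p} (hx : ∀ i, x i ≠ 0) {κ : Type*} (I : Finset κ) (u : κ → ι → ℤ) :
    mono x (∑ k ∈ I, u k) = ∏ k ∈ I, mono x (u k) := by
  induction I using Finset.induction_on with
  | empty => simp [mono_zero]
  | insert a I ha ih => rw [Finset.sum_insert ha, Finset.prod_insert ha, mono_add hx, ih]

lemma mpsum {d : ℕ} (hd : 1 ≤ d) (w : ι → ℤ) : ∑ x ∈ Tor ι p d, D.τ (mono x w) =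
    if ∀ i, ((p ^ d - 1 : ℕ) : ℤ) ∣ w i then ((p ^ d - 1 : ℕ) : O) ^ Fintype.card ι else 0 := by
  have h1 : ∑ x ∈ Tor ι p d, D.τ (mono x w) = ∏ i, ∑ x ∈ mS p d, D.τ (x ^ w i) := by
    rw [Finset.prod_univ_sum]
    refine Finset.sum_congr rfl fun x _ => ?_
    rw [mono, map_prod]
  rw [h1]
  simp only [psum D hd]
  split_ifs with h
  · rw [Finset.prod_congr rfl (fun i _ => if_pos (h i)), Finset.prod_const, Finset.card_univ]
  · push Not at h
    obtain ⟨i, hi⟩ := h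
    exact Finset.prod_eq_zero (Finset.mem_univ i) (if_neg hi)

lemma expand (θ : Polynomial O) {κ : Type} [Fintype κ] [DecidableEq κ] (y : κ → O) :
    ∏ k, θ.eval (y k) = ∑ e ∈ Fintype.piFinset (fun _ : κ => Finset.range (θ.natDegree + 1)),
      ∏ k, (θ.coeff (e k) * y k ^ e k) := by
  rw [Finset.prod_congr rfl (fun k _ => Polynomial.eval_eq_sum_range (y k)), Finset.prod_univ_sum]

lemma exp_dvd {l : O} {θ : Polynomial O} (h : Good l θ) {κ : Type} [Fintype κ] (e : κ → ℕ) :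
    l ^ (∑ k, e k) ∣ ∏ k, θ.coeff (e k) := by
  rw [← Finset.prod_pow_eq_pow_sum]
  exact Finset.prod_dvd_prod_of_dvd _ _ fun k _ => h _

lemma prod_congr_dvd {κ : Type*} (I : Finset κ) (l : O) (f g : κ → O) (h : ∀ i ∈ I, l ∣ f i - g i) :
    l ∣ ∏ i ∈ I, f i - ∏ i ∈ I, g i := by
  induction I using Finset.induction_on with
  | empty => simp
  | insert a I ha ih =>
    rw [Finset.prod_insert ha, Finset.prod_insert ha]
    have h1 := h a (Finset.mem_insert_self _ _)
    have h2 := ih fun i hi => h i (Finset.mem_insert_of_mem hi)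
    have : f a * ∏ i ∈ I, f i - g a * ∏ i ∈ I, g i =
      (f a - g a) * ∏ i ∈ I, f i + g a * (∏ i ∈ I, f i - ∏ i ∈ I, g i) := by ring
    rw [this]
    exact dvd_add (Dvd.dvd.mul_right h1 _) (Dvd.dvd.mul_left h2 _)

/-- congruence of the additive character of a sum with a product of splitting functions -/
lemma psi_split {N : ℕ} {θ : Polynomial O} (hθ : ∀ d z, z ^ p ^ d = z →
      D.l ^ N ∣ (∏ j ∈ Finset.range d, θ.eval (D.τ z ^ p ^ j)) - D.φ (zt p) ^ (traceZmod p d z).val)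
    {J : Type} [Fintype J] (d : ℕ) (z : J → Omg p) (hz : ∀ j, z j ^ p ^ d = z j) :
    D.l ^ N ∣ (∏ j, ∏ i ∈ Finset.range d, θ.eval (D.τ (z j) ^ p ^ i)) - D.φ (psi p d (∑ j, z j)) := by
  rw [psi_sum _ _ _ (fun j _ => hz j), map_prod]
  apply prod_congr_dvd
  intro j _
  rw [psi, map_pow]
  exact hθ d _ (hz j)

end Tor2
end part7

section part8
set_option linter.unusedSectionVars false
set_option linter.style.haveILetI false
section Trace
variable {p : ℕ} [Fact p.Prime] {O : Type} [CommRing O] [IsDomain O] {ι : Type} [Fintype ι] {ε : Type}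

def GG (q : ℕ) (E : Finset ε) (wt : ε → ι → ℤ) (cf : ε → O) : ℕ → AddMonoidAlgebra O (ι → ℤ)
  | 0 => 1
  | m + 1 => (∑ e ∈ E, AddMonoidAlgebra.single (q ^ m • wt e) (cf e)) * GG q E wt cf m

variable (q : ℕ) (E : Finset ε) (wt : ε → ι → ℤ) (cf : ε → O)

lemma GG_succ (m : ℕ) (w : ι → ℤ) : (GG q E wt cf (m + 1)).coeff w =
    ∑ e ∈ E, cf e * (GG q E wt cf m).coeff (w - q ^ m • wt e) := by
  rw [GG, Finset.sum_mul, AddMonoidAlgebra.coeff_sum, Finsupp.finsetSum_apply]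
  refine Finset.sum_congr rfl fun e _ => ?_
  rw [AddMonoidAlgebra.coeff_single_mul_apply, neg_add_eq_sub]

lemma GG_supp (hq : 2 ≤ q) (b : ℤ) (hb0 : 0 ≤ b) (hb : ∀ e ∈ E, ∀ i, |wt e i| ≤ b) (m : ℕ) :
    ∀ (w : ι → ℤ), (GG q E wt cf m).coeff w ≠ 0 → ∀ i, |w i| + b ≤ (q : ℤ) ^ m * b := by
  induction m with
  | zero =>
    intro w hw i
    rw [GG, AddMonoidAlgebra.one_def, AddMonoidAlgebra.coeff_single, Finsupp.single_apply] at hw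
    have : w = 0 := by by_contra h; exact hw (if_neg (Ne.symm h))
    simp [this]
  | succ m ih =>
    intro w hw i
    rw [GG_succ] at hw
    obtain ⟨e, he, hne⟩ := Finset.exists_ne_zero_of_sum_ne_zero hw
    have h1 := ih _ (right_ne_zero_of_mul hne) i
    have h2 := hb e he i
    rw [Pi.sub_apply, Pi.smul_apply, nsmul_eq_mul] at h1
    push_cast at h1
    have h3 : |w i| ≤ |w i - (q : ℤ) ^ m * wt e i| + (q : ℤ) ^ m * |wt e i| := by
      calc |w i| = |(w i - (q : ℤ) ^ m * wt e i) + (q : ℤ) ^ m * wt e i| := by ring_nf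
        _ ≤ _ := abs_add_le _ _
        _ = _ := by rw [abs_mul, abs_of_nonneg (by positivity : (0:ℤ) ≤ (q : ℤ) ^ m)]
    have h4 : (q : ℤ) ^ m * |wt e i| ≤ (q : ℤ) ^ m * b := mul_le_mul_of_nonneg_left h2 (by positivity)
    have h5 : 2 * ((q : ℤ) ^ m * b) ≤ (q : ℤ) ^ (m + 1) * b := by
      have : (2 : ℤ) ≤ q := by exact_mod_cast hq
      have h6 : 0 ≤ (q : ℤ) ^ m * b := by positivity
      calc 2 * ((q : ℤ) ^ m * b) ≤ q * ((q : ℤ) ^ m * b) := mul_le_mul_of_nonneg_right this h6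
        _ = _ := by ring
    linarith

def Bx (ι : Type) [Fintype ι] (b : ℤ) : Finset (ι → ℤ) := Fintype.piFinset fun _ => Finset.Icc (-b) b

lemma mem_Bx {b : ℤ} {u : ι → ℤ} : u ∈ Bx ι b ↔ ∀ i, |u i| ≤ b := by
  simp only [Bx, Fintype.mem_piFinset, Finset.mem_Icc, abs_le]

def AA (b : ℤ) : Matrix (Bx ι b) (Bx ι b) O := Matrix.of fun u v =>
  ∑ e ∈ E, if wt e = q • (u : ι → ℤ) - v then cf e else 0

lemma AA_pow (hq : 2 ≤ q) (b : ℤ) (hb0 : 0 ≤ b) (hb : ∀ e ∈ E, ∀ i, |wt e i| ≤ b) (m : ℕ) :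
    ∀ u v : Bx ι b, (AA q E wt cf b ^ m) u v = (GG q E wt cf m).coeff (q ^ m • (u : ι → ℤ) - v) := by
  induction m with
  | zero =>
    intro u v
    rw [GG, AddMonoidAlgebra.one_def, AddMonoidAlgebra.coeff_single, Finsupp.single_apply, pow_zero,
      Matrix.one_apply, pow_zero, one_smul]
    by_cases h : u = v
    · subst h; simp
    · rw [if_neg h, if_neg]
      intro h2
      exact h (Subtype.ext (sub_eq_zero.1 h2.symm))
  | succ m ih =>
    intro u v
    rw [pow_succ', Matrix.mul_apply, GG_succ]
    simp only [ih]
    simp only [AA, Matrix.of_apply, Finset.sum_mul]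
    rw [Finset.sum_comm]
    refine Finset.sum_congr rfl fun e he => ?_
    have key : q ^ (m + 1) • (u : ι → ℤ) - v - q ^ m • wt e = q ^ m • (q • (u : ι → ℤ) - wt e) - v := by
      rw [smul_sub, smul_smul, pow_succ]; abel
    rw [key]
    by_cases hz : q • (u : ι → ℤ) - wt e ∈ Bx ι b
    · rw [Finset.sum_eq_single ⟨_, hz⟩]
      · rw [if_pos (by simp)]
      · intro z _ hne
        rw [if_neg, zero_mul]
        intro h
        apply hne
        apply Subtype.ext
        simp only
        rw [h]; simp
      · simp
    · have h0 : (GG q E wt cf m).coeff (q ^ m • (q • (u : ι → ℤ) - wt e) - v) = 0 := by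
        by_contra hne
        apply hz
        rw [mem_Bx]
        intro i
        have h1 := GG_supp q E wt cf hq b hb0 hb m _ hne i
        have h2 := mem_Bx.1 v.2 i
        set z := q • (u : ι → ℤ) - wt e with hzdef
        rw [Pi.sub_apply, Pi.smul_apply, nsmul_eq_mul] at h1
        push_cast at h1
        have h3 : (q : ℤ) ^ m * |z i| ≤ |(q : ℤ) ^ m * z i - (v : ι → ℤ) i| + |(v : ι → ℤ) i| := by
          calc (q : ℤ) ^ m * |z i| = |((q : ℤ) ^ m * z i - (v : ι → ℤ) i) + (v : ι → ℤ) i| := by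
                rw [sub_add_cancel, abs_mul, abs_of_nonneg (by positivity : (0:ℤ) ≤ (q : ℤ) ^ m)]
            _ ≤ _ := abs_add_le _ _
        have h4 : (0 : ℤ) < (q : ℤ) ^ m := by positivity
        exact le_of_mul_le_mul_left (by linarith) h4
      rw [h0, mul_zero]
      refine Finset.sum_eq_zero fun z _ => ?_
      rw [if_neg, zero_mul]
      intro h
      apply hz
      have : q • (u : ι → ℤ) - wt e = z := by rw [h]; simp
      rw [this]
      exact z.2

def evf (χ : (ι → ℤ) → O) (G : AddMonoidAlgebra O (ι → ℤ)) : O := G.coeff.sum fun w r => r * χ w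

lemma evf_GG (χ : (ι → ℤ) → O) (h0 : χ 0 = 1) (hadd : ∀ u v, χ (u + v) = χ u * χ v) (m : ℕ) :
    evf χ (GG q E wt cf m) = ∏ l ∈ Finset.range m, ∑ e ∈ E, cf e * χ (q ^ l • wt e) := by
  set X : Multiplicative (ι → ℤ) →* O := ⟨⟨fun w => χ w.toAdd, h0⟩, fun u v => hadd _ _⟩ with hX
  have hl : ∀ G, evf χ G = AddMonoidAlgebra.lift O O (ι → ℤ) X G := by
    intro G
    rw [AddMonoidAlgebra.lift_apply]
    rfl
  rw [hl]
  induction m with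
  | zero => simp [GG]
  | succ m ih =>
    rw [GG, map_mul, ih, Finset.prod_range_succ, mul_comm, map_sum]
    congr 1
    refine Finset.sum_congr rfl fun e _ => ?_
    rw [AddMonoidAlgebra.lift_single]
    rfl

lemma trace_formula (D : PD p O) (hq : 2 ≤ q) (b : ℤ) (hb0 : 0 ≤ b) (hb : ∀ e ∈ E, ∀ i, |wt e i| ≤ b)
    (m d : ℕ) (hd : 1 ≤ d) (hqd : q ^ m = p ^ d) :
    ∑ x ∈ Tor ι p d, evf (fun w => D.τ (mono x w)) (GG q E wt cf m) =
      ((p ^ d - 1 : ℕ) : O) ^ Fintype.card ι * (AA q E wt cf b ^ m).trace := by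
  have h2 := two_le_q (p := p) hd
  simp only [evf, Finsupp.sum]
  rw [Finset.sum_comm]
  simp only [← Finset.mul_sum, mpsum D hd, mul_ite, mul_zero]
  rw [Matrix.trace]
  simp only [Matrix.diag_apply, AA_pow q E wt cf hq b hb0 hb]
  rw [Finset.sum_coe_sort (Bx ι b) (fun u => (GG q E wt cf m).coeff (q ^ m • u - u)), ← Finset.sum_filter,
    ← Finset.sum_mul, mul_comm]
  congr 1
  have hn : ∀ u : ι → ℤ, q ^ m • u - u = (p ^ d - 1) • u := by
    intro u
    rw [hqd]
    ext i
    rw [Pi.sub_apply, Pi.smul_apply, Pi.smul_apply, nsmul_eq_mul, nsmul_eq_mul]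
    rw [Nat.cast_sub (by omega)]; push_cast; ring
  simp only [hn]
  have hinj : Function.Injective fun u : ι → ℤ => (p ^ d - 1) • u := by
    intro u v h
    ext i
    have := congrFun h i
    simp only [Pi.smul_apply, nsmul_eq_mul] at this
    have h3 : ((p ^ d - 1 : ℕ) : ℤ) ≠ 0 := by
      have : p ^ d - 1 ≠ 0 := by omega
      exact_mod_cast this
    exact mul_left_cancel₀ h3 this
  rw [← Finset.sum_image (s := Bx ι b) (g := fun u : ι → ℤ => (p ^ d - 1) • u)
    (f := fun w => (GG q E wt cf m).coeff w) (hinj.injOn)]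
  apply Finset.sum_subset
  · intro w hw
    rw [Finset.mem_filter, Finsupp.mem_support_iff] at hw
    choose u hu using hw.2
    rw [Finset.mem_image]
    refine ⟨u, ?_, by ext i; rw [hu i]; simp⟩
    rw [mem_Bx]
    intro i
    have h1 := GG_supp q E wt cf hq b hb0 hb m _ hw.1 i
    rw [hu i, abs_mul, Nat.abs_cast] at h1
    have h4 : ((p ^ d - 1 : ℕ) : ℤ) = (q : ℤ) ^ m - 1 := by
      rw [Nat.cast_sub (by omega), ← hqd]; push_cast; rfl
    have h5 : (0 : ℤ) < ((p ^ d - 1 : ℕ) : ℤ) := by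
      have : 0 < p ^ d - 1 := by omega
      exact_mod_cast this
    refine le_of_mul_le_mul_left ?_ h5
    rw [h4] at h1 ⊢
    linarith
  · intro w hw hnot
    rw [Finset.mem_image] at hw
    obtain ⟨u, hu, rfl⟩ := hw
    by_contra hne
    apply hnot
    rw [Finset.mem_filter, Finsupp.mem_support_iff]
    exact ⟨hne, fun i => ⟨u i, by simp⟩⟩

end Trace
end part8

section part9
set_option linter.unusedSectionVars false
set_option linter.style.haveILetI false
section KBsec
open PowerSeries
variable {O : Type} [CommRing O]

def KB (l : O) (c K : ℕ) (f : PowerSeries O) : Prop := ∀ j, l ^ (c * j - K) ∣ coeff j f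

lemma KB_mono {l : O} {c K K' : ℕ} {f : PowerSeries O} (h : KB l c K f) (hK : K ≤ K') : KB l c K' f :=
  fun j => (pow_dvd_pow l (by omega)).trans (h j)

lemma KB_one (l : O) (c : ℕ) : KB l c 0 (1 : PowerSeries O) := by
  intro j
  rw [PowerSeries.coeff_one]
  split_ifs with h
  · subst h; simp
  · exact dvd_zero _

lemma KB_mul {l : O} {c K K' : ℕ} {f g : PowerSeries O} (hf : KB l c K f) (hg : KB l c K' g) :
    KB l c (K + K') (f * g) := by
  intro j
  rw [PowerSeries.coeff_mul]
  refine Finset.dvd_sum fun x hx => ?_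
  have hx' := Finset.HasAntidiagonal.mem_antidiagonal.1 hx
  refine dvd_trans ?_ (mul_dvd_mul (hf x.1) (hg x.2))
  rw [← pow_add]
  apply pow_dvd_pow
  rw [← hx', mul_add]
  omega

lemma KB_pow {l : O} {c K : ℕ} {f : PowerSeries O} (hf : KB l c K f) (n : ℕ) : KB l c (n * K) (f ^ n) := by
  induction n with
  | zero => simpa using KB_one l c
  | succ n ih => rw [pow_succ]; exact KB_mono (KB_mul ih hf) (by rw [add_mul, one_mul])

lemma KB_prod {κ : Type*} (I : Finset κ) {l : O} {c : ℕ} {K : κ → ℕ} {f : κ → PowerSeries O}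
    (hf : ∀ i ∈ I, KB l c (K i) (f i)) : KB l c (∑ i ∈ I, K i) (∏ i ∈ I, f i) := by
  induction I using Finset.induction_on with
  | empty => simpa using KB_one l c
  | insert a I ha ih =>
    rw [Finset.prod_insert ha, Finset.sum_insert ha]
    exact KB_mul (hf a (by simp)) (ih fun i hi => hf i (by simp [hi]))

def SC (l : O) (c : ℕ) : Subring (PowerSeries O) where
  carrier := {f | KB l c 0 f}
  mul_mem' := fun h1 h2 => KB_mul h1 h2
  one_mem' := KB_one l c
  add_mem' := fun h1 h2 j => by rw [map_add]; exact dvd_add (h1 j) (h2 j)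
  zero_mem' := fun j => by rw [map_zero]; exact dvd_zero _
  neg_mem' := fun h1 j => by rw [map_neg]; exact (h1 j).neg_right

lemma det_bound [IsDomain O] {X' : Type} [Fintype X'] [DecidableEq X'] (l : O) (hl : l ≠ 0) (c : ℕ) (A : Matrix X' X' O)
    (bad : Finset X') (h : ∀ u ∉ bad, ∀ v, l ^ c ∣ A u v) : KB l c (c * bad.card) (detP A) := by
  set B : Matrix X' X' (PowerSeries O) := 1 - (X : PowerSeries O) • A.map (C (R := O)) with hB
  set w : X' → PowerSeries O := fun u => if u ∈ bad then C (l ^ c) else 1 with hw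
  have hmem : (Matrix.of fun i j => w i * B i j).det ∈ SC l c := by
    rw [Matrix.det_apply]
    refine Subring.sum_mem _ fun σ _ => ?_
    rw [Units.smul_def]
    refine Subring.zsmul_mem _ (Subring.prod_mem _ fun i _ => ?_) _
    intro j
    rw [Matrix.of_apply]
    have hBe : B (σ i) i = (if σ i = i then 1 else 0) - X * C (A (σ i) i) := by
      rw [hB, Matrix.sub_apply, Matrix.one_apply, Matrix.smul_apply, Matrix.map_apply, smul_eq_mul]
    rw [hBe, hw]
    simp only
    have hX : ∀ y : O, l ^ c ∣ y → KB l c 0 (X * C y : PowerSeries O) := by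
      intro y hy j
      cases j with
      | zero => simp
      | succ j =>
        rw [PowerSeries.coeff_succ_X_mul, PowerSeries.coeff_C]
        split_ifs with h0
        · subst h0; simpa using hy
        · exact dvd_zero _
    have h1 : KB l c 0 (if σ i = i then 1 else 0 : PowerSeries O) := by
      split_ifs
      · exact (SC l c).one_mem
      · exact (SC l c).zero_mem
    have hC : KB l c 0 (C (l ^ c) : PowerSeries O) := by
      intro j
      rw [PowerSeries.coeff_C]
      split_ifs with h0
      · subst h0; simp
      · exact dvd_zero _
    revert j
    change KB l c 0 _
    by_cases hb : σ i ∈ bad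
    · rw [if_pos hb, mul_sub, ← mul_assoc, mul_comm (C (l ^ c)) X, mul_assoc, ← map_mul]
      exact (SC l c).sub_mem (KB_mul hC h1) (hX _ (Dvd.intro _ rfl))
    · rw [if_neg hb, one_mul]
      exact (SC l c).sub_mem h1 (hX _ (h _ hb _))
  rw [Matrix.det_mul_column] at hmem
  have hwp : ∏ i, w i = C (l ^ (c * bad.card)) := by
    rw [hw, Finset.prod_ite_mem, Finset.univ_inter, Finset.prod_const, ← map_pow, ← pow_mul]
  rw [hwp] at hmem
  intro j
  have hj := hmem j
  rw [PowerSeries.coeff_C_mul, Nat.sub_zero] at hj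
  by_cases hle : c * bad.card ≤ c * j
  · obtain ⟨e, he⟩ := Nat.exists_eq_add_of_le hle
    rw [he, Nat.add_sub_cancel_left]
    rw [he, pow_add] at hj
    exact (mul_dvd_mul_iff_left (pow_ne_zero _ hl)).1 hj
  · rw [Nat.sub_eq_zero_of_le (by omega), pow_zero]; exact one_dvd _

lemma det_bound2 [IsDomain O] {X' : Type} [Fintype X'] [DecidableEq X'] (l : O) (hl : l ≠ 0) (c : ℕ) (A : Matrix X' X' O)
    (cd : X' → ℕ) (h : ∀ u v, l ^ (2 * cd u - 1) ∣ A u v * l ^ cd v) :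
    KB l c (c * (Finset.univ.filter fun u => cd u ≤ c).card) (detP A) := by
  have h2 : ∀ u v, ∃ y, A u v * l ^ cd v = l ^ cd u * y ∧ l ^ (cd u - 1) ∣ y := by
    intro u v
    obtain ⟨y, hy⟩ := h u v
    by_cases h0 : cd u = 0
    · exact ⟨A u v * l ^ cd v, by simp [h0], by simp [h0]⟩
    · refine ⟨l ^ (cd u - 1) * y, ?_, Dvd.intro _ rfl⟩
      rw [hy, ← mul_assoc, ← pow_add]
      congr 2
      omega
  choose A' hA' hdiv using h2
  have hdet : detP A = detP (Matrix.of A') := by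
    set Λ : Matrix X' X' (PowerSeries O) := Matrix.diagonal fun u => C (l ^ cd u) with hΛ
    have hΛ0 : Λ.det ≠ 0 := by
      rw [hΛ, Matrix.det_diagonal]
      refine Finset.prod_ne_zero_iff.2 fun u _ => ?_
      rw [Ne, map_eq_zero_iff _ (PowerSeries.C_injective)]
      exact pow_ne_zero _ hl
    have hcomm : (1 - (X : PowerSeries O) • A.map (C (R := O))) * Λ =
        Λ * (1 - (X : PowerSeries O) • (Matrix.of A').map (C (R := O))) := by
      rw [sub_mul, mul_sub, one_mul, mul_one]
      congr 1
      rw [Matrix.smul_mul, Matrix.mul_smul]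
      congr 1
      ext1 u v
      rw [hΛ, Matrix.mul_diagonal, Matrix.diagonal_mul, Matrix.map_apply, Matrix.map_apply,
        Matrix.of_apply, ← map_mul, ← map_mul, hA']
    have h3 := congrArg Matrix.det hcomm
    rw [Matrix.det_mul, Matrix.det_mul, mul_comm] at h3
    exact mul_left_cancel₀ hΛ0 h3
  rw [hdet]
  apply det_bound l hl
  intro u hu v
  rw [Finset.mem_filter] at hu
  simp only [Finset.mem_univ, true_and, not_le] at hu
  exact (pow_dvd_pow l (by omega)).trans (hdiv u v)

end KBsec

section Cdd
variable {ι : Type} [Fintype ι]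

def cdd (D0 : ℕ) (u : ι → ℤ) : ℕ := Finset.univ.sup fun i => (u i).natAbs ⌈/⌉ D0

lemma cdd_le_iff {D0 : ℕ} (hD : 0 < D0) (u : ι → ℤ) (n : ℕ) :
    cdd D0 u ≤ n ↔ ∀ i, |u i| ≤ (D0 : ℤ) * n := by
  rw [cdd, Finset.sup_le_iff]
  simp only [Finset.mem_univ, true_implies, ceilDiv_le_iff_le_mul hD]
  refine forall_congr' fun i => ?_
  rw [Int.abs_eq_natAbs]
  exact_mod_cast Iff.rfl

open PowerSeries in
lemma AA_KB {O : Type} [CommRing O] [IsDomain O] {ε : Type} (l : O) (hl : l ≠ 0) (q : ℕ) (hq : 2 ≤ q)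
    (E : Finset ε) (wt : ε → ι → ℤ) (cf : ε → O) (t : ε → ℕ) (D0 : ℕ) (hD : 0 < D0)
    (ht : ∀ e ∈ E, l ^ t e ∣ cf e) (hw : ∀ e ∈ E, ∀ i, |wt e i| ≤ (D0 : ℤ) * t e) (b : ℤ) (c : ℕ) (y : O) :
    KB l c (c * (Bx ι ((D0 : ℤ) * c)).card) (detP (y • AA q E wt cf b)) := by
  refine KB_mono (det_bound2 l hl c _ (fun u : Bx ι b => cdd D0 (u : ι → ℤ)) ?_) ?_
  · intro u v
    rw [Matrix.smul_apply, smul_eq_mul, mul_assoc]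
    apply Dvd.dvd.mul_left
    rw [AA, Matrix.of_apply, Finset.sum_mul]
    refine Finset.dvd_sum fun e he => ?_
    split_ifs with h
    · refine dvd_trans ?_ (mul_dvd_mul_right (ht e he) _)
      rw [← pow_add]
      apply pow_dvd_pow
      set T := t e + cdd D0 (v : ι → ℤ) with hT
      have hle : cdd D0 (u : ι → ℤ) ≤ (T + 1) / 2 := by
        rw [cdd_le_iff hD]
        intro i
        have h1 := hw e he i
        have h2 := (cdd_le_iff hD (v : ι → ℤ) _).1 le_rfl i
        rw [h, Pi.sub_apply, Pi.smul_apply, nsmul_eq_mul] at h1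
        have h3 : (q : ℤ) * |(u : ι → ℤ) i| ≤ |(q : ℤ) * (u : ι → ℤ) i - (v : ι → ℤ) i| + |(v : ι → ℤ) i| := by
          calc (q : ℤ) * |(u : ι → ℤ) i| = |((q : ℤ) * (u : ι → ℤ) i - (v : ι → ℤ) i) + (v : ι → ℤ) i| := by
                rw [sub_add_cancel, abs_mul, Nat.abs_cast]
            _ ≤ _ := abs_add_le _ _
        have h4 : 2 * |(u : ι → ℤ) i| ≤ (q : ℤ) * |(u : ι → ℤ) i| :=
          mul_le_mul_of_nonneg_right (by exact_mod_cast hq) (abs_nonneg _)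
        have h5 : 2 * |(u : ι → ℤ) i| ≤ (D0 : ℤ) * T := by
          rw [hT]; push_cast; rw [mul_add]; linarith
        have h6 : (T : ℤ) ≤ 2 * ((T + 1) / 2 : ℕ) := by
          have : T ≤ 2 * ((T + 1) / 2) := by omega
          exact_mod_cast this
        have h7 : (D0 : ℤ) * T ≤ D0 * (2 * ((T + 1) / 2 : ℕ)) := mul_le_mul_of_nonneg_left h6 (by positivity)
        linarith
      omega
    · simp
  · apply Nat.mul_le_mul_left
    refine Finset.card_le_card_of_injOn (fun u => (u : ι → ℤ)) ?_ Subtype.val_injective.injOn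
    intro u hu
    rw [Finset.mem_coe, Finset.mem_filter] at hu
    rw [Finset.mem_coe, mem_Bx]
    exact (cdd_le_iff hD _ _).1 hu.2

end Cdd
end part9

section part10
set_option linter.unusedSectionVars false
set_option linter.style.haveILetI false
section Hpad
open PowerSeries
variable {p : ℕ} [Fact p.Prime] {O : Type} [CommRing O] [IsDomain O] {ι : Type} [Fintype ι]

lemma sum_binom_split (r : ℕ) (T : O) (x : O) :
    ∑ i ∈ (Finset.range (r + 1)).filter (fun i => Even (r - i)), (r.choose i : O) * (x ^ i * T) -
    ∑ i ∈ (Finset.range (r + 1)).filter (fun i => ¬ Even (r - i)), (r.choose i : O) * (x ^ i * T) =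
    (x - 1) ^ r * T := by
  rw [sub_eq_add_neg x 1, add_pow, Finset.sum_mul,
    ← Finset.sum_filter_add_sum_filter_not (Finset.range (r + 1)) (fun i => Even (r - i)), sub_eq_add_neg,
    ← Finset.sum_neg_distrib]
  congr 1
  · refine Finset.sum_congr rfl fun i hi => ?_
    rw [Finset.mem_filter] at hi
    rw [hi.2.neg_one_pow]; ring
  · refine Finset.sum_congr rfl fun i hi => ?_
    rw [Finset.mem_filter] at hi
    rw [(Nat.not_even_iff_odd.1 hi.2).neg_one_pow]; ring

lemma hpad_tor (D : PD p O) (a : ℕ) (ha : 1 ≤ a) (S : ℕ → Rp p) (L : PowerSeries (Rp p))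
    (h0 : coeff 0 L = 1) (hL : LD L S) (D0 : ℕ) (hD : 0 < D0)
    (hyp : ∀ N : ℕ, ∃ (ε : Type) (E : Finset ε) (wt : ε → ι → ℤ) (cf : ε → O) (t : ε → ℕ),
      (∀ e ∈ E, D.l ^ t e ∣ cf e) ∧ (∀ e ∈ E, ∀ i, |wt e i| ≤ (D0 : ℤ) * t e) ∧
      ∀ m, 1 ≤ m → D.l ^ N ∣ D.φ (S m) -
        ∑ x ∈ Tor ι p (a * m), evf (fun w => D.τ (mono x w)) (GG (p ^ a) E wt cf m)) (c : ℕ) :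
    ∃ Kc : ℕ, ∀ N M : ℕ, ∃ U V : PowerSeries O, coeff 0 V = 1 ∧
      (∀ j, D.φ (lm p) ^ (c * j - Kc) ∣ coeff j U) ∧ (∀ j, D.φ (lm p) ^ (c * j - Kc) ∣ coeff j V) ∧
      ∀ j ≤ M, D.φ (lm p) ^ N ∣ coeff j (PowerSeries.map D.φ L * V - U) := by
  set r := Fintype.card ι with hr
  set K := c * (Bx ι ((D0 : ℤ) * c)).card with hK
  refine ⟨2 ^ r * K, fun N M => ?_⟩
  obtain ⟨v, hv⟩ := D.div M.factorial (Nat.factorial_ne_zero M)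
  obtain ⟨ε, E, wt, cf, t, h1, h2, h3⟩ := hyp (N + v)
  have hq := two_le_q (p := p) ha
  set b : ℤ := ∑ e ∈ E, (D0 : ℤ) * t e with hb
  have hb0 : 0 ≤ b := Finset.sum_nonneg fun e _ => by positivity
  have hbE : ∀ e ∈ E, ∀ i, |wt e i| ≤ b := fun e he i => (h2 e he i).trans
    (Finset.single_le_sum (f := fun e => (D0 : ℤ) * t e) (fun e _ => by positivity) he)
  set A := AA (p ^ a) E wt cf b with hA
  set Q : O := ((p ^ a : ℕ) : O) with hQ
  set F : Finset ℕ → PowerSeries O := fun I => ∏ i ∈ I, detP (Q ^ i • A) ^ r.choose i with hF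
  have hKB : ∀ I ⊆ Finset.range (r + 1), KB D.l c (2 ^ r * K) (F I) := by
    intro I hI
    refine KB_mono (KB_prod I fun i _ => KB_pow
      (AA_KB D.l D.l_ne (p ^ a) hq E wt cf t D0 hD h1 h2 b c (Q ^ i)) (r.choose i)) ?_
    rw [← Finset.sum_mul]
    refine Nat.mul_le_mul_right _ ?_
    rw [← Nat.sum_range_choose]
    exact Finset.sum_le_sum_of_subset hI
  have hc0 : ∀ I, coeff 0 (F I) = 1 := by
    intro I
    rw [PowerSeries.coeff_zero_eq_constantCoeff_apply, hF, map_prod]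
    refine Finset.prod_eq_one fun i _ => ?_
    rw [map_pow, ← PowerSeries.coeff_zero_eq_constantCoeff_apply, coeff_zero_detP, one_pow]
  have hLD : ∀ I, LD (F I) (fun m => ∑ i ∈ I, (r.choose i : O) * -((Q ^ m) ^ i * (A ^ m).trace)) := by
    intro I
    refine LD_congr (LD_prod I fun i _ => LD_pow (LD_detP (Q ^ i • A)) (r.choose i)) ?_
    intro m _
    refine Finset.sum_congr rfl fun i _ => ?_
    rw [smul_pow, Matrix.trace_smul, smul_eq_mul, ← pow_mul, ← pow_mul, mul_comm i m]
  set Ie := (Finset.range (r + 1)).filter (fun i => Even (r - i)) with hIe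
  set Io := (Finset.range (r + 1)).filter (fun i => ¬ Even (r - i)) with hIo
  refine ⟨F Io, F Ie, hc0 _, hKB _ (Finset.filter_subset _ _), hKB _ (Finset.filter_subset _ _), ?_⟩
  have hcmp := LD_compare (LD_mul (LD_map D.φ hL) (hLD Ie)) (hLD Io) (by
    rw [hc0, PowerSeries.coeff_zero_eq_constantCoeff_apply, map_mul,
      ← PowerSeries.coeff_zero_eq_constantCoeff_apply, ← PowerSeries.coeff_zero_eq_constantCoeff_apply,
      hc0, PowerSeries.coeff_map, h0, map_one, one_mul]) (D.l ^ (N + v)) M (by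
    intro m hm1 _
    have h4 := h3 m hm1
    have hd : 1 ≤ a * m := Nat.mul_pos ha hm1
    rw [trace_formula (p ^ a) E wt cf D hq b hb0 hbE m (a * m) hd (by rw [← pow_mul]), ← hr, ← hA] at h4
    have h5 := sum_binom_split r (A ^ m).trace (Q ^ m)
    have h6 : ((p ^ (a * m) - 1 : ℕ) : O) = Q ^ m - 1 := by
      have := two_le_q (p := p) hd
      rw [Nat.cast_sub (by omega), hQ, pow_mul]; push_cast; rfl
    rw [h6, ← h5] at h4
    convert h4 using 1
    simp only [mul_neg, Finset.sum_neg_distrib]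
    ring)
  intro j hj
  rw [map_sub]
  refine hv N _ ?_
  refine (hcmp j hj).trans (mul_dvd_mul_right ?_ _)
  exact_mod_cast Nat.cast_dvd_cast (Nat.factorial_dvd_factorial hj)

end Hpad
section TorData
variable {p : ℕ} [Fact p.Prime] {O : Type} [CommRing O] [IsDomain O] {ι J : Type} [Fintype ι] [Fintype J]

def Hval (c : J → Omg p) (μ : J → ι → ℤ) (x : ι → Omg p) : Omg p := ∑ j, c j * mono x (μ j)

def Ssum (p : ℕ) [Fact p.Prime] (c : J → Omg p) (μ : J → ι → ℤ) (d : ℕ) : Rp p :=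
  ∑ x ∈ Tor ι p d, psi p d (Hval c μ x)

lemma fix_mul {c : Omg p} {a : ℕ} (h : c ^ p ^ a = c) (m : ℕ) : c ^ p ^ (a * m) = c := by
  induction m with
  | zero => simp
  | succ m ih => rw [mul_add, mul_one, pow_add, pow_mul, ih, h]

lemma prod_blocks (a m : ℕ) (g : ℕ → O) : ∏ l ∈ Finset.range m, ∏ i : Fin a, g (i + a * l) =
    ∏ i ∈ Finset.range (a * m), g i := by
  induction m with
  | zero => simp
  | succ m ih =>
    rw [Finset.prod_range_succ, ih, mul_add, mul_one, Finset.prod_range_add,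
      Finset.prod_range (fun x => g (a * m + x))]
    congr 1
    exact Finset.prod_congr rfl fun i _ => by rw [add_comm]

lemma mono_fix {x : ι → Omg p} {d : ℕ} (hx : ∀ i, x i ^ p ^ d = x i) (u : ι → ℤ) :
    mono x u ^ p ^ d = mono x u := by
  rw [← mono_pow]; congr 1; funext i; exact hx i

lemma tor_data (D : PD p O) (a : ℕ) (ha : 1 ≤ a) (c : J → Omg p) (hc : ∀ j, c j ^ p ^ a = c j)
    (μ : J → ι → ℤ) : ∃ D0 : ℕ, 0 < D0 ∧ 
    ∀ N : ℕ, ∃ (ε : Type) (E : Finset ε) (wt : ε → ι → ℤ) (cf : ε → O) (t : ε → ℕ),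
      (∀ e ∈ E, D.l ^ t e ∣ cf e) ∧ (∀ e ∈ E, ∀ i, |wt e i| ≤ (D0 : ℤ) * t e) ∧
      ∀ m, 1 ≤ m → D.l ^ N ∣ D.φ (Ssum p c μ (a * m)) -
        ∑ x ∈ Tor ι p (a * m), evf (fun w => D.τ (mono x w)) (GG (p ^ a) E wt cf m) := by
  refine ⟨p ^ a * (∑ j, ∑ i, (μ j i).natAbs) + 1, Nat.succ_pos _, fun N => ?_⟩
  obtain ⟨θ, hg, hθ⟩ := splitting D N
  refine ⟨J × Fin a → ℕ, Fintype.piFinset (fun _ => Finset.range (θ.natDegree + 1)),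
    fun e => ∑ k, (e k * p ^ (k.2 : ℕ)) • μ k.1,
    fun e => ∏ k, (θ.coeff (e k) * (D.τ (c k.1) ^ p ^ (k.2 : ℕ)) ^ e k), fun e => ∑ k, e k, ?_, ?_, ?_⟩
  · intro e _
    beta_reduce
    rw [Finset.prod_mul_distrib]
    exact Dvd.dvd.mul_right (exp_dvd hg e) _
  · intro e _ i
    beta_reduce
    rw [Finset.sum_apply]
    refine (Finset.abs_sum_le_sum_abs _ _).trans ?_
    rw [Nat.cast_sum, Finset.mul_sum]
    refine Finset.sum_le_sum fun k _ => ?_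
    rw [Pi.smul_apply, nsmul_eq_mul, abs_mul, Nat.abs_cast]
    have h1 : (μ k.1 i).natAbs ≤ ∑ j, ∑ i, (μ j i).natAbs :=
      le_trans (Finset.single_le_sum (f := fun i => (μ k.1 i).natAbs) (fun _ _ => Nat.zero_le _) (Finset.mem_univ i))
        (Finset.single_le_sum (f := fun j => ∑ i, (μ j i).natAbs) (fun _ _ => Nat.zero_le _) (Finset.mem_univ k.1))
    have h2 : p ^ (k.2 : ℕ) ≤ p ^ a := Nat.pow_le_pow_right (Fact.out : p.Prime).pos k.2.2.le
    have h3 : e k * p ^ (k.2 : ℕ) * (μ k.1 i).natAbs ≤ (p ^ a * (∑ j, ∑ i, (μ j i).natAbs) + 1) * e k := by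
      calc e k * p ^ (k.2 : ℕ) * (μ k.1 i).natAbs = p ^ (k.2 : ℕ) * (μ k.1 i).natAbs * e k := by ring
        _ ≤ p ^ a * (∑ j, ∑ i, (μ j i).natAbs) * e k := Nat.mul_le_mul_right _ (Nat.mul_le_mul h2 h1)
        _ ≤ _ := Nat.mul_le_mul_right _ (Nat.le_succ _)
    rw [Int.abs_eq_natAbs]
    exact_mod_cast h3
  · intro m hm
    have hd : 1 ≤ a * m := Nat.mul_pos ha hm
    rw [Ssum, map_sum, ← Finset.sum_sub_distrib]
    refine Finset.dvd_sum fun x hx => ?_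
    rw [mem_Tor hd] at hx
    have hz : ∀ j, (c j * mono x (μ j)) ^ p ^ (a * m) = c j * mono x (μ j) := fun j => by
      rw [mul_pow, fix_mul (hc j), mono_fix fun i => (hx i).2]
    have h1 := psi_split D hθ (a * m) (fun j => c j * mono x (μ j)) hz
    rw [dvd_sub_comm] at h1
    rw [Hval, evf_GG _ _ _ _ (fun w => D.τ (mono x w)) (by rw [mono_zero, map_one])
      (fun u v => by rw [mono_add fun i => (hx i).1, map_mul])]
    convert h1 using 2
    have hfac : ∀ l, ∑ e ∈ Fintype.piFinset (fun _ : J × Fin a => Finset.range (θ.natDegree + 1)),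
        (∏ k, (θ.coeff (e k) * (D.τ (c k.1) ^ p ^ (k.2 : ℕ)) ^ e k)) *
          D.τ (mono x ((p ^ a) ^ l • ∑ k, (e k * p ^ (k.2 : ℕ)) • μ k.1)) =
        ∏ j, ∏ i : Fin a, θ.eval (D.τ (c j * mono x (μ j)) ^ p ^ ((i : ℕ) + a * l)) := by
      intro l
      rw [← Fintype.prod_prod_type' (f := fun j (i : Fin a) => θ.eval (D.τ (c j * mono x (μ j)) ^ p ^ ((i : ℕ) + a * l))),
        expand]
      refine Finset.sum_congr rfl fun e _ => ?_
      rw [mono_nsmul, mono_sum fun i => (hx i).1, ← Finset.prod_pow, map_prod, ← Finset.prod_mul_distrib]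
      refine Finset.prod_congr rfl fun k _ => ?_
      rw [mono_nsmul, map_mul, mul_pow, mul_pow, mul_assoc]
      congr 2
      · rw [← map_pow, ← map_pow (D.τ) _ (p ^ ((k.2 : ℕ) + a * l)), add_comm, pow_add, pow_mul, fix_mul (hc k.1)]
      · rw [map_pow, map_pow]
        simp only [← pow_mul]
        congr 1
        rw [pow_add]; ring
    simp only [hfac]
    rw [Finset.prod_comm]
    exact Finset.prod_congr rfl fun j _ => prod_blocks a m (fun i => θ.eval (D.τ (c j * mono x (μ j)) ^ p ^ i))

end TorData
end part10

section part11
set_option linter.unusedSectionVars false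
set_option linter.style.haveILetI false
section TorRat
open PowerSeries
variable {p : ℕ} [Fact p.Prime] {ι J : Type} [Fintype ι] [Fintype J]

lemma Hval_pow (c : J → Omg p) {a : ℕ} (hc : ∀ j, c j ^ p ^ a = c j) (μ : J → ι → ℤ) (x : ι → Omg p) (l : ℕ) :
    Hval c μ (fun i => x i ^ (p ^ a) ^ l) = Hval c μ x ^ (p ^ a) ^ l := by
  rw [Hval, Hval, ← pow_mul, sum_pow_char_pow]
  refine Finset.sum_congr rfl fun j _ => ?_
  rw [mono_pow, mul_pow, fix_mul (hc j)]

lemma tor_L (a : ℕ) (ha : 1 ≤ a) (c : J → Omg p) (hc : ∀ j, c j ^ p ^ a = c j) (μ : J → ι → ℤ) :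
    ∃ L : PowerSeries (Rp p), coeff 0 L = 1 ∧ LD L (fun m => Ssum p c μ (a * m)) := by
  apply LD_glue
  intro M
  set E := M.factorial with hE
  have hE1 : 1 ≤ E := Nat.factorial_pos M
  obtain ⟨b, hb⟩ := exists_b (p := p) (p ^ a) E (two_le_q ha) hE1
  have hbfix : b ^ p ^ (a * E) = b := by
    have h1 : (∑ i ∈ Finset.range E, b ^ (p ^ a) ^ i) ^ p ^ a = 1 := by rw [hb, one_pow]
    rw [sum_pow_char_pow] at h1
    have h2 := Finset.sum_range_succ (fun j => b ^ (p ^ a) ^ j) E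
    rw [Finset.sum_range_succ', hb, pow_zero, pow_one] at h2
    have h3 : ∑ i ∈ Finset.range E, (b ^ (p ^ a) ^ i) ^ p ^ a = ∑ i ∈ Finset.range E, b ^ (p ^ a) ^ (i + 1) :=
      Finset.sum_congr rfl fun i _ => by rw [← pow_mul, pow_succ]
    rw [← h3, h1] at h2
    rw [pow_mul]
    exact (add_left_cancel h2).symm
  have hd : 1 ≤ a * E := Nat.mul_pos ha hE1
  have hfixpow : ∀ (x : Omg p) (l : ℕ), x ^ p ^ (a * E) = x → (x ^ (p ^ a) ^ l) ^ p ^ (a * E) = x ^ (p ^ a) ^ l := by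
    intro x l hx
    rw [← pow_mul, mul_comm, pow_mul, hx]
  set σ : (Tor ι p (a * E)) → (Tor ι p (a * E)) := fun x => ⟨fun i => x.1 i ^ p ^ a, by
    rw [mem_Tor hd]
    have hx := (mem_Tor hd).1 x.2
    intro i
    refine ⟨pow_ne_zero _ (hx i).1, ?_⟩
    have := hfixpow _ 1 (hx i).2
    simpa using this⟩ with hσ
  have hiter : ∀ l x, (σ^[l] x).1 = fun i => x.1 i ^ (p ^ a) ^ l := by
    intro l
    induction l with
    | zero => intro x; simp
    | succ l ih =>
      intro x
      rw [Function.iterate_succ_apply, ih]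
      funext i
      rw [hσ]
      simp only
      rw [← pow_mul, pow_succ']
  obtain ⟨L, hL0, hL⟩ := exists_LD_map σ (fun x => psi p (a * E) (b * Hval c μ x.1))
  refine ⟨L, _, hL0, hL, fun m hm hmM => ?_⟩
  have hdm : 1 ≤ a * m := Nat.mul_pos ha hm
  have hmE : m ∣ E := Nat.dvd_factorial hm hmM
  have hterm : ∀ x : Tor ι p (a * E), (if σ^[m] x = x then ∏ l ∈ Finset.range m,
      psi p (a * E) (b * Hval c μ (σ^[l] x).1) else 0) =
      (fun y => if y ∈ Tor ι p (a * m) then psi p (a * m) (Hval c μ y) else 0) x.1 := by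
    intro x
    have hx := (mem_Tor hd).1 x.2
    have hiff : σ^[m] x = x ↔ x.1 ∈ Tor ι p (a * m) := by
      rw [Subtype.ext_iff, hiter, mem_Tor hdm, funext_iff]
      refine forall_congr' fun i => ?_
      rw [pow_mul]
      exact ⟨fun h => ⟨(hx i).1, h⟩, fun h => h.2⟩
    by_cases h : x.1 ∈ Tor ι p (a * m)
    · rw [if_pos (hiff.2 h)]
      simp only [if_pos h]
      simp only [hiter, Hval_pow c hc μ]
      have hHfix : ∀ d, (∀ i, x.1 i ^ p ^ (a * d) = x.1 i) → Hval c μ x.1 ^ p ^ (a * d) = Hval c μ x.1 := by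
        intro d hxd
        rw [pow_mul, ← Hval_pow c hc μ]
        congr 1
        funext i
        rw [← pow_mul]; exact hxd i
      refine psi_key a E m b (Hval c μ x.1) hb ?_ ?_
      · rw [← pow_mul]; exact hHfix m fun i => ((mem_Tor hdm).1 h i).2
      · intro l
        rw [mul_pow, hbfix, hfixpow _ _ (hHfix E fun i => (hx i).2)]
    · rw [if_neg (fun h' => h (hiff.1 h'))]
      simp only [if_neg h]
  refine (Finset.sum_congr rfl fun x _ => (by convert hterm x)).trans ?_
  rw [Finset.sum_coe_sort (Tor ι p (a * E)) (fun y => if y ∈ Tor ι p (a * m) then psi p (a * m) (Hval c μ y) else 0),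
    ← Finset.sum_filter, Ssum]
  refine Finset.sum_congr ?_ fun _ _ => rfl
  ext x
  rw [Finset.mem_filter, and_iff_right_iff_imp, mem_Tor hdm, mem_Tor hd]
  intro hx i
  refine ⟨(hx i).1, ?_⟩
  obtain ⟨e, he⟩ := hmE
  rw [he, ← mul_assoc]
  exact fix_mul (hx i).2 e

lemma psi_norm (σ : CyclotomicField p ℚ →+* ℂ) (d : ℕ) (z : Omg p) : ‖σ (psi p d z : Rp p)‖ = 1 := by
  have h : (psi p d z) ^ p = 1 := by
    rw [psi, ← pow_mul, mul_comm, pow_mul, zt_prim.pow_eq_one, one_pow]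
  have h2 : (σ (psi p d z : Rp p)) ^ p = 1 := by
    rw [← map_pow, ← map_pow (algebraMap (Rp p) (CyclotomicField p ℚ)), h, map_one, map_one]
  exact Complex.norm_eq_one_of_pow_eq_one h2 (Fact.out : p.Prime).ne_zero

lemma Ssum_norm (σ : CyclotomicField p ℚ →+* ℂ) (c : J → Omg p) (μ : J → ι → ℤ) (a m : ℕ) (ha : 1 ≤ a) (hm : 1 ≤ m) :
    ‖σ (Ssum p c μ (a * m) : Rp p)‖ ≤ (((p ^ a) ^ Fintype.card ι : ℕ) : ℝ) ^ m := by
  rw [Ssum]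
  change ‖σ (algebraMap (Rp p) (CyclotomicField p ℚ) _)‖ ≤ _
  rw [map_sum, map_sum]
  refine (norm_sum_le _ _).trans ?_
  rw [Finset.sum_congr rfl fun x _ => psi_norm σ _ _, Finset.sum_const, nsmul_one, Tor, Fintype.card_piFinset,
    Finset.prod_const, card_mS (Nat.mul_pos ha hm), Finset.card_univ]
  have : (p ^ (a * m) - 1) ^ Fintype.card ι ≤ ((p ^ a) ^ Fintype.card ι) ^ m := by
    have h1 : ((p ^ a) ^ Fintype.card ι) ^ m = (p ^ (a * m)) ^ Fintype.card ι := by ring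
    rw [h1]
    exact Nat.pow_le_pow_left (Nat.sub_le _ _) _
  exact_mod_cast this

lemma LD_arch (σ : CyclotomicField p ℚ →+* ℂ) (L : PowerSeries (Rp p)) (S : ℕ → Rp p) (h0 : coeff 0 L = 1)
    (hL : LD L S) (B : ℝ) (hB : 0 ≤ B) (hS : ∀ m, 1 ≤ m → ‖σ (S m : Rp p)‖ ≤ B ^ m) (m : ℕ) :
    ‖σ (coeff m L : Rp p)‖ ≤ B ^ m := by
  induction m using Nat.strong_induction_on with
  | _ m ih =>
    cases m with
    | zero => rw [h0]; simp
    | succ m =>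
      have h1 := congrArg (fun y : Rp p => σ (y : CyclotomicField p ℚ)) (LD_coeff hL m)
      simp only [map_mul, map_sum, map_add, map_natCast, map_one] at h1
      have h2 : ‖σ (coeff (m + 1) L : Rp p)‖ * ((m : ℝ) + 1) ≤ ((m : ℝ) + 1) * B ^ (m + 1) := by
        have h3 : ‖((m : ℂ) + 1)‖ = (m : ℝ) + 1 := by
          rw [show ((m : ℂ) + 1) = ((m + 1 : ℕ) : ℂ) by push_cast; rfl, Complex.norm_natCast]; push_cast; rfl
        rw [← h3, ← norm_mul, h1, h3]
        refine (norm_sum_le _ _).trans ?_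
        refine (Finset.sum_le_card_nsmul _ _ (B ^ (m + 1)) fun x hx => ?_).trans ?_
        · have hx' := Finset.HasAntidiagonal.mem_antidiagonal.1 hx
          rw [norm_mul]
          refine (mul_le_mul (ih x.1 (by omega)) (hS (x.2 + 1) (by omega)) (norm_nonneg _) (by positivity)).trans ?_
          rw [← pow_add, ← add_assoc, hx']
        · rw [Finset.Nat.card_antidiagonal, nsmul_eq_mul]; push_cast; exact le_rfl
      have h4 : (0 : ℝ) < (m : ℝ) + 1 := by positivity
      rw [mul_comm] at h2
      exact le_of_mul_le_mul_left h2 h4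

def Rt {K : Type} [Field K] (s : ℕ → K) : Prop := ∃ (P Q : Polynomial K) (L : PowerSeries K), P.coeff 0 = 1 ∧
  Q.coeff 0 = 1 ∧ coeff 0 L = 1 ∧ LD L s ∧ (Q : PowerSeries K) * L = P

lemma tor_Rt (a : ℕ) (ha : 1 ≤ a) (c : J → Omg p) (hc : ∀ j, c j ^ p ^ a = c j) (μ : J → ι → ℤ) :
    Rt (fun m => algebraMap (Rp p) (CyclotomicField p ℚ) (Ssum p c μ (a * m))) := by
  obtain ⟨L, h0, hL⟩ := tor_L a ha c hc μ
  have hp2 := two_le_q (p := p) ha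
  obtain ⟨D0, hD0, hdata⟩ := tor_data (thePD p) a ha c hc μ
  obtain ⟨P, Q, hQ, hPQ⟩ := dwork_crit (thePD p).φ (lm p) lm_norm ((thePD p).desc) L
    ((p ^ a) ^ Fintype.card ι) (Nat.one_le_iff_ne_zero.2 (by positivity)) (fun σ m => LD_arch σ L _ h0 hL _ (by positivity)
      (fun m hm => Ssum_norm σ c μ a m ha hm) m)
    (hpad_tor (thePD p) a ha _ L h0 hL D0 hD0 hdata)
  set LK := PowerSeries.map (algebraMap (Rp p) (CyclotomicField p ℚ)) L with hLK
  have h0K : coeff 0 LK = 1 := by rw [hLK, PowerSeries.coeff_map, h0, map_one]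
  obtain ⟨Q1, hQ1, hX⟩ := Polynomial.exists_eq_pow_rootMultiplicity_mul_and_not_dvd Q hQ 0
  set k := Polynomial.rootMultiplicity 0 Q
  rw [map_zero, sub_zero] at hQ1 hX
  have hQ10 : Q1.coeff 0 ≠ 0 := fun h => hX (Polynomial.X_dvd_iff.2 h)
  have hPX : (Polynomial.X : Polynomial (CyclotomicField p ℚ)) ^ k ∣ P := by
    rw [Polynomial.X_pow_dvd_iff]
    intro d hd
    rw [← Polynomial.coeff_coe, ← hPQ, hQ1, Polynomial.coe_mul, Polynomial.coe_pow, Polynomial.coe_X, mul_assoc,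
      PowerSeries.coeff_X_pow_mul', if_neg (by omega)]
  obtain ⟨P1, hP1⟩ := hPX
  have h1 : (Q1 : PowerSeries (CyclotomicField p ℚ)) * LK = P1 := by
    rw [hQ1, hP1, Polynomial.coe_mul, Polynomial.coe_mul, Polynomial.coe_pow, Polynomial.coe_X, mul_assoc] at hPQ
    exact mul_left_cancel₀ (pow_ne_zero _ PowerSeries.X_ne_zero) hPQ
  have h2 : P1.coeff 0 = Q1.coeff 0 := by
    have := congrArg (coeff 0) h1
    rw [PowerSeries.coeff_zero_eq_constantCoeff_apply, map_mul, ← PowerSeries.coeff_zero_eq_constantCoeff_apply,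
      ← PowerSeries.coeff_zero_eq_constantCoeff_apply, h0K, mul_one, Polynomial.coeff_coe, Polynomial.coeff_coe] at this
    exact this.symm
  refine ⟨Polynomial.C (Q1.coeff 0)⁻¹ * P1, Polynomial.C (Q1.coeff 0)⁻¹ * Q1, LK, ?_, ?_, h0K, LD_map _ hL, ?_⟩
  · rw [Polynomial.coeff_C_mul, h2, inv_mul_cancel₀ hQ10]
  · rw [Polynomial.coeff_C_mul, inv_mul_cancel₀ hQ10]
  · rw [Polynomial.coe_mul, Polynomial.coe_mul, mul_assoc, h1]

variable {K : Type} [Field K]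

lemma Rt_add {s t : ℕ → K} (hs : Rt s) (ht : Rt t) : Rt (fun m => s m + t m) := by
  obtain ⟨P, Q, L, h1, h2, h3, h4, h5⟩ := hs
  obtain ⟨P', Q', L', h1', h2', h3', h4', h5'⟩ := ht
  refine ⟨P * P', Q * Q', L * L', ?_, ?_, ?_, LD_mul h4 h4', ?_⟩
  · rw [Polynomial.mul_coeff_zero, h1, h1', one_mul]
  · rw [Polynomial.mul_coeff_zero, h2, h2', one_mul]
  · rw [PowerSeries.coeff_zero_eq_constantCoeff_apply, map_mul, ← PowerSeries.coeff_zero_eq_constantCoeff_apply,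
      ← PowerSeries.coeff_zero_eq_constantCoeff_apply, h3, h3', one_mul]
  · rw [Polynomial.coe_mul, Polynomial.coe_mul, ← h5, ← h5']; ring

lemma Rt_zero : Rt (fun _ => (0 : K)) :=
  ⟨1, 1, 1, by simp, by simp, by simp, LD_one, by simp⟩

lemma Rt_sum {κ : Type*} (I : Finset κ) (s : κ → ℕ → K) (hs : ∀ i ∈ I, Rt (s i)) : Rt (fun m => ∑ i ∈ I, s i m) := by
  induction I using Finset.induction_on with
  | empty => simpa using Rt_zero
  | insert a I ha ih =>
    simp only [Finset.sum_insert ha]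
    exact Rt_add (hs a (by simp)) (ih fun i hi => hs i (by simp [hi]))

lemma Rt_neg {s : ℕ → K} (hs : Rt s) : Rt (fun m => - s m) := by
  obtain ⟨P, Q, L, h1, h2, h3, h4, h5⟩ := hs
  rw [PowerSeries.coeff_zero_eq_constantCoeff_apply] at h3
  have hm : L * L⁻¹ = 1 := PowerSeries.mul_inv_cancel L (by rw [h3]; exact one_ne_zero)
  refine ⟨Q, P, L⁻¹, h2, h1, ?_, LD_inv h4 hm, ?_⟩
  · rw [PowerSeries.coeff_zero_eq_constantCoeff_apply, PowerSeries.constantCoeff_inv, h3, inv_one]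
  · rw [← h5, mul_assoc, hm, mul_one]

end TorRat
end part11

section part12
set_option linter.unusedSectionVars false
set_option linter.style.haveILetI false
section Fine
variable {p : ℕ} [Fact p.Prime] {ι J : Type} [Fintype ι] [Fintype J] {s : ℕ}

lemma geo_cyc (q d : ℕ) [NeZero d] (i : Fin d) : ∑ l : Fin d, ((q : ℝ) ^ ((i + l : Fin d) : ℕ)) * ((q : ℝ) - 1) = (q : ℝ) ^ d - 1 := by
  rw [Fintype.sum_equiv (Equiv.addLeft i) (fun l : Fin d => ((q : ℝ) ^ ((i + l : Fin d) : ℕ)) * ((q : ℝ) - 1))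
    (fun l : Fin d => ((q : ℝ) ^ (l : ℕ)) * ((q : ℝ) - 1)) (fun _ => rfl), ← Finset.sum_mul, Fin.sum_univ_eq_sum_range (fun l => (q : ℝ) ^ l), geom_sum_mul]

lemma cyc_modEq (q d : ℕ) (hq : 1 ≤ q ^ d) [NeZero d] (i l : Fin d) : q ^ ((i + l : Fin d) : ℕ) ≡ q ^ (l : ℕ) * q ^ (i : ℕ) [MOD (q ^ d - 1)] := by
  rw [Fin.val_add, ← pow_add, add_comm (l : ℕ)]
  conv_rhs => rw [← Nat.mod_add_div ((i : ℕ) + l) d, pow_add, pow_mul]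
  have h1 : q ^ d ≡ 1 [MOD (q ^ d - 1)] := (Nat.modEq_iff_dvd' hq).2 dvd_rfl |>.symm
  have h2 := ((h1.pow (((i : ℕ) + l) / d)).mul_left (q ^ (((i : ℕ) + l) % d))).symm
  rwa [one_pow, mul_one] at h2

lemma fine_comb (q d : ℕ) [NeZero d] (hq : 2 ≤ q) (γ : J → Fin s → ℕ) (w : ℝ)
    (hW : ∀ r : J → ℝ, (∀ j, 0 ≤ r j) → ∀ u : Fin s → ℕ, (∀ z, 1 ≤ u z) →
      (∀ z, ∑ j, r j * γ j z = u z) → w ≤ ∑ j, r j)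
    (hpos : ∀ z, ∃ j, 1 ≤ γ j z) (e : J × Fin d → ℕ)
    (hdiv : ∀ z, (q ^ d - 1) ∣ ∑ k, e k * q ^ (k.2 : ℕ) * γ k.1 z) :
    (d : ℝ) * ((q : ℝ) - 1) * w ≤ ∑ k, (e k : ℝ) +
      ((q : ℝ) - 1) * d * (Finset.univ.filter fun z => ∑ k, e k * q ^ (k.2 : ℕ) * γ k.1 z = 0).card := by
  choose g hg using hpos
  set Z := Finset.univ.filter fun z => ∑ k, e k * q ^ (k.2 : ℕ) * γ k.1 z = 0 with hZ
  have hd : d ≠ 0 := NeZero.ne d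
  have hqd : 2 ≤ q ^ d := le_trans hq (Nat.le_self_pow hd q)
  have hQ : (0 : ℝ) < (q : ℝ) ^ d - 1 := by
    have : (2 : ℝ) ≤ (q : ℝ) ^ d := by exact_mod_cast hqd
    linarith
  have key : ∀ l : Fin d, w ≤ (∑ k, (e k : ℝ) * (q : ℝ) ^ ((k.2 + l : Fin d) : ℕ)) / ((q : ℝ) ^ d - 1) + Z.card := by
    intro l
    have hdl : ∀ z, (q ^ d - 1) ∣ ∑ k, e k * q ^ ((k.2 + l : Fin d) : ℕ) * γ k.1 z := by
      intro z
      have h1 : ∑ k, e k * q ^ ((k.2 + l : Fin d) : ℕ) * γ k.1 z ≡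
          ∑ k, e k * (q ^ (l : ℕ) * q ^ (k.2 : ℕ)) * γ k.1 z [MOD (q ^ d - 1)] :=
        Nat.ModEq.sum fun k _ => ((cyc_modEq q d (by omega) k.2 l).mul_left _).mul_right _
      refine (h1.dvd_iff dvd_rfl).2 ?_
      have h2 : ∑ k, e k * (q ^ (l : ℕ) * q ^ (k.2 : ℕ)) * γ k.1 z = q ^ (l : ℕ) * ∑ k, e k * q ^ (k.2 : ℕ) * γ k.1 z := by
        rw [Finset.mul_sum]; exact Finset.sum_congr rfl fun k _ => by ring
      rw [h2]; exact Dvd.dvd.mul_left (hdiv z) _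
    choose v hv using hdl
    have hrg : ∀ h : J → ℝ, ∑ j, ((∑ i : Fin d, (e (j, i) : ℝ) * (q : ℝ) ^ ((i + l : Fin d) : ℕ)) / ((q : ℝ) ^ d - 1) +
        ∑ z ∈ Z, if g z = j then (1 : ℝ) else 0) * h j =
        (∑ k : J × Fin d, (e k : ℝ) * (q : ℝ) ^ ((k.2 + l : Fin d) : ℕ) * h k.1) / ((q : ℝ) ^ d - 1) + ∑ z ∈ Z, h (g z) := by
      intro h
      simp only [add_mul, Finset.sum_add_distrib]
      congr 1
      · rw [Finset.sum_div, Fintype.sum_prod_type]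
        refine Finset.sum_congr rfl fun j _ => ?_
        rw [Finset.sum_div, Finset.sum_mul]
        refine Finset.sum_congr rfl fun i _ => by ring
      · simp only [Finset.sum_mul]
        rw [Finset.sum_comm]
        refine Finset.sum_congr rfl fun z _ => ?_
        simp
    have h1 := hW (fun j => (∑ i : Fin d, (e (j, i) : ℝ) * (q : ℝ) ^ ((i + l : Fin d) : ℕ)) / ((q : ℝ) ^ d - 1) +
        ∑ z ∈ Z, if g z = j then (1 : ℝ) else 0) (fun j => by
          refine add_nonneg (div_nonneg (Finset.sum_nonneg fun i _ => by positivity) hQ.le)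
            (Finset.sum_nonneg fun z _ => by split_ifs <;> norm_num))
        (fun z => v z + ∑ z' ∈ Z, γ (g z') z) ?_ ?_
    · have h2 := hrg (fun _ => 1)
      simp only [mul_one, Finset.sum_const, nsmul_eq_mul] at h2
      rw [h2] at h1
      exact h1
    · intro z
      by_cases hz : z ∈ Z
      · have : γ (g z) z ≤ ∑ z' ∈ Z, γ (g z') z := Finset.single_le_sum (f := fun z' => γ (g z') z) (fun _ _ => Nat.zero_le _) hz
        have := hg z
        omega
      · have hz' : ∑ k, e k * q ^ (k.2 : ℕ) * γ k.1 z ≠ 0 := by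
          intro h; exact hz (by rw [hZ, Finset.mem_filter]; exact ⟨Finset.mem_univ _, h⟩)
        have hv0 : v z ≠ 0 := by
          intro h0
          have h3 := hv z
          rw [h0, mul_zero, Finset.sum_eq_zero_iff] at h3
          apply hz'
          refine Finset.sum_eq_zero fun k hk => ?_
          have h4 := h3 k hk
          have h5 : ∀ m, q ^ m ≠ 0 := fun m => pow_ne_zero _ (by omega)
          simp only [mul_eq_zero, h5, or_false] at h4 ⊢
          exact h4
        omega
    · intro z
      rw [hrg (fun j => (γ j z : ℝ))]
      have h3 : ∑ k : J × Fin d, (e k : ℝ) * (q : ℝ) ^ ((k.2 + l : Fin d) : ℕ) * (γ k.1 z : ℝ) = ((q : ℝ) ^ d - 1) * v z := by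
        have := congrArg (Nat.cast : ℕ → ℝ) (hv z)
        rw [Nat.cast_mul, Nat.cast_sub (by omega)] at this
        push_cast at this
        exact this
      rw [h3, mul_div_cancel_left₀ _ hQ.ne']
      push_cast; rfl
  have hsum := Finset.sum_le_sum (s := Finset.univ) fun l _ => key l
  rw [Finset.sum_const, Finset.card_univ, Fintype.card_fin, nsmul_eq_mul, Finset.sum_add_distrib, Finset.sum_const,
    Finset.card_univ, Fintype.card_fin, nsmul_eq_mul, ← Finset.sum_div, Finset.sum_comm] at hsum
  have hq1 : (0 : ℝ) < (q : ℝ) - 1 := by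
    have : (2 : ℝ) ≤ q := by exact_mod_cast hq
    linarith
  have h6 : (∑ k : J × Fin d, ∑ l : Fin d, (e k : ℝ) * (q : ℝ) ^ ((k.2 + l : Fin d) : ℕ)) / ((q : ℝ) ^ d - 1) * ((q : ℝ) - 1)
      = ∑ k, (e k : ℝ) := by
    rw [div_mul_eq_mul_div, div_eq_iff hQ.ne', Finset.sum_mul, Finset.sum_mul]
    refine Finset.sum_congr rfl fun k _ => ?_
    rw [← geo_cyc q d k.2, Finset.mul_sum, Finset.sum_mul]
    exact Finset.sum_congr rfl fun l _ => by ring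
  have h7 := mul_le_mul_of_nonneg_right hsum hq1.le
  rw [add_mul, h6] at h7
  linarith

def Aff (s p : ℕ) [Fact p.Prime] (d : ℕ) : Finset (Fin s → Omg p) := Fintype.piFinset fun _ => insert 0 (mS p d)

def Asum (p : ℕ) [Fact p.Prime] (c : J → Omg p) (μ : J → ι → ℤ) (γ : J → Fin s → ℕ) (d : ℕ) : Rp p :=
  ∑ x ∈ Tor ι p d, ∑ t ∈ Aff s p d, psi p d (∑ j, c j * mono x (μ j) * ∏ z, t z ^ γ j z)

lemma mem_Aff {d : ℕ} (hd : 1 ≤ d) {t : Fin s → Omg p} : t ∈ Aff s p d ↔ ∀ z, t z ^ p ^ d = t z := by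
  rw [Aff, Fintype.mem_piFinset]
  refine forall_congr' fun z => ?_
  rw [Finset.mem_insert, mem_mS hd]
  constructor
  · rintro (h | h)
    · rw [h, zero_pow (by have := two_le_q (p := p) hd; omega)]
    · exact h.2
  · intro h
    by_cases h0 : t z = 0
    · exact Or.inl h0
    · exact Or.inr ⟨h0, h⟩

variable {O : Type} [CommRing O] [IsDomain O] (D : PD p O)

lemma aff1 {d : ℕ} (hd : 1 ≤ d) (u : ℕ) : ∑ t ∈ insert 0 (mS p d), D.τ (t ^ u) =
    if u = 0 then (p : O) ^ d else if (p ^ d - 1) ∣ u then ((p ^ d - 1 : ℕ) : O) else 0 := by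
  have h0 : (0 : Omg p) ∉ mS p d := fun h => ((mem_mS hd).1 h).1 rfl
  have h2 := two_le_q (p := p) hd
  have h1 := psum D hd (u : ℤ)
  simp only [zpow_natCast, Int.natCast_dvd_natCast] at h1
  rw [Finset.sum_insert h0, h1]
  by_cases hu : u = 0
  · rw [hu, if_pos rfl, if_pos (dvd_zero _), pow_zero, map_one, Nat.cast_sub (by omega)]
    push_cast; ring
  · rw [if_neg hu, zero_pow hu, D.τ_zero, zero_add]

lemma aff_dvd {d : ℕ} (hd : 1 ≤ d) (u : Fin s → ℕ) :
    (¬ ∀ z, (p ^ d - 1) ∣ u z) ∧ ∑ t ∈ Aff s p d, D.τ (∏ z, t z ^ u z) = 0 ∨ (∀ z, (p ^ d - 1) ∣ u z) ∧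
    D.l ^ ((p - 1) * d * (Finset.univ.filter fun z => u z = 0).card) ∣ ∑ t ∈ Aff s p d, D.τ (∏ z, t z ^ u z) := by
  have h1 : ∑ t ∈ Aff s p d, D.τ (∏ z, t z ^ u z) = ∏ z, ∑ t ∈ insert 0 (mS p d), D.τ (t ^ u z) := by
    rw [Finset.prod_univ_sum]
    exact Finset.sum_congr rfl fun t _ => by rw [map_prod]
  rw [h1]
  by_cases h : ∀ z, (p ^ d - 1) ∣ u z
  · right
    refine ⟨h, ?_⟩
    rw [pow_mul, ← Finset.prod_const]
    refine (Finset.prod_dvd_prod_of_dvd _ (fun z => ∑ t ∈ insert 0 (mS p d), D.τ (t ^ u z)) fun z hz => ?_).trans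
      (Finset.prod_dvd_prod_of_subset _ _ _ (Finset.subset_univ _))
    rw [Finset.mem_filter] at hz
    rw [aff1 D hd, if_pos hz.2, pow_mul]
    exact pow_dvd_pow_of_dvd D.assoc.dvd d
  · left
    refine ⟨h, ?_⟩
    push Not at h
    obtain ⟨z, hz⟩ := h
    refine Finset.prod_eq_zero (Finset.mem_univ z) ?_
    rw [aff1 D hd, if_neg hz, if_neg]
    intro h0; rw [h0] at hz; exact hz (dvd_zero _)

lemma fine_dvd (d : ℕ) (hd : 1 ≤ d) (c : J → Omg p) (hc : ∀ j, c j ^ p ^ d = c j) (μ : J → ι → ℤ)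
    (γ : J → Fin s → ℕ) (w : ℝ)
    (hW : ∀ r : J → ℝ, (∀ j, 0 ≤ r j) → ∀ u : Fin s → ℕ, (∀ z, 1 ≤ u z) →
      (∀ z, ∑ j, r j * γ j z = u z) → w ≤ ∑ j, r j)
    (hpos : ∀ z, ∃ j, 1 ≤ γ j z) (K : ℕ) (hK : (K : ℝ) < d * ((p : ℝ) - 1) * w + 1) :
    lm p ^ K ∣ Asum p c μ γ d := by
  haveI : NeZero d := ⟨by omega⟩
  set D := thePD p
  refine D.desc K _ ?_
  change D.l ^ K ∣ _
  obtain ⟨θ, hg, hθ⟩ := splitting D K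
  have hp := (Fact.out : p.Prime).two_le
  have hmain : D.l ^ K ∣ ∑ x ∈ Tor ι p d, ∑ t ∈ Aff s p d, ∏ j, ∏ i : Fin d,
      θ.eval (D.τ (c j * mono x (μ j) * ∏ z, t z ^ γ j z) ^ p ^ (i : ℕ)) := by
    refine Finset.dvd_sum fun x hx => ?_
    have hexp : ∀ t : Fin s → Omg p, ∏ j, ∏ i : Fin d, θ.eval (D.τ (c j * mono x (μ j) * ∏ z, t z ^ γ j z) ^ p ^ (i : ℕ)) =
        ∑ e ∈ Fintype.piFinset (fun _ : J × Fin d => Finset.range (θ.natDegree + 1)),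
          ((∏ k, θ.coeff (e k)) * ∏ k, D.τ (c k.1 * mono x (μ k.1)) ^ (p ^ (k.2 : ℕ) * e k)) *
            D.τ (∏ z, t z ^ (∑ k, e k * p ^ (k.2 : ℕ) * γ k.1 z)) := by
      intro t
      rw [← Fintype.prod_prod_type' (f := fun j (i : Fin d) => θ.eval (D.τ (c j * mono x (μ j) * ∏ z, t z ^ γ j z) ^ p ^ (i : ℕ))),
        expand]
      refine Finset.sum_congr rfl fun e _ => ?_
      have h1 : ∏ z, t z ^ (∑ k, e k * p ^ (k.2 : ℕ) * γ k.1 z) = ∏ k : J × Fin d, (∏ z, t z ^ γ k.1 z) ^ (p ^ (k.2 : ℕ) * e k) := by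
        simp only [← Finset.prod_pow_eq_pow_sum]
        rw [Finset.prod_comm]
        refine Finset.prod_congr rfl fun k _ => ?_
        rw [← Finset.prod_pow]
        refine Finset.prod_congr rfl fun z _ => ?_
        rw [← pow_mul]; congr 1; ring
      rw [h1, map_prod, ← Finset.prod_mul_distrib, ← Finset.prod_mul_distrib]
      refine Finset.prod_congr rfl fun k _ => ?_
      rw [map_mul, map_pow, ← pow_mul, mul_pow, mul_assoc]
    simp only [hexp]
    rw [Finset.sum_comm]
    refine Finset.dvd_sum fun e _ => ?_
    rw [← Finset.mul_sum]
    rcases aff_dvd D hd (fun z => ∑ k, e k * p ^ (k.2 : ℕ) * γ k.1 z) with ⟨_, h⟩ | ⟨h, h'⟩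
    · rw [h, mul_zero]; exact dvd_zero _
    · have h3 := fine_comb p d hp γ w hW hpos e h
      refine Dvd.dvd.trans ?_ (mul_dvd_mul (Dvd.dvd.mul_right (exp_dvd hg e) _) h')
      rw [← pow_add]
      refine pow_dvd_pow _ ?_
      have h4 : (K : ℝ) < ((∑ k, e k + (p - 1) * d * (Finset.univ.filter fun z => ∑ k, e k * p ^ (k.2 : ℕ) * γ k.1 z = 0).card + 1 : ℕ) : ℝ) := by
        push_cast [Nat.cast_sub (show 1 ≤ p by omega)]
        linarith
      exact Nat.lt_succ_iff.1 (by exact_mod_cast h4)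
  refine (dvd_iff_dvd_of_dvd_sub ?_).1 hmain
  rw [Asum, map_sum, ← Finset.sum_sub_distrib]
  refine Finset.dvd_sum fun x hx => ?_
  rw [map_sum, ← Finset.sum_sub_distrib]
  refine Finset.dvd_sum fun t ht => ?_
  rw [mem_Tor hd] at hx
  rw [mem_Aff hd] at ht
  have h1 := psi_split D hθ d (fun j => c j * mono x (μ j) * ∏ z, t z ^ γ j z) (fun j => by
    rw [mul_pow, mul_pow, hc, mono_fix fun i => (hx i).2, ← Finset.prod_pow]
    congr 1
    refine Finset.prod_congr rfl fun z _ => ?_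
    rw [← pow_mul, mul_comm, pow_mul, ht])
  convert h1 using 3
  exact Fin.prod_univ_eq_prod_range (fun i => θ.eval (D.τ (c _ * mono x (μ _) * ∏ z, t z ^ γ _ z) ^ p ^ i)) d

end Fine
end part12

section part13
set_option linter.unusedSectionVars false
set_option linter.style.haveILetI false
section AffSplit
variable {p : ℕ} [Fact p.Prime] {ι J : Type} [Fintype ι] [Fintype J] {s : ℕ}

def cZ (c : J → Omg p) (γ : J → Fin s → ℕ) (Z : Finset (Fin s)) : J → Omg p :=
  fun j => if ∀ z ∈ Z, γ j z = 0 then c j else 0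

def muZ (μ : J → ι → ℤ) (γ : J → Fin s → ℕ) (Z : Finset (Fin s)) : J → (ι ⊕ {z // z ∉ Z}) → ℤ :=
  fun j => Sum.elim (μ j) (fun z => (γ j z.1 : ℤ))

lemma Asum_split (c : J → Omg p) (μ : J → ι → ℤ) (γ : J → Fin s → ℕ) (d : ℕ) (hd : 1 ≤ d) :
    Asum p c μ γ d = ∑ Z : Finset (Fin s), Ssum p (cZ c γ Z) (muZ μ γ Z) d := by
  have h1 : ∀ x : ι → Omg p, ∑ t ∈ Aff s p d, psi p d (∑ j, c j * mono x (μ j) * ∏ z, t z ^ γ j z) =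
      ∑ Z : Finset (Fin s), ∑ t ∈ (Aff s p d).filter (fun t => Finset.univ.filter (fun z => t z = 0) = Z),
        psi p d (∑ j, c j * mono x (μ j) * ∏ z, t z ^ γ j z) := fun x =>
    (Finset.sum_fiberwise (Aff s p d) (fun t => Finset.univ.filter (fun z => t z = 0)) _).symm
  rw [Asum]
  simp only [h1]
  rw [Finset.sum_comm]
  refine Finset.sum_congr rfl fun Z _ => ?_
  rw [← Finset.sum_product', Ssum]
  have hz : ∀ t : Fin s → Omg p, Finset.univ.filter (fun z => t z = 0) = Z ↔ ∀ z, t z = 0 ↔ z ∈ Z := by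
    intro t
    rw [Finset.ext_iff]
    simp
  symm
  refine Finset.sum_bij' (fun y _ => (fun i => y (Sum.inl i), fun z => if h : z ∉ Z then y (Sum.inr ⟨z, h⟩) else 0))
    (fun xt _ => Sum.elim xt.1 (fun z => xt.2 z.1)) ?_ ?_ ?_ ?_ ?_
  · intro y hy
    rw [mem_Tor hd] at hy
    rw [Finset.mem_product, mem_Tor hd, Finset.mem_filter, mem_Aff hd, hz]
    refine ⟨fun i => hy _, fun z => ?_, fun z => ?_⟩
    · dsimp only
      split_ifs with h
      · exact zero_pow (by have := two_le_q (p := p) hd; omega)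
      · exact (hy _).2
    · dsimp only
      split_ifs with h
      · exact ⟨fun _ => h, fun _ => rfl⟩
      · exact ⟨fun h' => absurd h' (hy _).1, fun h' => absurd h' h⟩
  · intro xt hxt
    rw [Finset.mem_product, mem_Tor hd, Finset.mem_filter, mem_Aff hd, hz] at hxt
    rw [mem_Tor hd]
    rintro (i | z)
    · exact hxt.1 i
    · exact ⟨fun h => z.2 ((hxt.2.2 z.1).1 h), hxt.2.1 z.1⟩
  · intro y hy
    funext i
    rcases i with i | z
    · rfl
    · simp only [Sum.elim_inr]
      rw [dif_pos z.2]
  · intro xt hxt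
    rw [Finset.mem_product, mem_Tor hd, Finset.mem_filter, mem_Aff hd, hz] at hxt
    refine Prod.ext rfl (funext fun z => ?_)
    dsimp only
    split_ifs with h
    · exact ((hxt.2.2 z).2 h).symm
    · rfl
  · intro y hy
    rw [mem_Tor hd] at hy
    congr 1
    rw [Hval]
    refine Finset.sum_congr rfl fun j _ => ?_
    have h2 : mono y (muZ μ γ Z j) = mono (fun i => y (Sum.inl i)) (μ j) * ∏ z : {z // z ∉ Z}, y (Sum.inr z) ^ γ j z.1 := by
      rw [mono, Fintype.prod_sum_type]
      simp only [muZ, Sum.elim_inl, Sum.elim_inr, zpow_natCast]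
      rfl
    rw [h2, cZ]
    dsimp only
    split_ifs with h
    · rw [mul_assoc]
      congr 2
      rw [← Finset.prod_subset (Finset.subset_univ (Finset.univ.filter fun z => z ∉ Z)), ← Finset.prod_subtype_eq_prod_filter]
      · rw [Finset.subtype_univ]
        refine Finset.prod_congr rfl fun z _ => ?_
        rw [dif_pos z.2]
      · intro z _ hz'
        rw [Finset.mem_filter] at hz'
        have hzZ : z ∈ Z := by by_contra h'; exact hz' ⟨Finset.mem_univ _, h'⟩
        rw [h z hzZ, pow_zero]
    · push Not at h
      obtain ⟨z, hzZ, hz0⟩ := h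
      rw [zero_mul, Finset.prod_eq_zero (Finset.mem_univ z), mul_zero]
      rw [dif_neg (not_not.2 hzZ), zero_pow hz0]

lemma Rt_congr {K : Type} [Field K] {s t : ℕ → K} (h : ∀ m, 1 ≤ m → s m = t m) (hs : Rt s) : Rt t := by
  obtain ⟨P, Q, L, h1, h2, h3, h4, h5⟩ := hs
  exact ⟨P, Q, L, h1, h2, h3, LD_congr h4 h, h5⟩

lemma Asum_Rt (a : ℕ) (ha : 1 ≤ a) (c : J → Omg p) (hc : ∀ j, c j ^ p ^ a = c j) (μ : J → ι → ℤ) (γ : J → Fin s → ℕ) :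
    Rt (fun m => algebraMap (Rp p) (CyclotomicField p ℚ) (Asum p c μ γ (a * m))) := by
  have h := Rt_sum (Finset.univ : Finset (Finset (Fin s))) (fun Z m => algebraMap (Rp p) (CyclotomicField p ℚ)
    (Ssum p (cZ c γ Z) (muZ μ γ Z) (a * m))) (fun Z _ => tor_Rt a ha _ (fun j => by
      rw [cZ]; split_ifs
      · exact hc j
      · exact zero_pow (by have := two_le_q (p := p) ha; omega)) _)
  refine Rt_congr (fun m hm => ?_) h
  rw [Asum_split c μ γ _ (Nat.mul_pos ha hm), map_sum]

end AffSplit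
end part13

section part14
set_option linter.unusedSectionVars false
set_option linter.style.haveILetI false
section Factor
open PowerSeries

lemma fact_list (A : Polynomial ℂ) (h : A.coeff 0 = 1) : ∃ l : List ℂ, (∀ a ∈ l, a ≠ 0) ∧
    A = (l.map fun a => 1 - Polynomial.C a * Polynomial.X).prod := by
  obtain ⟨d, hd⟩ : ∃ d, A.natDegree = d := ⟨_, rfl⟩
  induction d generalizing A with
  | zero =>
    refine ⟨[], by simp, ?_⟩
    rw [Polynomial.eq_C_of_natDegree_eq_zero hd, h]; simp
  | succ d ih =>
    obtain ⟨r, hr⟩ := IsAlgClosed.exists_root A (by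
      intro h0
      rw [Polynomial.natDegree_eq_of_degree_eq_some h0] at hd
      simp at hd)
    have hr0 : r ≠ 0 := by
      rintro rfl
      rw [Polynomial.IsRoot, ← Polynomial.coeff_zero_eq_eval_zero, h] at hr
      exact one_ne_zero hr
    obtain ⟨B, hB⟩ := Polynomial.dvd_iff_isRoot.2 hr
    have hA : A = (1 - Polynomial.C r⁻¹ * Polynomial.X) * (Polynomial.C (-r) * B) := by
      rw [hB, show (1 - Polynomial.C r⁻¹ * Polynomial.X) * (Polynomial.C (-r) * B) =
        (Polynomial.C (r⁻¹ * r) * Polynomial.X - Polynomial.C r) * B by rw [Polynomial.C_mul, Polynomial.C_neg]; ring,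
        inv_mul_cancel₀ hr0]
      simp
    have hB0 : (Polynomial.C (-r) * B).coeff 0 = 1 := by
      have h2 := congrArg (fun P => Polynomial.coeff P 0) hA
      simp only [Polynomial.mul_coeff_zero] at h2
      rw [h] at h2
      simp only [Polynomial.mul_coeff_zero]
      simpa using h2.symm
    have hBd : (Polynomial.C (-r) * B).natDegree = d := by
      rw [Polynomial.natDegree_C_mul (neg_ne_zero.2 hr0)]
      have hBne : B ≠ 0 := by rintro rfl; simp at hB0
      rw [hB, Polynomial.natDegree_mul (Polynomial.X_sub_C_ne_zero r) hBne, Polynomial.natDegree_X_sub_C] at hd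
      omega
    obtain ⟨l, hl, hl'⟩ := ih _ hB0 hBd
    refine ⟨r⁻¹ :: l, ?_, ?_⟩
    · intro a ha
      rcases List.mem_cons.1 ha with rfl | h'
      · exact inv_ne_zero hr0
      · exact hl a h'
    · rw [List.map_cons, List.prod_cons, ← hl', ← hA]

lemma fact_fin (A : Polynomial ℂ) (h : A.coeff 0 = 1) : ∃ (R : ℕ) (α : Fin R → ℂ), (∀ i, α i ≠ 0) ∧
    A = ∏ i, (1 - Polynomial.C (α i) * Polynomial.X) := by
  obtain ⟨l, hl, hA⟩ := fact_list A h
  refine ⟨l.length, fun i => l[i], fun i => hl _ (List.getElem_mem _), ?_⟩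
  rw [hA]
  exact (Fin.prod_univ_fun_getElem l (fun a => 1 - Polynomial.C a * Polynomial.X)).symm

lemma LD_fact {R : ℕ} (α : Fin R → ℂ) : LD ((∏ i, (1 - Polynomial.C (α i) * Polynomial.X) : Polynomial ℂ) : PowerSeries ℂ)
    (fun m => - ∑ i, α i ^ m) := by
  have h1 : ((∏ i, (1 - Polynomial.C (α i) * Polynomial.X) : Polynomial ℂ) : PowerSeries ℂ) =
      ∏ i, (1 - C (α i) * X ^ 1) := by
    rw [← Polynomial.coeToPowerSeries.ringHom_apply, map_prod]
    refine Finset.prod_congr rfl fun i _ => ?_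
    simp
  rw [h1]
  refine LD_congr (LD_prod Finset.univ fun i _ => LD_one_sub (α i) 1 le_rfl) fun m _ => ?_
  simp

lemma Rt_fact {K : Type} [Field K] [CharZero K] (σ : K →+* ℂ) {s : ℕ → K} (hs : Rt s) :
    ∃ (R S : ℕ) (α : Fin R → ℂ) (β : Fin S → ℂ),
      (∀ i, α i ≠ 0) ∧ (∀ j, β j ≠ 0) ∧ (∀ i j, α i ≠ β j) ∧
      (∀ m : ℕ, (∏ i, (1 - Polynomial.C (α i) * Polynomial.X)).coeff m ∈ σ.fieldRange) ∧
      (∀ m : ℕ, (∏ j, (1 - Polynomial.C (β j) * Polynomial.X)).coeff m ∈ σ.fieldRange) ∧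
      (∀ m : ℕ, 1 ≤ m → σ (s m) = ∑ j, β j ^ m - ∑ i, α i ^ m) := by
  obtain ⟨P, Q, L, hP0, hQ0, hL0, hL, hPQ⟩ := hs
  have hQ : Q ≠ 0 := by rintro rfl; simp at hQ0
  obtain ⟨P1, hP1⟩ := EuclideanDomain.gcd_dvd_left P Q
  obtain ⟨Q1, hQ1⟩ := EuclideanDomain.gcd_dvd_right P Q
  set g := EuclideanDomain.gcd P Q with hg
  have hg0 : g ≠ 0 := by intro h; rw [h, zero_mul] at hQ1; exact hQ hQ1
  have hcop : IsCoprime P1 Q1 := by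
    refine ⟨EuclideanDomain.gcdA P Q, EuclideanDomain.gcdB P Q, mul_left_cancel₀ hg0 ?_⟩
    have h1 := EuclideanDomain.gcd_eq_gcd_ab P Q
    rw [← hg] at h1
    calc g * (EuclideanDomain.gcdA P Q * P1 + EuclideanDomain.gcdB P Q * Q1)
        = (g * P1) * EuclideanDomain.gcdA P Q + (g * Q1) * EuclideanDomain.gcdB P Q := by ring
      _ = g * 1 := by rw [← hP1, ← hQ1, mul_one]; exact h1.symm
  have hgP : g.coeff 0 * P1.coeff 0 = 1 := by rw [← Polynomial.mul_coeff_zero, ← hP1, hP0]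
  have hgQ : g.coeff 0 * Q1.coeff 0 = 1 := by rw [← Polynomial.mul_coeff_zero, ← hQ1, hQ0]
  have hu : IsUnit (Polynomial.C (g.coeff 0)) := Polynomial.isUnit_C.2 (IsUnit.of_mul_eq_one _ hgP)
  set P2 := (Polynomial.C (g.coeff 0) * P1).map σ with hP2
  set Q2 := (Polynomial.C (g.coeff 0) * Q1).map σ with hQ2
  have hcop2 : IsCoprime P2 Q2 :=
    ((isCoprime_mul_unit_left_left hu _ _).2 ((isCoprime_mul_unit_left_right hu _ _).2 hcop)).map (Polynomial.mapRingHom σ)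
  have hPQ2 : (Q2 : PowerSeries ℂ) * PowerSeries.map σ L = P2 := by
    have h1 : ((Polynomial.C (g.coeff 0) * Q1 : Polynomial K) : PowerSeries K) * L = (Polynomial.C (g.coeff 0) * P1 : Polynomial K) := by
      rw [hP1, hQ1, Polynomial.coe_mul, Polynomial.coe_mul, mul_assoc] at hPQ
      have h2 := mul_left_cancel₀ (fun h => hg0 (Polynomial.coe_eq_zero_iff.1 h)) hPQ
      rw [Polynomial.coe_mul, Polynomial.coe_mul, mul_assoc, h2]
    have h2 := congrArg (PowerSeries.map σ) h1
    rw [map_mul, ← Polynomial.polynomial_map_coe, ← Polynomial.polynomial_map_coe] at h2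
    exact h2
  have hP20 : P2.coeff 0 = 1 := by rw [hP2, Polynomial.coeff_map, Polynomial.coeff_C_mul, hgP, map_one]
  have hQ20 : Q2.coeff 0 = 1 := by rw [hQ2, Polynomial.coeff_map, Polynomial.coeff_C_mul, hgQ, map_one]
  obtain ⟨R, α, hα, hPα⟩ := fact_fin P2 hP20
  obtain ⟨S, β, hβ, hQβ⟩ := fact_fin Q2 hQ20
  refine ⟨R, S, α, β, hα, hβ, ?_, ?_, ?_, ?_⟩
  · intro i j hij
    obtain ⟨A, B, hAB⟩ := hcop2
    have h1 := congrArg (Polynomial.eval (α i)⁻¹) hAB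
    have e1 : P2.eval (α i)⁻¹ = 0 := by
      rw [hPα, Polynomial.eval_prod]
      refine Finset.prod_eq_zero (Finset.mem_univ i) ?_
      simp [mul_inv_cancel₀ (hα i)]
    have e2 : Q2.eval (α i)⁻¹ = 0 := by
      rw [hQβ, Polynomial.eval_prod]
      refine Finset.prod_eq_zero (Finset.mem_univ j) ?_
      rw [hij]; simp [mul_inv_cancel₀ (hβ j)]
    rw [Polynomial.eval_add, Polynomial.eval_mul, Polynomial.eval_mul, e1, e2] at h1
    simp at h1
  · intro m
    rw [← hPα, hP2, Polynomial.coeff_map]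
    exact ⟨_, rfl⟩
  · intro m
    rw [← hQβ, hQ2, Polynomial.coeff_map]
    exact ⟨_, rfl⟩
  · have h1 := LD_fact α
    have h2 := LD_mul (LD_fact β) (LD_map σ hL)
    rw [← hQβ, hPQ2, hPα] at h2
    unfold LD at h1 h2
    rw [h1] at h2
    have hne : ((∏ i, (1 - Polynomial.C (α i) * Polynomial.X) : Polynomial ℂ) : PowerSeries ℂ) ≠ 0 := by
      rw [← hPα]
      intro h
      have := congrArg (PowerSeries.coeff 0) h
      rw [Polynomial.coeff_coe, hP20] at this
      simp at this
    have h3 := mul_left_cancel₀ hne h2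
    intro m hm
    obtain ⟨m, rfl⟩ : ∃ m', m = m' + 1 := ⟨m - 1, by omega⟩
    have h4 := congrArg (PowerSeries.coeff m) h3
    rw [PowerSeries.coeff_mk, PowerSeries.coeff_mk] at h4
    linear_combination -h4

end Factor
end part14

section part15
set_option linter.unusedSectionVars false
set_option linter.style.haveILetI false
section PowSum

lemma powsum_bound {F : Type*} [Field F] [CharZero F] (v : AbsoluteValue F ℝ) {X : Type*} [Fintype X] (γ : X → F)
    (n : X → ℤ) (hn : ∀ x, n x ≠ 0) (hnγ : ∀ x y, γ x = γ y → n x = n y) (c : ℝ) (hc : 0 < c)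
    (hS : ∀ m, 1 ≤ m → v (∑ x, (n x : F) * γ x ^ m) ≤ c ^ m) (x0 : X) : v (γ x0) ≤ c := by
  set V := (Finset.univ.image γ).erase (γ x0) with hV
  set g : Polynomial F := ∏ r ∈ V, (Polynomial.X - Polynomial.C r) with hg
  have hg0 : g.eval (γ x0) ≠ 0 := by
    rw [hg, Polynomial.eval_prod, Finset.prod_ne_zero_iff]
    intro r hr
    rw [hV, Finset.mem_erase] at hr
    simp only [Polynomial.eval_sub, Polynomial.eval_X, Polynomial.eval_C]
    exact sub_ne_zero.2 (Ne.symm hr.1)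
  have hgx : ∀ x, γ x ≠ γ x0 → g.eval (γ x) = 0 := by
    intro x hx
    rw [hg, Polynomial.eval_prod]
    refine Finset.prod_eq_zero (i := γ x) ?_ (by simp)
    rw [hV, Finset.mem_erase]
    exact ⟨hx, Finset.mem_image_of_mem _ (Finset.mem_univ x)⟩
  set E := Finset.univ.filter (fun x => γ x = γ x0) with hE
  set A : F := (E.card : F) * (n x0 : F) * g.eval (γ x0) with hA
  have hA0 : A ≠ 0 := by
    refine mul_ne_zero (mul_ne_zero ?_ (by exact_mod_cast hn x0)) hg0
    have : E.card ≠ 0 := Finset.card_ne_zero_of_mem (a := x0) (by rw [hE, Finset.mem_filter]; exact ⟨Finset.mem_univ _, rfl⟩)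
    exact_mod_cast this
  have hid : ∀ m, ∑ k ∈ Finset.range (g.natDegree + 1), g.coeff k * ∑ x, (n x : F) * γ x ^ (m + k) = A * γ x0 ^ m := by
    intro m
    have h1 : ∑ k ∈ Finset.range (g.natDegree + 1), g.coeff k * ∑ x, (n x : F) * γ x ^ (m + k) =
        ∑ x, (n x : F) * γ x ^ m * g.eval (γ x) := by
      simp only [Finset.mul_sum]
      rw [Finset.sum_comm]
      refine Finset.sum_congr rfl fun x _ => ?_
      rw [Polynomial.eval_eq_sum_range, Finset.mul_sum]
      exact Finset.sum_congr rfl fun k _ => by rw [pow_add]; ring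
    rw [h1, ← Finset.sum_subset (Finset.subset_univ E)]
    · rw [Finset.sum_congr rfl (g := fun _ => (n x0 : F) * γ x0 ^ m * g.eval (γ x0)), Finset.sum_const, nsmul_eq_mul, hA]
      · ring
      · intro x hx
        rw [hE, Finset.mem_filter] at hx
        rw [hnγ x x0 hx.2, hx.2]
    · intro x _ hx
      rw [hgx x, mul_zero]
      intro h; exact hx (by rw [hE, Finset.mem_filter]; exact ⟨Finset.mem_univ _, h⟩)
  set B := ∑ k ∈ Finset.range (g.natDegree + 1), v (g.coeff k) * c ^ k with hB
  have hbd : ∀ m, 1 ≤ m → v A * v (γ x0) ^ m ≤ B * c ^ m := by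
    intro m hm
    rw [← map_pow, ← map_mul, ← hid m, hB, Finset.sum_mul]
    refine (v.sum_le _ _).trans (Finset.sum_le_sum fun k _ => ?_)
    rw [map_mul, mul_assoc, ← pow_add, add_comm k m]
    exact mul_le_mul_of_nonneg_left (hS _ (by omega)) (v.nonneg _)
  by_contra hlt
  push Not at hlt
  have hr : 1 < v (γ x0) / c := by rwa [one_lt_div hc]
  have hvA : 0 < v A := v.pos hA0
  obtain ⟨m, hm⟩ := ((tendsto_pow_atTop_atTop_of_one_lt hr).eventually_gt_atTop (B / v A)).and
    (Filter.eventually_ge_atTop 1) |>.exists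
  have h1 := hbd m hm.2
  have h2 := hm.1
  rw [div_pow, div_lt_div_iff₀ hvA (pow_pos hc m)] at h2
  linarith

end PowSum
end part15

section part16
set_option linter.unusedSectionVars false
set_option linter.style.haveILetI false
section NTend
open IsDedekindDomain NumberField
variable {F : Type} [Field F] [NumberField F]

def AV (v : HeightOneSpectrum (𝓞 F)) : AbsoluteValue F ℝ := v.adicAbv (b := 2) one_lt_two

lemma AV_le_one_iff (v : HeightOneSpectrum (𝓞 F)) (x : F) : AV v x ≤ 1 ↔ v.valuation F x ≤ 1 := by
  have := WithZeroMulInt.toNNReal_le_one_iff (e := 2) (m := v.valuation F x) one_lt_two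
  rw [← this]
  exact_mod_cast Iff.rfl

lemma AV_int (v : HeightOneSpectrum (𝓞 F)) (y : 𝓞 F) : AV v (algebraMap (𝓞 F) F y) ≤ 1 := by
  rw [AV_le_one_iff]; exact v.valuation_le_one y

lemma AV_isInt (v : HeightOneSpectrum (𝓞 F)) (x : F) (hx : IsIntegral ℤ x) : AV v x ≤ 1 := AV_int v ⟨x, hx⟩

lemma isInt_of_AV (x : F) (h : ∀ v : HeightOneSpectrum (𝓞 F), AV v x ≤ 1) : IsIntegral ℤ x := by
  obtain ⟨y, hy⟩ := HeightOneSpectrum.mem_integers_of_valuation_le_one (R := 𝓞 F) F x (fun v => (AV_le_one_iff v x).1 (h v))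
  rw [← hy]
  exact y.2

lemma AV_ord (v : HeightOneSpectrum (𝓞 F)) (y : 𝓞 F) (hy : y ≠ 0) : ∃ n : ℕ, AV v (algebraMap (𝓞 F) F y) = (2 : ℝ) ^ (-(n : ℤ)) ∧
    ∀ t : ℕ, y ∈ v.asIdeal ^ t ↔ t ≤ n := by
  obtain ⟨n, hn⟩ : ∃ n : ℕ, v.intValuation y = WithZero.exp (-(n : ℤ)) := ⟨_, v.intValuation_if_neg hy⟩
  refine ⟨n, ?_, fun t => ?_⟩
  · change ((WithZeroMulInt.toNNReal (e := 2) two_ne_zero (v.valuation F (algebraMap (𝓞 F) F y)) : NNReal) : ℝ) = _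
    rw [v.valuation_of_algebraMap, hn, WithZeroMulInt.toNNReal_neg_apply _ WithZero.exp_ne_zero]
    rfl
  · rw [← v.intValuation_le_pow_iff_mem, hn, WithZero.exp_le_exp, neg_le_neg_iff, Nat.cast_le]

variable {p : ℕ} [Fact p.Prime]

lemma AV_lm (v : HeightOneSpectrum (𝓞 F)) (G : Rp p →+* F) (hG : ∀ y, IsIntegral ℤ (G y)) :
    AV v (G (lm p)) ^ (p - 1) = AV v (p : F) := by
  obtain ⟨u, hu⟩ := lm_assoc (p := p)
  have h1 := AV_isInt v _ (hG (u : Rp p))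
  have h2 := AV_isInt v _ (hG ((u⁻¹ : (Rp p)ˣ) : Rp p))
  have h3 : AV v (G (u : Rp p)) * AV v (G ((u⁻¹ : (Rp p)ˣ) : Rp p)) = 1 := by
    rw [← map_mul, ← map_mul, Units.mul_inv, map_one, map_one]
  have h4 : AV v (G (u : Rp p)) = 1 := by
    refine le_antisymm h1 ?_
    rw [← h3]
    exact mul_le_of_le_one_right ((AV v).nonneg _) h2
  have h5 := congrArg (fun y => AV v (G y)) hu
  simp only [map_mul, map_pow, h4, mul_one, map_natCast] at h5
  exact h5

lemma AV_T (v : HeightOneSpectrum (𝓞 F)) (G : Rp p →+* F) (hG : ∀ y, IsIntegral ℤ (G y)) (a : ℕ) (w : ℝ) (hw : 0 ≤ w)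
    (m : ℕ) (T : Rp p)
    (hT : ∀ K : ℕ, (K : ℝ) < ((a * m : ℕ) : ℝ) * ((p : ℝ) - 1) * w + 1 → lm p ^ K ∣ T) :
    AV v (G T) ≤ (AV v (p : F) ^ ((a : ℝ) * w)) ^ m := by
  have hp := (Fact.out : p.Prime).two_le
  have hp1 : (0 : ℝ) ≤ (p : ℝ) - 1 := by
    have : (2 : ℝ) ≤ p := by exact_mod_cast hp
    linarith
  set x : ℝ := ((a * m : ℕ) : ℝ) * ((p : ℝ) - 1) * w with hx
  have hx0 : 0 ≤ x := by positivity
  obtain ⟨y, hy⟩ := hT ⌈x⌉₊ (Nat.ceil_lt_add_one hx0)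
  have hl1 := AV_isInt v _ (hG (lm p))
  have hl0 : 0 < AV v (G (lm p)) := by
    refine lt_of_le_of_ne ((AV v).nonneg _) (fun h => ?_)
    have h1 := AV_lm v G hG
    rw [← h, zero_pow (by omega)] at h1
    have := (AV v).eq_zero.1 h1.symm
    exact (Nat.cast_ne_zero.2 (by omega : p ≠ 0)) this
  calc AV v (G T) = AV v (G (lm p)) ^ ⌈x⌉₊ * AV v (G y) := by rw [hy, map_mul, map_pow, map_mul, map_pow]
    _ ≤ AV v (G (lm p)) ^ ⌈x⌉₊ := mul_le_of_le_one_right (by positivity) (AV_isInt v _ (hG y))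
    _ = AV v (G (lm p)) ^ ((⌈x⌉₊ : ℕ) : ℝ) := (Real.rpow_natCast _ _).symm
    _ ≤ AV v (G (lm p)) ^ x := Real.rpow_le_rpow_of_exponent_ge hl0 hl1 (Nat.le_ceil x)
    _ = (AV v (p : F) ^ ((a : ℝ) * w)) ^ m := by
      rw [← AV_lm v G hG, ← Real.rpow_natCast _ (p - 1), ← Real.rpow_mul hl0.le, ← Real.rpow_natCast _ m,
        ← Real.rpow_mul hl0.le]
      congr 1
      rw [hx, Nat.cast_sub (by omega)]
      push_cast; ring

lemma ordIn_AV (F : Subfield ℂ) [NumberField F] (v : HeightOneSpectrum (𝓞 F)) (y : 𝓞 F) (hy : y ≠ 0) :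
    AV v (algebraMap (𝓞 F) F y) = (2 : ℝ) ^ (-(ordIn F v.asIdeal ((algebraMap (𝓞 F) F y : F) : ℂ) : ℤ)) ∧
    ∀ t : ℕ, y ∈ v.asIdeal ^ t ↔ t ≤ ordIn F v.asIdeal ((algebraMap (𝓞 F) F y : F) : ℂ) := by
  obtain ⟨n, hn, hn'⟩ := AV_ord v y hy
  have h1 : ordIn F v.asIdeal ((algebraMap (𝓞 F) F y : F) : ℂ) = n := by
    have h2 : {t : ℕ | ∃ z : 𝓞 F, ((algebraMap (𝓞 F) F z : F) : ℂ) = ((algebraMap (𝓞 F) F y : F) : ℂ) ∧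
        z ∈ v.asIdeal ^ t} = Set.Iic n := by
      ext t
      rw [Set.mem_setOf_eq, Set.mem_Iic, ← hn']
      constructor
      · rintro ⟨z, hz, hz'⟩
        have : z = y := FaithfulSMul.algebraMap_injective (𝓞 F) F (Subtype.ext hz)
        rwa [← this]
      · intro h
        exact ⟨y, rfl, h⟩
    rw [ordIn, h2, csSup_Iic]
  rw [h1]
  exact ⟨hn, hn'⟩

lemma ord_final (F : Subfield ℂ) [NumberField F] (v : HeightOneSpectrum (𝓞 F)) (hpv : (p : 𝓞 F) ∈ v.asIdeal) (a : ℕ) (ha : 1 ≤ a)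
    (w : ℝ) (x : F) (hx : x ≠ 0) (hint : IsIntegral ℤ x) (hb : AV v x ≤ AV v (p : F) ^ ((a : ℝ) * w)) :
    w ≤ (ordIn F v.asIdeal (x : ℂ) : ℝ) / ((ordIn F v.asIdeal (p : ℂ) : ℝ) * (a : ℝ)) := by
  have hp := (Fact.out : p.Prime).ne_zero
  obtain ⟨y, rfl⟩ : ∃ y : 𝓞 F, algebraMap (𝓞 F) F y = x := ⟨⟨x, hint⟩, rfl⟩
  have hy : y ≠ 0 := by rintro rfl; exact hx (map_zero _)
  have h1 := (ordIn_AV F v y hy).1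
  have h2 := ordIn_AV F v (p : 𝓞 F) (Nat.cast_ne_zero.2 hp)
  have h3 : ((algebraMap (𝓞 F) F (p : 𝓞 F) : F) : ℂ) = (p : ℂ) := by
    rw [map_natCast]; rfl
  rw [h3, map_natCast] at h2
  have h4 : 1 ≤ ordIn F v.asIdeal (p : ℂ) := (h2.2 1).1 (by rwa [pow_one])
  set A := ordIn F v.asIdeal ((algebraMap (𝓞 F) F y : F) : ℂ)
  set B := ordIn F v.asIdeal (p : ℂ)
  rw [h1, h2.1, ← Real.rpow_intCast, ← Real.rpow_intCast, ← Real.rpow_mul (by norm_num),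
    Real.rpow_le_rpow_left_iff (by norm_num)] at hb
  push_cast at hb
  have h5 : (0 : ℝ) < (B : ℝ) * (a : ℝ) := by
    have : (1 : ℝ) ≤ B := by exact_mod_cast h4
    have : (1 : ℝ) ≤ a := by exact_mod_cast ha
    positivity
  rw [le_div_iff₀ h5]
  linarith

end NTend
end part16

section part17
set_option linter.unusedSectionVars false
set_option linter.style.haveILetI false
open IsDedekindDomain NumberField
variable {p : ℕ} [Fact p.Prime]

lemma theta_prim (Θ : AddChar (ZMod p) ℂ) (hΘ : Θ ≠ 1) : IsPrimitiveRoot (Θ 1) p ∧ ∀ z, Θ z = Θ 1 ^ z.val := by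
  have h2 : ∀ z, Θ z = Θ 1 ^ z.val := by
    intro z
    rw [← AddChar.map_nsmul_eq_pow]
    congr 1
    simp
  have h1 : Θ 1 ^ p = 1 := by
    rw [← AddChar.map_nsmul_eq_pow]; simp
  refine ⟨?_, h2⟩
  have hne : Θ 1 ≠ 1 := by
    intro h
    apply hΘ
    ext z
    rw [h2, h]; simp
  have := orderOf_eq_prime h1 hne
  have h := IsPrimitiveRoot.orderOf (Θ 1)
  rwa [this] at h

lemma exists_sigma (ξ : ℂ) (hξ : IsPrimitiveRoot ξ p) : ∃ σ : CyclotomicField p ℚ →ₐ[ℚ] ℂ,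
    σ (algebraMap (Rp p) (CyclotomicField p ℚ) (zt p)) = ξ := by
  have hp := (Fact.out : p.Prime)
  have hz := IsCyclotomicExtension.zeta_spec p ℚ (CyclotomicField p ℚ)
  have hmin : minpoly ℚ (IsCyclotomicExtension.zeta p ℚ (CyclotomicField p ℚ)) = Polynomial.cyclotomic p ℚ :=
    (hz.minpoly_eq_cyclotomic_of_irreducible (Polynomial.cyclotomic.irreducible_rat hp.pos)).symm
  refine ⟨(hz.powerBasis ℚ).lift ξ ?_, ?_⟩
  · rw [IsPrimitiveRoot.powerBasis_gen, hmin]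
    have := hξ.isRoot_cyclotomic hp.pos
    rw [Polynomial.aeval_def, Polynomial.eval₂_eq_eval_map, Polynomial.map_cyclotomic]
    exact this
  · have : algebraMap (Rp p) (CyclotomicField p ℚ) (zt p) = (hz.powerBasis ℚ).gen := by
      rw [IsPrimitiveRoot.powerBasis_gen]; rfl
    rw [this, PowerBasis.lift_gen]

lemma sigma_mem (σ : CyclotomicField p ℚ →ₐ[ℚ] ℂ) (F : Subfield ℂ)
    (h : σ (algebraMap (Rp p) (CyclotomicField p ℚ) (zt p)) ∈ F) (x) : σ x ∈ F := by
  have hz := IsCyclotomicExtension.zeta_spec p ℚ (CyclotomicField p ℚ)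
  have hx : x ∈ Algebra.adjoin ℚ {IsCyclotomicExtension.zeta p ℚ (CyclotomicField p ℚ)} := by
    rw [IsCyclotomicExtension.adjoin_primitive_root_eq_top hz]; trivial
  induction hx using Algebra.adjoin_induction with
  | mem x hx => 
    rw [Set.mem_singleton_iff.1 hx]; exact h
  | algebraMap r => 
    rw [AlgHom.commutes]
    simp
  | add x y _ _ hx hy => rw [map_add]; exact add_mem hx hy
  | mul x y _ _ hx hy => rw [map_mul]; exact mul_mem hx hy

lemma sigma_psi (Θ : AddChar (ZMod p) ℂ) (h2 : ∀ z, Θ z = Θ 1 ^ z.val) (σ : CyclotomicField p ℚ →ₐ[ℚ] ℂ)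
    (h : σ (algebraMap (Rp p) (CyclotomicField p ℚ) (zt p)) = Θ 1) (d : ℕ) (z : Omg p) :
    σ (algebraMap (Rp p) (CyclotomicField p ℚ) (psi p d z)) = Θ (traceZmod p d z) := by
  rw [psi, map_pow, map_pow, h, ← h2]

section geom
variable {n s : ℕ}

lemma gam_mem (f : (Fin n → ℤ) →₀ Omg p) (P : ((Fin n → ℤ) × (Fin s → ℤ)) →₀ Omg p)
    (hwt : ∀ gm ∈ P.support, gauge (NewtonPoly f) (toR gm.1) < 1) (gm) (h : gm ∈ P.support) : toR gm.2 ∈ relPoly f P := by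
  have h0 : (0 : Fin s → ℝ) ∈ relPoly f P := subset_convexHull _ _ (Set.mem_insert _ _)
  have h1 : (1 - gauge (NewtonPoly f) (toR gm.1))⁻¹ • toR gm.2 ∈ relPoly f P :=
    subset_convexHull _ _ (Set.mem_insert_of_mem _ ⟨gm, h, rfl⟩)
  have hw := hwt gm h
  have hw0 := gauge_nonneg (s := NewtonPoly f) (toR gm.1)
  have := (convex_convexHull ℝ _).smul_mem_of_zero_mem h0 h1 (t := 1 - gauge (NewtonPoly f) (toR gm.1))
    ⟨by linarith, by linarith⟩
  rwa [smul_smul, mul_inv_cancel₀ (by linarith), one_smul] at this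

lemma comb_mem {J : Type} [Fintype J] (Γ : Set (Fin s → ℝ)) (hc : Convex ℝ Γ) (h0 : (0 : Fin s → ℝ) ∈ Γ) (r : J → ℝ) (hr : ∀ j, 0 ≤ r j)
    (g : J → Fin s → ℝ) (hg : ∀ j, g j ∈ Γ) : ∃ y ∈ Γ, ∑ j, r j • g j = (∑ j, r j) • y := by
  by_cases hS : ∑ j, r j = 0
  · refine ⟨0, h0, ?_⟩
    have := (Finset.sum_eq_zero_iff_of_nonneg (fun j _ => hr j)).1 hS
    rw [smul_zero]
    exact Finset.sum_eq_zero fun j hj => by rw [this j hj, zero_smul]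
  · have hpos : 0 < ∑ j, r j := lt_of_le_of_ne (Finset.sum_nonneg fun j _ => hr j) (Ne.symm hS)
    refine ⟨Finset.univ.centerMass r g, hc.centerMass_mem (fun j _ => hr j) hpos (fun j _ => hg j), ?_⟩
    rw [Finset.centerMass, smul_smul, mul_inv_cancel₀ hS, one_smul]

lemma wMin_nonneg (Γ : Set (Fin s → ℝ)) : 0 ≤ wMin Γ := by
  apply Real.sInf_nonneg
  rintro r ⟨u, _, _, rfl⟩
  exact gauge_nonneg _

lemma wMin_le {J : Type} [Fintype J] (Γ : Set (Fin s → ℝ)) (hc : Convex ℝ Γ) (h0 : (0 : Fin s → ℝ) ∈ Γ)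
    (γ : J → Fin s → ℕ) (hg : ∀ j, (fun z => (γ j z : ℝ)) ∈ Γ) (r : J → ℝ) (hr : ∀ j, 0 ≤ r j)
    (u : Fin s → ℕ) (hu : ∀ z, 1 ≤ u z) (h : ∀ z, ∑ j, r j * γ j z = u z) : wMin Γ ≤ ∑ j, r j := by
  obtain ⟨y, hy, hyy⟩ := comb_mem Γ hc h0 r hr _ hg
  have hS : 0 ≤ ∑ j, r j := Finset.sum_nonneg fun j _ => hr j
  have hu' : toR (fun z => (u z : ℤ)) = (∑ j, r j) • y := by
    rw [← hyy]
    ext z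
    simp [toR, ← h z]
  have hle : gauge Γ (toR (fun z => (u z : ℤ))) ≤ ∑ j, r j := by
    apply gauge_le_of_mem hS
    rw [hu']
    exact Set.smul_mem_smul_set hy
  refine le_trans (csInf_le ⟨0, ?_⟩ ⟨fun z => (u z : ℤ), fun z => by have := hu z; simp only; omega, ⟨_, hS, y, hy, hu'⟩, rfl⟩) hle
  rintro r ⟨u, _, _, rfl⟩
  exact gauge_nonneg _

lemma exists_pos (f : (Fin n → ℤ) →₀ Omg p) (P : ((Fin n → ℤ) × (Fin s → ℤ)) →₀ Omg p)
    (hPnn : ∀ gm ∈ P.support, ∀ j, (0 : ℤ) ≤ gm.2 j)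
    (hwne : ∃ u : Fin s → ℤ, (∀ i, (1 : ℤ) ≤ u i) ∧ toR u ∈ coneOf (relPoly f P)) (z : Fin s) :
    ∃ gm ∈ P.support, 1 ≤ gm.2 z := by
  by_contra hcon
  push Not at hcon
  have hz : ∀ gm ∈ P.support, gm.2 z = 0 := fun gm h => by
    have := hPnn gm h z; have := hcon gm h; omega
  have hsub : relPoly f P ⊆ {v | v z = 0} := by
    apply convexHull_min
    · rintro v (rfl | ⟨gm, h, rfl⟩)
      · simp
      · have : (gm.2 z) = 0 := hz gm h
        simp [toR, this]
    · intro x hx y hy a b _ _ _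
      have hx : x z = 0 := hx
      have hy : y z = 0 := hy
      change (a • x + b • y) z = 0
      simp [hx, hy]
  obtain ⟨u, hu, c, _, y, hy, h⟩ := hwne
  have h1 : y z = 0 := hsub hy
  have h2 := congrFun h z
  have h3 := hu z
  simp [toR, h1] at h2
  omega
end geom
end part17

section part18
set_option linter.unusedSectionVars false
set_option linter.style.haveILetI false
open IsDedekindDomain NumberField
section naff
variable {p : ℕ} [Fact p.Prime] {n s : ℕ}

def cJ (k : ℕ) (f : (Fin n → ℤ) →₀ Omg p) (P : ((Fin n → ℤ) × (Fin s → ℤ)) →₀ Omg p) :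
    Fin k × (f.support ⊕ P.support) → Omg p := fun j => Sum.elim (fun u => f u.1) (fun g => P g.1) j.2

def muJ (k : ℕ) (f : (Fin n → ℤ) →₀ Omg p) (P : ((Fin n → ℤ) × (Fin s → ℤ)) →₀ Omg p) :
    Fin k × (f.support ⊕ P.support) → Fin k × Fin n → ℤ := fun j i =>
  if i.1 = j.1 then Sum.elim (fun u => u.1 i.2) (fun g => g.1.1 i.2) j.2 else 0

def gJ (k : ℕ) (f : (Fin n → ℤ) →₀ Omg p) (P : ((Fin n → ℤ) × (Fin s → ℤ)) →₀ Omg p) :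
    Fin k × (f.support ⊕ P.support) → Fin s → ℕ := fun j z => Sum.elim (fun _ => 0) (fun g => (g.1.2 z).toNat) j.2

lemma mono_muJ (k : ℕ) (f : (Fin n → ℤ) →₀ Omg p) (P : ((Fin n → ℤ) × (Fin s → ℤ)) →₀ Omg p) (x : Fin k × Fin n → Omg p)
    (i : Fin k) (e : f.support ⊕ P.support) : mono x (muJ k f P (i, e)) =
      mon (fun l => x (i, l)) (Sum.elim (fun u => u.1) (fun g => g.1.1) e) := by
  rw [mono, Fintype.prod_prod_type, Finset.prod_eq_single i]
  · rw [mon]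
    refine Finset.prod_congr rfl fun l _ => ?_
    rcases e with e | e <;> simp [muJ]
  · intro b _ hb
    simp [muJ, hb]
  · simp

lemma inner_eq (k : ℕ) (f : (Fin n → ℤ) →₀ Omg p) (P : ((Fin n → ℤ) × (Fin s → ℤ)) →₀ Omg p)
    (hPnn : ∀ gm ∈ P.support, ∀ j, (0 : ℤ) ≤ gm.2 j) (x : Fin k × Fin n → Omg p) (t : Fin s → Omg p) :
    ∑ j, cJ k f P j * mono x (muJ k f P j) * ∏ z, t z ^ gJ k f P j z = ∑ i, Gval f P (fun l => x (i, l)) t := by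
  rw [Fintype.sum_prod_type]
  refine Finset.sum_congr rfl fun i _ => ?_
  rw [Fintype.sum_sum_type, Gval, Finsupp.sum, Finsupp.sum]
  congr 1
  · rw [← Finset.sum_coe_sort f.support (fun u => f u * mon (fun l => x (i, l)) u)]
    refine Finset.sum_congr rfl fun e _ => ?_
    rw [mono_muJ]
    simp [cJ, gJ]
  · rw [← Finset.sum_coe_sort P.support (fun u => P u * mon (fun l => x (i, l)) u.1 * mon t u.2)]
    refine Finset.sum_congr rfl fun e _ => ?_
    rw [mono_muJ]
    simp only [cJ, gJ, Sum.elim_inr]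
    congr 1
    rw [mon]
    refine Finset.prod_congr rfl fun z _ => ?_
    rw [← zpow_natCast, Int.toNat_of_nonneg (hPnn _ e.2 z)]

lemma mon_fix {n : ℕ} {x : Fin n → Omg p} {d : ℕ} (hx : ∀ i, x i ^ p ^ d = x i) (u : Fin n → ℤ) :
    mon x u ^ p ^ d = mon x u := mono_fix hx u

lemma Gval_fix (f : (Fin n → ℤ) →₀ Omg p) (P : ((Fin n → ℤ) × (Fin s → ℤ)) →₀ Omg p) (d : ℕ)
    (hf : ∀ μ, f μ ^ p ^ d = f μ) (hP : ∀ gm, P gm ^ p ^ d = P gm) (x : Fin n → Omg p) (t : Fin s → Omg p)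
    (hx : ∀ i, x i ^ p ^ d = x i) (ht : ∀ i, t i ^ p ^ d = t i) : Gval f P x t ^ p ^ d = Gval f P x t := by
  rw [Gval, Finsupp.sum, Finsupp.sum, add_pow_char_pow, sum_pow_char_pow, sum_pow_char_pow]
  congr 1
  · exact Finset.sum_congr rfl fun e _ => by rw [mul_pow, hf, mon_fix hx]
  · exact Finset.sum_congr rfl fun e _ => by rw [mul_pow, mul_pow, hP, mon_fix hx, mon_fix ht]

lemma torSum_eq (Θ : AddChar (ZMod p) ℂ) (f : (Fin n → ℤ) →₀ Omg p) (P : ((Fin n → ℤ) × (Fin s → ℤ)) →₀ Omg p)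
    (d : ℕ) (hd : 1 ≤ d) (t : Fin s → Omg p) : torSum p Θ f P d t = ∑ x ∈ Tor (Fin n) p d, Θ (traceZmod p d (Gval f P x t)) := by
  rw [torSum, ← finsum_mem_coe_finset]
  refine finsum_congr fun x => ?_
  refine finsum_congr_Prop ?_ fun _ => rfl
  simp only [Finset.mem_coe, mem_Tor hd, eq_iff_iff]
  exact forall_congr' fun i => and_comm

lemma Naff_eq (a : ℕ) (ha : 1 ≤ a) (k : ℕ) (Θ : AddChar (ZMod p) ℂ) (h2 : ∀ z, Θ z = Θ 1 ^ z.val) (σ : CyclotomicField p ℚ →ₐ[ℚ] ℂ)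
    (h : σ (algebraMap (Rp p) (CyclotomicField p ℚ) (zt p)) = Θ 1)
    (f : (Fin n → ℤ) →₀ Omg p) (hf : ∀ μ, f μ ^ p ^ a = f μ)
    (P : ((Fin n → ℤ) × (Fin s → ℤ)) →₀ Omg p) (hP : ∀ gm, P gm ^ p ^ a = P gm)
    (hPnn : ∀ gm ∈ P.support, ∀ j, (0 : ℤ) ≤ gm.2 j) (m : ℕ) (hm : 1 ≤ m) :
    Naff p a Θ f P k m = (-1) ^ (n * k) * σ (algebraMap (Rp p) (CyclotomicField p ℚ) (Asum p (cJ k f P) (muJ k f P) (gJ k f P) (a * m))) := by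
  have hd : 1 ≤ a * m := Nat.mul_pos ha hm
  have e1 : Naff p a Θ f P k m = ∑ t ∈ Aff s p (a * m), ((-1 : ℂ) ^ n * torSum p Θ f P (a * m) t) ^ k := by
    rw [Naff, ← finsum_mem_coe_finset]
    refine finsum_congr fun x => ?_
    refine finsum_congr_Prop ?_ fun _ => rfl
    simp only [Finset.mem_coe, mem_Aff hd]
  rw [e1, Asum, Finset.sum_comm, map_sum, map_sum, Finset.mul_sum]
  refine Finset.sum_congr rfl fun t ht => ?_
  rw [mul_pow, ← pow_mul, torSum_eq Θ f P _ hd, map_sum, map_sum, Finset.sum_pow']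
  congr 1
  have ht := (mem_Aff hd).1 ht
  refine Finset.sum_nbij' (fun y : Fin k → Fin n → Omg p => fun i : Fin k × Fin n => y i.1 i.2)
    (fun x i l => x (i, l)) ?_ ?_ ?_ ?_ ?_
  · intro y hy
    rw [mem_Tor hd]
    intro i
    exact (mem_Tor hd).1 (Fintype.mem_piFinset.1 hy i.1) i.2
  · intro x hx
    rw [Fintype.mem_piFinset]
    intro i
    rw [mem_Tor hd]
    intro l
    exact (mem_Tor hd).1 hx (i, l)
  · intro y _; rfl
  · intro x _; rfl
  · intro y hy
    rw [inner_eq k f P hPnn, psi_sum, map_prod, map_prod]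
    · exact Finset.prod_congr rfl fun i _ => (sigma_psi Θ h2 σ h _ _).symm
    · intro i _
      exact Gval_fix f P _ (fun u => fix_mul (hf u) m) (fun u => fix_mul (hP u) m) _ _
        (fun l => ((mem_Tor hd).1 (Fintype.mem_piFinset.1 hy i) l).2) ht
end naff
end part18

open IsDedekindDomain NumberField
section fin
variable {p : ℕ} [Fact p.Prime]

lemma two_bound {F : Type} [Field F] [CharZero F] (v : AbsoluteValue F ℝ) {R S : ℕ} (α : Fin R → F) (β : Fin S → F)
    (hab : ∀ i j, α i ≠ β j) (y : ℕ → F) (hy : ∀ m, 1 ≤ m → ∑ j, β j ^ m - ∑ i, α i ^ m = y m) (c : ℝ) (hc : 0 < c)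
    (hb : ∀ m, 1 ≤ m → v (y m) ≤ c ^ m) : (∀ i, v (α i) ≤ c) ∧ ∀ j, v (β j) ≤ c := by
  have key := powsum_bound v (X := Fin R ⊕ Fin S) (Sum.elim α β) (Sum.elim (fun _ => -1) (fun _ => 1))
    (by rintro (x | x) <;> simp)
    (by
      rintro (x | x) (y | y) h
      · rfl
      · exact absurd h (hab x y)
      · exact absurd h.symm (hab y x)
      · rfl) c hc
    (by
      intro m hm
      have := hb m hm
      rw [← hy m hm] at this
      convert this using 2
      rw [Fintype.sum_sum_type]
      simp
      ring)
  exact ⟨fun i => key (Sum.inl i), fun j => key (Sum.inr j)⟩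

lemma alg_of_coeff (σ : CyclotomicField p ℚ →ₐ[ℚ] ℂ) {R : ℕ} (α : Fin R → ℂ) (h0 : ∀ i, α i ≠ 0)
    (h : ∀ m : ℕ, (∏ i, (1 - Polynomial.C (α i) * Polynomial.X)).coeff m ∈ σ.toRingHom.fieldRange) (i : Fin R) :
    IsIntegral ℚ (α i) := by
  set A : Polynomial ℂ := ∏ i, (1 - Polynomial.C (α i) * Polynomial.X) with hA
  letI : Algebra (CyclotomicField p ℚ) ℂ := σ.toRingHom.toAlgebra
  haveI : IsScalarTower ℚ (CyclotomicField p ℚ) ℂ := IsScalarTower.of_algebraMap_eq fun r => (σ.commutes r).symm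
  obtain ⟨B, hB⟩ : ∃ B : Polynomial (CyclotomicField p ℚ), B.map σ.toRingHom = A := by
    have : A ∈ Polynomial.lifts σ.toRingHom := by
      rw [Polynomial.lifts_iff_coeff_lifts]
      intro m
      exact h m
    simpa [Polynomial.mem_lifts] using this
  have hA0 : A ≠ 0 := by
    intro h
    have : A.eval 0 = 1 := by
      rw [hA, Polynomial.eval_prod]; simp
    rw [h] at this
    simp at this
  have hr : A.eval (α i)⁻¹ = 0 := by
    rw [hA, Polynomial.eval_prod]
    apply Finset.prod_eq_zero (Finset.mem_univ i)
    simp [h0 i]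
  have h1 : IsAlgebraic (CyclotomicField p ℚ) (α i)⁻¹ := by
    refine ⟨B, ?_, ?_⟩
    · rintro rfl
      apply hA0; rw [← hB]; simp
    · rw [Polynomial.aeval_def, Polynomial.eval₂_eq_eval_map]
      change (B.map σ.toRingHom).eval _ = 0
      rw [hB, hr]
  have h2 : IsAlgebraic ℚ (α i)⁻¹ := h1.restrictScalars ℚ
  have h3 := h2.inv
  rw [inv_inv] at h3
  exact h3.isIntegral

lemma Gint {F : Type} [Field F] (G : Rp p →+* F) (y : Rp p) : IsIntegral ℤ (G y) :=
  (RingOfIntegers.isIntegral y).map G.toIntAlgHom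

def GF (σ : CyclotomicField p ℚ →ₐ[ℚ] ℂ) (F : Subfield ℂ) (h : ∀ x, σ x ∈ F) : Rp p →+* F :=
  (σ.toRingHom.codRestrict F h).comp (algebraMap (Rp p) (CyclotomicField p ℚ))

lemma GF_coe (σ : CyclotomicField p ℚ →ₐ[ℚ] ℂ) (F : Subfield ℂ) (h : ∀ x, σ x ∈ F) (y : Rp p) :
    (GF σ F h y : ℂ) = σ (algebraMap (Rp p) (CyclotomicField p ℚ) y) := rfl

end fin

theorem tensor_power_affine_rational_and_divisibility
    (p a n s k : ℕ) [Fact p.Prime] (ha : 1 ≤ a) (hn : 1 ≤ n) (hs : 1 ≤ s) (hk : 1 ≤ k)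
    (ζ : ℂ) (hζ : IsPrimitiveRoot ζ p)
    (Θ : AddChar (ZMod p) ℂ) (hΘ : Θ ≠ 1) (hΘval : ∀ z, Θ z ∈ cyclo ζ)
    (f : (Fin n → ℤ) →₀ Omg p) (hf : ∀ μ, f μ ^ p ^ a = f μ)
    (P : ((Fin n → ℤ) × (Fin s → ℤ)) →₀ Omg p) (hP : ∀ gm, P gm ^ p ^ a = P gm)
    (hPnn : ∀ gm ∈ P.support, ∀ j, (0 : ℤ) ≤ gm.2 j)
    (hdim : Submodule.span ℝ (NewtonPoly f) = ⊤)
    (hnd : Nondeg f)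
    (hwt : ∀ gm ∈ P.support, gauge (NewtonPoly f) (toR gm.1) < 1)
    (hΓ : relPoly f P ≠ {0})
    (hwne : ∃ u : Fin s → ℤ, (∀ i, (1 : ℤ) ≤ u i) ∧ toR u ∈ coneOf (relPoly f P))
    :
    ∃ (R S : ℕ) (α : Fin R → ℂ) (β : Fin S → ℂ),
      (∀ i, α i ≠ 0) ∧ (∀ j, β j ≠ 0) ∧ (∀ i j, α i ≠ β j) ∧
      (∀ m : ℕ, (∏ i, (1 - Polynomial.C (α i) * Polynomial.X)).coeff m ∈ cyclo ζ) ∧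
      (∀ m : ℕ, (∏ j, (1 - Polynomial.C (β j) * Polynomial.X)).coeff m ∈ cyclo ζ) ∧
      (∀ m : ℕ, 1 ≤ m →
        (-1 : ℂ) ^ (s + 1) * Naff p a Θ f P k m = ∑ j, β j ^ m - ∑ i, α i ^ m) ∧
      (∀ i, IsIntegral ℤ (α i)) ∧ (∀ j, IsIntegral ℤ (β j)) ∧
      ∀ F : Subfield ℂ, FiniteDimensional ℚ F → ζ ∈ F →
        (∀ i, α i ∈ F) → (∀ j, β j ∈ F) →
        ∀ Pid : Ideal (NumberField.RingOfIntegers F), Pid.IsMaximal →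
          (p : NumberField.RingOfIntegers F) ∈ Pid →
          (∀ i, wMin (relPoly f P) ≤
            (ordIn F Pid (α i) : ℝ) / ((ordIn F Pid ((p : ℂ)) : ℝ) * (a : ℝ))) ∧
          (∀ j, wMin (relPoly f P) ≤
            (ordIn F Pid (β j) : ℝ) / ((ordIn F Pid ((p : ℂ)) : ℝ) * (a : ℝ))) := by
  obtain ⟨hprim, h2⟩ := theta_prim Θ hΘ
  obtain ⟨σ, hσ⟩ := exists_sigma (Θ 1) hprim
  set T : ℕ → Rp p := fun m => Asum p (cJ k f P) (muJ k f P) (gJ k f P) (a * m) with hTdef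
  have hcJ : ∀ j, cJ k f P j ^ p ^ a = cJ k f P j := by
    rintro ⟨i, (e | e)⟩
    · exact hf _
    · exact hP _
  have hN := Naff_eq a ha k Θ h2 σ hσ f hf P hP hPnn
  -- rationality
  have hRt0 : Rt (fun m => algebraMap (Rp p) (CyclotomicField p ℚ) (T m)) := Asum_Rt a ha _ hcJ _ _
  have hRt : Rt (fun m => (-1) ^ (s + 1 + n * k) * algebraMap (Rp p) (CyclotomicField p ℚ) (T m)) := by
    rcases neg_one_pow_eq_or (CyclotomicField p ℚ) (s + 1 + n * k) with h | h
    · simpa [h] using hRt0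
    · simpa [h] using Rt_neg hRt0
  obtain ⟨R, S, α, β, hα0, hβ0, hab, hαc, hβc, hsum⟩ := Rt_fact σ.toRingHom hRt
  have hsum' : ∀ m, 1 ≤ m → ∑ j, β j ^ m - ∑ i, α i ^ m =
      (-1) ^ (s + 1 + n * k) * σ (algebraMap (Rp p) (CyclotomicField p ℚ) (T m)) := by
    intro m hm
    rw [← hsum m hm]
    simp
  have hle : ∀ x, x ∈ σ.toRingHom.fieldRange → x ∈ cyclo ζ := by
    rintro x ⟨y, rfl⟩
    exact sigma_mem σ (cyclo ζ) (by rw [hσ]; exact hΘval 1) y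
  -- general bound
  have hgen : ∀ (F : Subfield ℂ) [NumberField F] (hF : ∀ x, σ x ∈ F) (hαF : ∀ i, α i ∈ F) (hβF : ∀ j, β j ∈ F)
      (v : HeightOneSpectrum (𝓞 F)) (c : ℝ), 0 < c → (∀ m, 1 ≤ m → AV v (GF σ F hF (T m)) ≤ c ^ m) →
      (∀ i, AV v (⟨α i, hαF i⟩ : F) ≤ c) ∧ ∀ j, AV v (⟨β j, hβF j⟩ : F) ≤ c := by
    intro F _ hF hαF hβF v c hc hb
    refine two_bound (AV v) (fun i => (⟨α i, hαF i⟩ : F)) (fun j => (⟨β j, hβF j⟩ : F)) ?_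
      (fun m => (-1) ^ (s + 1 + n * k) * GF σ F hF (T m)) ?_ c hc ?_
    · intro i j h
      exact hab i j (congrArg Subtype.val h)
    · intro m hm
      apply Subtype.ext
      have := hsum' m hm
      push_cast
      rw [GF_coe]
      exact this
    · intro m hm
      rw [map_mul, map_pow, AbsoluteValue.map_neg, map_one, one_pow, one_mul]
      exact hb m hm
  -- integrality
  have hint : (∀ i, IsIntegral ℤ (α i)) ∧ (∀ j, IsIntegral ℤ (β j)) := by
    let E : IntermediateField ℚ ℂ := IntermediateField.adjoin ℚ (Set.range α ∪ Set.range β ∪ {Θ 1})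
    have hfin : FiniteDimensional ℚ E := by
      haveI : Finite (Set.range α ∪ Set.range β ∪ {Θ 1} : Set ℂ) := by
        apply Set.Finite.to_subtype
        exact ((Set.finite_range α).union (Set.finite_range β)).union (Set.finite_singleton _)
      apply IntermediateField.finiteDimensional_adjoin
      rintro x ((⟨i, rfl⟩ | ⟨j, rfl⟩) | rfl)
      · exact alg_of_coeff σ α hα0 hαc i
      · exact alg_of_coeff σ β hβ0 hβc j
      · exact (hprim.isIntegral (Fact.out : p.Prime).pos).tower_top
    haveI : NumberField E.toSubfield := { to_charZero := inferInstance, to_finiteDimensional := hfin }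
    have hsub := IntermediateField.subset_adjoin ℚ (Set.range α ∪ Set.range β ∪ {Θ 1})
    have hξ : Θ 1 ∈ E.toSubfield := hsub (Or.inr rfl)
    have hαE : ∀ i, α i ∈ E.toSubfield := fun i => hsub (Or.inl (Or.inl ⟨i, rfl⟩))
    have hβE : ∀ i, β i ∈ E.toSubfield := fun i => hsub (Or.inl (Or.inr ⟨i, rfl⟩))
    have hE := sigma_mem σ E.toSubfield (by rw [hσ]; exact hξ)
    have hv := fun v => hgen E.toSubfield hE hαE hβE v 1 one_pos (fun m hm => by
      rw [one_pow]; exact AV_isInt v _ (Gint _ _))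
    constructor
    · intro i
      exact (isInt_of_AV (⟨α i, hαE i⟩ : E.toSubfield) fun v => (hv v).1 i).map E.toSubfield.subtype.toIntAlgHom
    · intro i
      exact (isInt_of_AV (⟨β i, hβE i⟩ : E.toSubfield) fun v => (hv v).2 i).map E.toSubfield.subtype.toIntAlgHom
  refine ⟨R, S, α, β, hα0, hβ0, hab, fun m => hle _ (hαc m), fun m => hle _ (hβc m), ?_, hint.1, hint.2, ?_⟩
  · intro m hm
    rw [hsum' m hm, hN m hm, pow_add _ (s + 1), mul_assoc]
  intro F hfin hζF hαF hβF Pid hmax hpP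
  haveI : NumberField F := { to_charZero := inferInstance, to_finiteDimensional := hfin }
  have hcF : cyclo ζ ≤ F := by
    rw [cyclo, Subfield.closure_le]
    rintro x rfl
    exact hζF
  have hF := sigma_mem σ F (by rw [hσ]; exact hcF (hΘval 1))
  have hp0 : (p : 𝓞 F) ≠ 0 := Nat.cast_ne_zero.2 (Fact.out : p.Prime).ne_zero
  let v : HeightOneSpectrum (𝓞 F) := ⟨Pid, hmax.isPrime, fun h => hp0 (by rw [h] at hpP; simpa using hpP)⟩
  set w := wMin (relPoly f P) with hw
  have hw0 : 0 ≤ w := wMin_nonneg _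
  have hAp : 0 < AV v (p : F) := (AV v).pos (Nat.cast_ne_zero.2 (Fact.out : p.Prime).ne_zero)
  have h0Γ : (0 : Fin s → ℝ) ∈ relPoly f P := subset_convexHull _ _ (Set.mem_insert _ _)
  have hgΓ : ∀ j, (fun z => (gJ k f P j z : ℝ)) ∈ relPoly f P := by
    rintro ⟨i, (e | e)⟩
    · convert h0Γ using 1
      ext z; simp [gJ]
    · convert gam_mem f P hwt e.1 e.2 using 1
      ext z
      simp only [gJ, toR, Sum.elim_inr]
      have := Int.toNat_of_nonneg (hPnn _ e.2 z)
      exact_mod_cast congrArg (Int.cast : ℤ → ℝ) this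
  have hbd := hgen F hF hαF hβF v (AV v (p : F) ^ ((a : ℝ) * w)) (Real.rpow_pos_of_pos hAp _) (fun m hm => by
    apply AV_T v _ (Gint _) a w hw0 m
    intro K hK
    refine fine_dvd (a * m) (Nat.mul_pos ha hm) _ (fun j => fix_mul (hcJ j) m) _ _ w ?_ ?_ K hK
    · intro r hr u hu h
      exact wMin_le _ (convex_convexHull ℝ _) h0Γ _ hgΓ r hr u hu h
    · intro z
      obtain ⟨gm, hg, h1⟩ := exists_pos f P hPnn hwne z
      refine ⟨(⟨0, hk⟩, Sum.inr ⟨gm, hg⟩), ?_⟩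
      simp only [gJ, Sum.elim_inr]
      omega)
  have hFint : ∀ x : F, IsIntegral ℤ (x : ℂ) → IsIntegral ℤ x := fun x hx =>
    (isIntegral_algHom_iff F.subtype.toIntAlgHom Subtype.val_injective).1 hx
  constructor
  · intro i
    exact ord_final F v hpP a ha w ⟨α i, hαF i⟩ (fun h => hα0 i (congrArg Subtype.val h)) (hFint _ (hint.1 i)) (hbd.1 i)
  · intro i
    exact ord_final F v hpP a ha w ⟨β i, hβF i⟩ (fun h => hβ0 i (congrArg Subtype.val h)) (hFint _ (hint.2 i)) (hbd.2 i)

end HS
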